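/- Let d ≥ 1 and ν > 0. Let h₀ : ℝ^d → ℝ be 2π-periodic in each coordinate with Σ_{k ∈ ℤ^d} (1+|k|^d)|ĥ₀(k)|² < ∞ (i.e. h₀ ∈ H^{d/2}(𝕋^d)). Then there exist T ∈ (0,∞] and h : [0,T) × ℝ^d → ℝ, 2π-periodic in each spatial coordinate, such that: (i) for every 0 < t < T the function h(t,·) is C^∞; (ii) h is a classical solution of ∂_t h = ∇·((|∇h|² − 1)∇h) − νΔ²h on (0,T) × ℝ^d; (iii) ‖h(t,·) − h₀‖_{H^{d/2}} → 0 as t → 0⁺; (iv) if ∫_{[−π,π]^d} h₀ dx = 0, then ∫_{[−π,π]^d} h(t,·) dx = 0 for every 0 < t < T. -/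

import Mathlib

open Real MeasureTheory Set Filter
open scoped ENNReal

noncomputable section

/-- `ℝ^d` with the Euclidean norm. -/
abbrev Ed (d : ℕ) := EuclideanSpace ℝ (Fin d)

/-- The fundamental domain `[-π,π]^d` of the torus `𝕋^d = ℝ^d/2πℤ^d`. -/
def Qd (d : ℕ) : Set (Ed d) := {x | ∀ i, |x i| ≤ Real.pi}

/-- The partial derivative `∂_{x_j} f` of `f : ℝ^d → ℝ`. -/
noncomputable def pd {d : ℕ} (f : Ed d → ℝ) (j : Fin d) (x : Ed d) : ℝ :=
  fderiv ℝ f x (EuclideanSpace.single j 1)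

/-- `|∇f|²`, the squared Euclidean norm of the spatial gradient. -/
noncomputable def gradSq {d : ℕ} (f : Ed d → ℝ) (x : Ed d) : ℝ := ∑ j, pd f j x ^ 2

/-- `|∇f|`, the Euclidean norm of the spatial gradient. -/
noncomputable def gradNorm {d : ℕ} (f : Ed d → ℝ) (x : Ed d) : ℝ := Real.sqrt (gradSq f x)

/-- The Laplacian `Δf = Σ_j ∂_{x_j}∂_{x_j} f`. -/
noncomputable def lapl {d : ℕ} (f : Ed d → ℝ) (x : Ed d) : ℝ := ∑ j, pd (pd f j) j x

/-- The slope-selection divergence term `∇·((|∇f|²−1)∇f) = Σ_j ∂_{x_j}((|∇f|²−1)∂_{x_j}f)`. -/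
noncomputable def slopeDiv {d : ℕ} (f : Ed d → ℝ) (x : Ed d) : ℝ :=
  ∑ j, pd (fun y => (gradSq f y - 1) * pd f j y) j x

/-- `f` is `2π`-periodic in each coordinate. -/
def PeriodicSpace {d : ℕ} (f : Ed d → ℝ) : Prop :=
  ∀ (j : Fin d) (x : Ed d), f (x + (2 * Real.pi) • EuclideanSpace.single j 1) = f x

/-- The Fourier coefficient `f̂(k) = ∫_{[−π,π]^d} f(x) e^{−i k·x} dx` of a
`2π`-periodic function `f : ℝ^d → ℝ`, for `k ∈ ℤ^d`. -/
noncomputable def fcoefR {d : ℕ} (f : Ed d → ℝ) (k : Fin d → ℤ) : ℂ :=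
  ∫ x in Qd d, (f x : ℂ) * Complex.exp (-(Complex.I * ∑ i, (k i : ℂ) * (x i : ℂ)))

/-- The Sobolev weight `1 + |k|^d` (with `|k|` the Euclidean norm of `k ∈ ℤ^d`). -/
noncomputable def sobWeight {d : ℕ} (k : Fin d → ℤ) : ℝ :=
  1 + Real.sqrt (∑ i, ((k i : ℝ)) ^ 2) ^ d

/-- The `H^{d/2}(𝕋^d)` norm `(Σ_k (1+|k|^d)|f̂(k)|²)^{1/2}`. -/
noncomputable def hnormR {d : ℕ} (f : Ed d → ℝ) : ℝ :=
  Real.sqrt (∑' k : Fin d → ℤ, sobWeight k * ‖fcoefR f k‖ ^ 2)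

/-!
In Fourier variables the equation is `u' = -ν|k|⁴ u + i k · F(u)` with a cubic flux
`F(u) = (|∇h|² - 1)∇h`, and the space `H^{d/2}` is invariant under the scaling of the cubic part.
The mild formulation is therefore solved by Picard iteration in a Kato-type space: the norm
`sup_t t^{1/4} ∑_k ⟨k⟩ e^{νt|k|/2} |u_k(t)|` is controlled by the `H^{d/2}` norm of the data for the
linear flow, tends to `0` as `t → 0⁺` (truncate the data in frequency), and is propagated by the
Duhamel term because `∫₀ᵗ (t-s)^{-1/2} s^{-3/4} ds` is a multiple of `t^{-1/4}`. The weight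
`e^{νt|k|/2}` is submultiplicative, so it passes through the convolutions, and half of the
dissipation pays for its growth in time; its presence makes the solution smooth for `t > 0`.
A weighted `ℓ²` bound carried along the iteration shows that the Duhamel term vanishes in `H^{d/2}`
as `t → 0⁺`, so the data are attained. Conjugate symmetry is preserved by the iteration, so the
solution is real, and the divergence form conserves the zero mode.
-/

/-! ### Cauchy–Schwarz in `ℝ≥0∞` -/

lemma sq_lintegral_mul_le_lintegral_sq_mul_lintegral_sq {α : Type*} [MeasurableSpace α]
    (μ : Measure α) {f g : α → ℝ≥0∞} (hf : AEMeasurable f μ) (hg : AEMeasurable g μ) :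
    (∫⁻ x, f x * g x ∂μ) ^ 2 ≤ (∫⁻ x, f x ^ 2 ∂μ) * ∫⁻ x, g x ^ 2 ∂μ := by
  have sq_sqrt (x : ℝ≥0∞) : (x ^ (1 / (2 : ℝ))) ^ 2 = x := by
    rw [← ENNReal.rpow_natCast, ← ENNReal.rpow_mul]
    norm_num
  have holder := pow_le_pow_left'
    (ENNReal.lintegral_mul_le_Lp_mul_Lq μ Real.HolderConjugate.two_two hf hg) 2
  rw [mul_pow, sq_sqrt, sq_sqrt] at holder
  simpa using holder

lemma sq_lintegral_mul_le_lintegral_mul_lintegral_mul_sq {α : Type*} [MeasurableSpace α]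
    (μ : Measure α) {f g : α → ℝ≥0∞} (hf : AEMeasurable f μ) (hg : AEMeasurable g μ) :
    (∫⁻ x, f x * g x ∂μ) ^ 2 ≤ (∫⁻ x, f x ∂μ) * ∫⁻ x, f x * g x ^ 2 ∂μ := by
  have sqrt_mul_sqrt (x : ℝ≥0∞) : x ^ (1 / 2 : ℝ) * x ^ (1 / 2 : ℝ) = x := by
    rw [← ENNReal.rpow_add_of_nonneg] <;> norm_num
  have cauchySchwarz := sq_lintegral_mul_le_lintegral_sq_mul_lintegral_sq μ
    (hf.pow_const (1 / 2 : ℝ)) ((hf.pow_const (1 / 2 : ℝ)).mul hg)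
  simpa only [Pi.mul_apply, ← mul_assoc, mul_pow, sq (_ ^ (1 / 2 : ℝ)), sqrt_mul_sqrt]
    using cauchySchwarz

lemma sq_tsum_mul_le_tsum_sq_mul_tsum_sq {ι : Type*} (f g : ι → ℝ≥0∞) :
    (∑' i, f i * g i) ^ 2 ≤ (∑' i, f i ^ 2) * ∑' i, g i ^ 2 := by
  let _ : MeasurableSpace ι := ⊤
  have cauchySchwarz := sq_lintegral_mul_le_lintegral_sq_mul_lintegral_sq
    (Measure.count : Measure ι) (f := f) (g := g)
    Measurable.of_discrete.aemeasurable Measurable.of_discrete.aemeasurable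
  simpa only [lintegral_count] using cauchySchwarz

lemma sq_tsum_mul_le_tsum_mul_tsum_mul_sq {ι : Type*} (f g : ι → ℝ≥0∞) :
    (∑' i, f i * g i) ^ 2 ≤ (∑' i, f i) * ∑' i, f i * g i ^ 2 := by
  let _ : MeasurableSpace ι := ⊤
  have cauchySchwarz := sq_lintegral_mul_le_lintegral_mul_lintegral_mul_sq
    (Measure.count : Measure ι) (f := f) (g := g)
    Measurable.of_discrete.aemeasurable Measurable.of_discrete.aemeasurable
  simpa only [lintegral_count] using cauchySchwarz

lemma ennreal_add_sq_le (a b : ℝ≥0∞) : (a + b) ^ 2 ≤ 2 * (a ^ 2 + b ^ 2) := by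
  have := ENNReal.rpow_add_le_mul_rpow_add_rpow a b (p := 2) (by norm_num)
  norm_num at this
  exact_mod_cast this

lemma ennreal_rpow_half_sq (x : ℝ≥0∞) (n : ℕ) : (x ^ (n / 2 : ℝ)) ^ 2 = x ^ n := by
  rw [← ENNReal.rpow_natCast (_ ^ (_ : ℝ)) 2, ← ENNReal.rpow_mul, Nat.cast_two,
    div_mul_cancel₀ _ two_ne_zero, ENNReal.rpow_natCast]

/-! ### Discrete convolution -/

section DiscreteConvolution

variable {G : Type*} [AddCommGroup G]

/-- The convolution `k ↦ ∑ₚ f(p) g(k - p)` of two functions on a discrete group. It is applied both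
to `ℂ`-valued Fourier coefficients and to their `ℝ≥0∞`-valued majorants. -/
def discConv {R : Type*} [NonUnitalNonAssocSemiring R] [TopologicalSpace R] (f g : G → R) (k : G) :
    R :=
  ∑' p, f p * g (k - p)

lemma tsum_discConv (f g : G → ℝ≥0∞) : ∑' k, discConv f g k = (∑' k, f k) * ∑' k, g k := by
  unfold discConv
  rw [ENNReal.tsum_comm, ← ENNReal.tsum_mul_right]
  refine tsum_congr fun p => ?_
  rw [ENNReal.tsum_mul_left]
  congr 1
  exact (Equiv.subRight p).tsum_eq g

lemma discConv_mono {f g f' g' : G → ℝ≥0∞} (hf : ∀ k, f k ≤ f' k) (hg : ∀ k, g k ≤ g' k) (k : G) :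
    discConv f g k ≤ discConv f' g' k :=
  ENNReal.tsum_le_tsum fun _ => mul_le_mul' (hf _) (hg _)

lemma discConv_comm {R : Type*} [NonUnitalCommSemiring R] [TopologicalSpace R] (f g : G → R)
    (k : G) : discConv f g k = discConv g f k := by
  unfold discConv
  rw [← (Equiv.subLeft k).tsum_eq]
  exact tsum_congr fun p => by simp [mul_comm]

lemma discConv_le_tsum_mul_tsum (f g : G → ℝ≥0∞) (k : G) :
    discConv f g k ≤ (∑' p, f p) * ∑' p, g p :=
  (ENNReal.le_tsum k).trans (tsum_discConv f g).le

lemma tsum_sq_discConv_le (f g : G → ℝ≥0∞) :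
    ∑' k, discConv f g k ^ 2 ≤ (∑' k, f k) ^ 2 * ∑' k, g k ^ 2 :=
  calc ∑' k, discConv f g k ^ 2
      ≤ ∑' k, (∑' p, f p) * discConv f (fun p => g p ^ 2) k :=
        ENNReal.tsum_le_tsum fun k => sq_tsum_mul_le_tsum_mul_tsum_mul_sq f fun p => g (k - p)
    _ = (∑' k, f k) ^ 2 * ∑' k, g k ^ 2 := by
        rw [ENNReal.tsum_mul_left, tsum_discConv, sq, mul_assoc]

lemma weight_mul_discConv_le {w : G → ℝ≥0∞} {C : ℝ≥0∞}
    (hw : ∀ p k, w k ≤ C * (w p + w (k - p))) (f g : G → ℝ≥0∞) (k : G) :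
    w k * discConv f g k
      ≤ C * (discConv g (fun p => w p * f p) k + discConv f (fun p => w p * g p) k) := by
  rw [discConv_comm g]
  simp only [discConv]
  rw [← ENNReal.tsum_mul_left, ← ENNReal.tsum_add, ← ENNReal.tsum_mul_left]
  refine ENNReal.tsum_le_tsum fun p => ?_
  calc w k * (f p * g (k - p))
      ≤ (C * (w p + w (k - p))) * (f p * g (k - p)) := by gcongr; exact hw p k
    _ = _ := by ring

lemma tsum_sq_weight_mul_discConv_le {w : G → ℝ≥0∞} {C : ℝ≥0∞}
    (hw : ∀ p k, w k ≤ C * (w p + w (k - p))) (f g : G → ℝ≥0∞) :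
    ∑' k, (w k * discConv f g k) ^ 2 ≤ 2 * C ^ 2 *
      ((∑' k, g k) ^ 2 * ∑' k, (w k * f k) ^ 2 + (∑' k, f k) ^ 2 * ∑' k, (w k * g k) ^ 2) := by
  set u := discConv g fun p => w p * f p
  set v := discConv f fun p => w p * g p
  calc ∑' k, (w k * discConv f g k) ^ 2
      ≤ ∑' k, C ^ 2 * (2 * (u k ^ 2 + v k ^ 2)) := by
        refine ENNReal.tsum_le_tsum fun k => ?_
        calc (w k * discConv f g k) ^ 2
            ≤ (C * (u k + v k)) ^ 2 := pow_le_pow_left' (weight_mul_discConv_le hw f g k) 2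
          _ ≤ C ^ 2 * (2 * (u k ^ 2 + v k ^ 2)) := by
              rw [mul_pow]
              gcongr
              exact ennreal_add_sq_le _ _
    _ = 2 * C ^ 2 * (∑' k, u k ^ 2 + ∑' k, v k ^ 2) := by
        rw [← ENNReal.tsum_add, ← ENNReal.tsum_mul_left]
        exact tsum_congr fun k => by ring
    _ ≤ _ := by gcongr <;> exact tsum_sq_discConv_le _ _

end DiscreteConvolution

/-! ### The Japanese bracket and weighted square sums -/

section Bracket

variable {E : Type*} [NormedAddCommGroup E]

/-- The Japanese bracket, in the inhomogeneous form `⟨k⟩ = 1 + ‖k‖`. -/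
def bracket (k : E) : ℝ≥0∞ := 1 + ‖k‖ₑ

lemma bracket_eq_ofReal (k : E) : bracket k = ENNReal.ofReal (1 + ‖k‖) := by
  rw [bracket, ENNReal.ofReal_add zero_le_one (norm_nonneg k), ENNReal.ofReal_one, ofReal_norm]

lemma one_le_bracket (k : E) : 1 ≤ bracket k := le_self_add

lemma bracket_ne_zero (k : E) : bracket k ≠ 0 := (one_pos.trans_le (one_le_bracket k)).ne'

lemma bracket_ne_top (k : E) : bracket k ≠ ∞ := by simp [bracket]

lemma bracket_le_add (p k : E) : bracket k ≤ bracket p + bracket (k - p) :=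
  calc bracket k = 1 + ‖p + (k - p)‖ₑ := by rw [add_sub_cancel, bracket]
    _ ≤ 1 + (‖p‖ₑ + ‖k - p‖ₑ) := by gcongr; exact enorm_add_le p (k - p)
    _ ≤ 1 + ‖p‖ₑ + (1 + ‖k - p‖ₑ) := by rw [← add_assoc]; gcongr; exact le_add_self

lemma bracket_rpow_le {q : ℝ} (hq : 0 ≤ q) (p k : E) :
    bracket k ^ q ≤ 2 ^ q * (bracket p ^ q + bracket (k - p) ^ q) := by
  have two_max : bracket k ≤ 2 * max (bracket p) (bracket (k - p)) :=
    (bracket_le_add p k).trans <| by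
      rw [two_mul]
      exact add_le_add (le_max_left _ _) (le_max_right _ _)
  calc bracket k ^ q ≤ (2 * max (bracket p) (bracket (k - p))) ^ q :=
        ENNReal.rpow_le_rpow two_max hq
    _ = 2 ^ q * max (bracket p ^ q) (bracket (k - p) ^ q) := by
        rw [ENNReal.mul_rpow_of_nonneg _ _ hq, (ENNReal.monotone_rpow_of_nonneg hq).map_max]
    _ ≤ 2 ^ q * (bracket p ^ q + bracket (k - p) ^ q) := by
        gcongr
        exact max_le_add_of_nonneg zero_le zero_le

/-- The square of the `H^{n/2}` norm of a sequence of (moduli of) Fourier coefficients. -/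
def sobolevSq (n : ℕ) (f : E → ℝ≥0∞) : ℝ≥0∞ := ∑' k, bracket k ^ n * f k ^ 2

variable (n : ℕ)

lemma sobolevSq_eq_tsum_sq (f : E → ℝ≥0∞) :
    sobolevSq n f = ∑' k, (bracket k ^ (n / 2 : ℝ) * f k) ^ 2 :=
  tsum_congr fun k => by rw [mul_pow, ennreal_rpow_half_sq]

lemma sq_tsum_mul_le_tsum_mul_sobolevSq (f g : E → ℝ≥0∞) :
    (∑' k, f k * g k) ^ 2 ≤ (∑' k, f k ^ 2 * (bracket k ^ n)⁻¹) * sobolevSq n g := by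
  have weight_ne_zero (k : E) : bracket k ^ (n / 2 : ℝ) ≠ 0 :=
    (ENNReal.rpow_pos (zero_lt_one.trans_le (one_le_bracket k)) (bracket_ne_top k)).ne'
  have weight_ne_top (k : E) : bracket k ^ (n / 2 : ℝ) ≠ ∞ :=
    ENNReal.rpow_ne_top_of_nonneg (by positivity) (bracket_ne_top k)
  have cauchySchwarz := sq_tsum_mul_le_tsum_sq_mul_tsum_sq
    (fun k => f k * (bracket k ^ (n / 2 : ℝ))⁻¹) (fun k => bracket k ^ (n / 2 : ℝ) * g k)
  rw [← sobolevSq_eq_tsum_sq] at cauchySchwarz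
  convert cauchySchwarz using 4 with k k
  · rw [mul_assoc, ← mul_assoc _⁻¹, ENNReal.inv_mul_cancel (weight_ne_zero k) (weight_ne_top k),
      one_mul]
  · rw [mul_pow, ← ENNReal.inv_pow, ennreal_rpow_half_sq]

variable {n} in
lemma sobolevSq_mono {f g : E → ℝ≥0∞} (h : ∀ k, f k ≤ g k) : sobolevSq n f ≤ sobolevSq n g :=
  ENNReal.tsum_le_tsum fun k => by gcongr; exact h k

lemma sobolevSq_add_le (f g : E → ℝ≥0∞) :
    sobolevSq n (fun k => f k + g k) ≤ 2 * (sobolevSq n f + sobolevSq n g) := by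
  unfold sobolevSq
  rw [← ENNReal.tsum_add, ← ENNReal.tsum_mul_left]
  refine ENNReal.tsum_le_tsum fun k => ?_
  calc bracket k ^ n * (f k + g k) ^ 2
      ≤ bracket k ^ n * (2 * (f k ^ 2 + g k ^ 2)) := by gcongr; exact ennreal_add_sq_le _ _
    _ = 2 * (bracket k ^ n * f k ^ 2 + bracket k ^ n * g k ^ 2) := by ring

lemma sobolevSq_const_mul (c : ℝ≥0∞) (f : E → ℝ≥0∞) :
    sobolevSq n (fun k => c * f k) = c ^ 2 * sobolevSq n f := by
  unfold sobolevSq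
  rw [← ENNReal.tsum_mul_left]
  exact tsum_congr fun k => by ring

lemma sobolevSq_discConv_le (f g : E → ℝ≥0∞) :
    sobolevSq n (discConv f g) ≤ 2 * 2 ^ n *
      ((∑' k, g k) ^ 2 * sobolevSq n f + (∑' k, f k) ^ 2 * sobolevSq n g) := by
  simp only [sobolevSq_eq_tsum_sq, ← ennreal_rpow_half_sq 2 n]
  exact tsum_sq_weight_mul_discConv_le (fun p k => bracket_rpow_le (by positivity) p k) f g

lemma sobolevSq_discConv_discConv_le (w : E → ℝ≥0∞) :
    sobolevSq n (discConv (discConv w w) w) ≤ 2 * 2 ^ n * (2 * (2 * 2 ^ n) + 1) *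
      ((∑' k, w k) ^ 4 * sobolevSq n w) :=
  calc sobolevSq n (discConv (discConv w w) w)
      ≤ 2 * 2 ^ n * ((∑' k, w k) ^ 2 * sobolevSq n (discConv w w)
          + (∑' k, discConv w w k) ^ 2 * sobolevSq n w) := sobolevSq_discConv_le n _ _
    _ ≤ 2 * 2 ^ n * ((∑' k, w k) ^ 2 * (2 * 2 ^ n *
          ((∑' k, w k) ^ 2 * sobolevSq n w + (∑' k, w k) ^ 2 * sobolevSq n w))
          + ((∑' k, w k) * ∑' k, w k) ^ 2 * sobolevSq n w) := by
        rw [tsum_discConv]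
        gcongr
        exact sobolevSq_discConv_le n _ _
    _ = _ := by ring

end Bracket

/-! ### Powers of time and beta integrals -/

/-- The power `s ^ q` of a time `s`, as an extended nonnegative number. Negative exponents measure
the blow-up of the solution as `s → 0⁺`. -/
def timeWeight (q s : ℝ) : ℝ≥0∞ := ENNReal.ofReal (s ^ q)

section TimeWeight

lemma timeWeight_mul {s : ℝ} (hs : 0 < s) (p q : ℝ) :
    timeWeight p s * timeWeight q s = timeWeight (p + q) s := by
  unfold timeWeight
  rw [← ENNReal.ofReal_mul (by positivity), Real.rpow_add hs]

lemma timeWeight_pow {s : ℝ} (hs : 0 < s) (p : ℝ) (n : ℕ) :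
    timeWeight p s ^ n = timeWeight (p * n) s := by
  unfold timeWeight
  rw [← ENNReal.ofReal_pow (by positivity), Real.rpow_mul hs.le, Real.rpow_natCast]

lemma timeWeight_zero (s : ℝ) : timeWeight 0 s = 1 := by simp [timeWeight]

lemma timeWeight_mul_timeWeight_neg {s : ℝ} (hs : 0 < s) (p : ℝ) :
    timeWeight p s * timeWeight (-p) s = 1 := by
  rw [timeWeight_mul hs, add_neg_cancel, timeWeight_zero]

lemma timeWeight_ne_top (p s : ℝ) : timeWeight p s ≠ ∞ := ENNReal.ofReal_ne_top

lemma timeWeight_mono {s t p : ℝ} (hs : 0 ≤ s) (hst : s ≤ t) (hp : 0 ≤ p) :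
    timeWeight p s ≤ timeWeight p t :=
  ENNReal.ofReal_le_ofReal (Real.rpow_le_rpow hs hst hp)

lemma timeWeight_anti {s t p : ℝ} (hs : 0 < s) (hst : s ≤ t) (hp : p ≤ 0) :
    timeWeight p t ≤ timeWeight p s :=
  ENNReal.ofReal_le_ofReal (Real.rpow_le_rpow_of_nonpos hs hst hp)

lemma timeWeight_mul_arg {c s : ℝ} (hc : 0 ≤ c) (hs : 0 ≤ s) (p : ℝ) :
    timeWeight p (c * s) = timeWeight p c * timeWeight p s := by
  unfold timeWeight
  rw [Real.mul_rpow hc hs, ENNReal.ofReal_mul (by positivity)]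

lemma measurable_timeWeight (p : ℝ) : Measurable (timeWeight p) := by
  unfold timeWeight
  fun_prop

lemma tendsto_timeWeight_zero {p : ℝ} (hp : 0 < p) :
    Tendsto (timeWeight p) (nhdsWithin 0 (Ioi 0)) (nhds 0) := by
  have rpow_tendsto := (Real.continuousAt_rpow_const 0 p (Or.inr hp.le)).tendsto
  rw [Real.zero_rpow hp.ne'] at rpow_tendsto
  rw [← ENNReal.ofReal_zero]
  exact ENNReal.tendsto_ofReal (rpow_tendsto.mono_left nhdsWithin_le_nhds)

lemma lintegral_timeWeight {t b : ℝ} (ht : 0 < t) (hb : -1 < b) :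
    ∫⁻ s in Ioo 0 t, timeWeight b s = ENNReal.ofReal (b + 1)⁻¹ * timeWeight (b + 1) t := by
  have integrable : IntegrableOn (fun s : ℝ => s ^ b) (Ioo 0 t) :=
    ((intervalIntegrable_iff_integrableOn_Ioc_of_le ht.le).mp
      (intervalIntegral.intervalIntegrable_rpow' hb)).mono_set Ioo_subset_Ioc_self
  have nonneg : 0 ≤ᵐ[volume.restrict (Ioo 0 t)] fun s : ℝ => s ^ b :=
    (ae_restrict_iff' measurableSet_Ioo).mpr (ae_of_all _ fun s hs => Real.rpow_nonneg hs.1.le _)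
  unfold timeWeight
  rw [← ofReal_integral_eq_lintegral_ofReal integrable nonneg, ← integral_Ioc_eq_integral_Ioo,
    ← intervalIntegral.integral_of_le ht.le, integral_rpow (Or.inl hb),
    Real.zero_rpow (by linarith), sub_zero, div_eq_inv_mul,
    ENNReal.ofReal_mul (inv_nonneg.mpr (by linarith))]

lemma setLIntegral_Ioo_comp_sub_left (f : ℝ → ℝ≥0∞) (t : ℝ) :
    ∫⁻ s in Ioo 0 t, f (t - s) = ∫⁻ s in Ioo 0 t, f s := by
  rw [← lintegral_indicator measurableSet_Ioo, ← lintegral_indicator measurableSet_Ioo,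
    ← lintegral_sub_left_eq_self _ t]
  refine lintegral_congr fun s => ?_
  have mem_iff : t - s ∈ Ioo 0 t ↔ s ∈ Ioo 0 t := by
    constructor <;> rintro ⟨h₁, h₂⟩ <;> constructor <;> linarith
  by_cases hs : s ∈ Ioo 0 t
  · rw [indicator_of_mem hs, indicator_of_mem (mem_iff.mpr hs), sub_sub_cancel]
  · rw [indicator_of_notMem hs, indicator_of_notMem (mem_iff.not.mpr hs)]

lemma timeWeight_sub_mul_timeWeight_le {a b s t : ℝ} (ha : a ≤ 0) (hb : b ≤ 0)
    (hs : s ∈ Ioo 0 t) :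
    timeWeight a (t - s) * timeWeight b s ≤
      timeWeight a (2⁻¹ * t) * timeWeight b s + timeWeight b (2⁻¹ * t) * timeWeight a (t - s) := by
  obtain ⟨hs0, hst⟩ := hs
  rcases le_total s (2⁻¹ * t) with h | h
  · refine le_trans ?_ le_self_add
    gcongr
    exact timeWeight_anti (by linarith) (by linarith) ha
  · refine le_trans ?_ le_add_self
    rw [mul_comm]
    gcongr
    exact timeWeight_anti (by linarith) h hb

lemma exists_lintegral_timeWeight_sub_mul_le {a b : ℝ} (ha : a ∈ Ioc (-1) 0) (hb : b ∈ Ioc (-1) 0) :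
    ∃ C : ℝ≥0∞, C ≠ ∞ ∧ ∀ t : ℝ, 0 < t →
      ∫⁻ s in Ioo 0 t, timeWeight a (t - s) * timeWeight b s ≤ C * timeWeight (a + b + 1) t := by
  refine ⟨timeWeight a 2⁻¹ * ENNReal.ofReal (b + 1)⁻¹
    + timeWeight b 2⁻¹ * ENNReal.ofReal (a + 1)⁻¹, ?_, fun t ht => ?_⟩
  · finiteness [timeWeight_ne_top a 2⁻¹, timeWeight_ne_top b 2⁻¹]
  have measurable_sub (c : ℝ) : Measurable fun s => timeWeight c (t - s) :=
    (measurable_timeWeight c).comp (measurable_const.sub measurable_id)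
  calc ∫⁻ s in Ioo 0 t, timeWeight a (t - s) * timeWeight b s
      ≤ ∫⁻ s in Ioo 0 t, (timeWeight a (2⁻¹ * t) * timeWeight b s
          + timeWeight b (2⁻¹ * t) * timeWeight a (t - s)) :=
        setLIntegral_mono' measurableSet_Ioo fun s hs =>
          timeWeight_sub_mul_timeWeight_le ha.2 hb.2 hs
    _ = timeWeight a (2⁻¹ * t) * (ENNReal.ofReal (b + 1)⁻¹ * timeWeight (b + 1) t)
          + timeWeight b (2⁻¹ * t) * (ENNReal.ofReal (a + 1)⁻¹ * timeWeight (a + 1) t) := by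
        rw [lintegral_add_left ((measurable_timeWeight b).const_mul _),
          lintegral_const_mul _ (measurable_timeWeight b), lintegral_const_mul _ (measurable_sub a),
          setLIntegral_Ioo_comp_sub_left (timeWeight a), lintegral_timeWeight ht hb.1,
          lintegral_timeWeight ht ha.1]
    _ = timeWeight a 2⁻¹ * ENNReal.ofReal (b + 1)⁻¹ * (timeWeight a t * timeWeight (b + 1) t)
          + timeWeight b 2⁻¹ * ENNReal.ofReal (a + 1)⁻¹
            * (timeWeight b t * timeWeight (a + 1) t) := by
        rw [timeWeight_mul_arg (by norm_num) ht.le, timeWeight_mul_arg (by norm_num) ht.le]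
        ring
    _ = _ := by
        rw [timeWeight_mul ht, timeWeight_mul ht, add_left_comm b a 1, ← add_mul, ← add_assoc a b 1]

end TimeWeight

/-! ### Sums over the frequency lattice -/

/-- The frequency lattice `ℤ^d` dual to the torus. It carries the sup norm, so every norm is a
natural number. -/
abbrev Freq (d : ℕ) := Fin d → ℤ

section Lattice

variable {d : ℕ}

lemma norm_eq_zero_or_one_le_norm (k : Freq d) : ‖k‖ = 0 ∨ 1 ≤ ‖k‖ := by
  by_cases hk : k = 0
  · exact Or.inl (by simp [hk])
  · obtain ⟨i, hi⟩ := Function.ne_iff.mp hk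
    refine Or.inr (le_trans ?_ (norm_le_pi_norm k i))
    rw [Int.norm_eq_abs]
    exact_mod_cast Int.one_le_abs hi

lemma natFloor_norm_eq_norm (k : Freq d) : (⌊‖k‖⌋₊ : ℝ) = ‖k‖ := by
  refine le_antisymm (Nat.floor_le (norm_nonneg k))
    ((pi_norm_le_iff_of_nonneg (Nat.cast_nonneg _)).mpr fun i => ?_)
  have norm_natAbs : ((k i).natAbs : ℝ) = ‖k i‖ := by rw [Nat.cast_natAbs, Int.norm_eq_abs]; simp
  rw [← norm_natAbs]
  exact Nat.cast_le.mpr (Nat.le_floor (norm_natAbs.trans_le (norm_le_pi_norm k i)))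

lemma mem_Icc_natCast_iff (k : Freq d) (n : ℕ) :
    k ∈ Finset.Icc (-n : Freq d) n ↔ ‖k‖ ≤ n := by
  rw [Finset.mem_Icc, pi_norm_le_iff_of_nonneg (Nat.cast_nonneg _), Pi.le_def, Pi.le_def,
    ← forall_and]
  refine forall_congr' fun i => ?_
  rw [Int.norm_eq_abs, abs_le]
  exact_mod_cast Iff.rfl

lemma mem_box_natFloor_norm (k : Freq d) : k ∈ Finset.box ⌊‖k‖⌋₊ := by
  rcases h : ⌊‖k‖⌋₊ with _ | n
  · simpa [h] using (natFloor_norm_eq_norm k).symm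
  · have norm_eq := natFloor_norm_eq_norm k
    rw [h] at norm_eq
    rw [Finset.box_succ_eq_sdiff, Finset.mem_sdiff, mem_Icc_natCast_iff, mem_Icc_natCast_iff,
      ← norm_eq]
    constructor
    · exact le_rfl
    · simp

lemma card_Icc_natCast (n : ℕ) : (Finset.Icc (-n : Freq d) n).card = (2 * n + 1) ^ d := by
  rw [Pi.card_Icc]
  simp only [Pi.neg_apply, Pi.natCast_apply, Int.card_Icc, Finset.prod_const, Finset.card_univ,
    Fintype.card_fin]
  congr 1
  omega

lemma card_box_le (hd : 1 ≤ d) (n : ℕ) :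
    (Finset.box n : Finset (Freq d)).card ≤ d * 2 ^ d * (n + 1) ^ (d - 1) := by
  rcases n with _ | n
  · have one_le : 1 ≤ d * 2 ^ d := Nat.mul_pos hd (by positivity)
    simpa only [Finset.box_zero, Finset.card_singleton, zero_add, one_pow, mul_one] using one_le
  have subset : Finset.Icc (-n : Freq d) n ⊆ Finset.Icc (-(n + 1 : ℕ) : Freq d) (n + 1 : ℕ) := by
    intro k hk
    rw [mem_Icc_natCast_iff] at hk ⊢
    exact hk.trans (by simp)
  rw [Finset.box_succ_eq_sdiff, Finset.card_sdiff_of_subset subset, card_Icc_natCast,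
    card_Icc_natCast]
  have pow_sub : (2 * (n + 1) + 1) ^ d - (2 * n + 1) ^ d ≤ 2 * d * (2 * (n + 1) + 1) ^ (d - 1) := by
    grind [abs_pow_sub_pow_le (α := ℤ) (2 * (n + 1) + 1) (2 * n + 1) d]
  calc (2 * (n + 1) + 1) ^ d - (2 * n + 1) ^ d
      ≤ 2 * d * (2 * (n + 1) + 1) ^ (d - 1) := pow_sub
    _ ≤ 2 * d * (2 * (n + 1 + 1)) ^ (d - 1) := by gcongr; omega
    _ = d * 2 ^ (d - 1 + 1) * (n + 1 + 1) ^ (d - 1) := by rw [mul_pow, pow_succ]; ring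
    _ = d * 2 ^ d * (n + 1 + 1) ^ (d - 1) := by rw [Nat.sub_add_cancel hd]

lemma tsum_comp_norm_le (hd : 1 ≤ d) (g : ℝ → ℝ≥0∞) :
    ∑' k : Freq d, g ‖k‖ ≤ (d * 2 ^ d : ℕ) * ∑' n : ℕ, ((n : ℝ≥0∞) + 1) ^ (d - 1) * g n := by
  classical
  calc ∑' k : Freq d, g ‖k‖ = ∑' k : Freq d, ∑' n : ℕ, if n = ⌊‖k‖⌋₊ then g n else 0 :=
        tsum_congr fun k => by rw [tsum_ite_eq, natFloor_norm_eq_norm]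
    _ = ∑' n : ℕ, ∑' k : Freq d, if n = ⌊‖k‖⌋₊ then g n else 0 := ENNReal.tsum_comm
    _ ≤ ∑' n : ℕ, ((Finset.box n : Finset (Freq d)).card : ℝ≥0∞) * g n := by
        refine ENNReal.tsum_le_tsum fun n => ?_
        rw [tsum_eq_sum (s := Finset.box n), ← nsmul_eq_mul, ← Finset.sum_const]
        · exact Finset.sum_le_sum fun k _ => by split_ifs <;> simp
        · rintro k hk
          exact if_neg fun h : n = ⌊‖k‖⌋₊ => hk (h ▸ mem_box_natFloor_norm k)
    _ ≤ ∑' n : ℕ, (d * 2 ^ d : ℕ) * (((n : ℝ≥0∞) + 1) ^ (d - 1) * g n) := by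
        refine ENNReal.tsum_le_tsum fun n => ?_
        rw [← mul_assoc]
        gcongr
        exact_mod_cast card_box_le hd n
    _ = _ := ENNReal.tsum_mul_left

lemma pow_pred_mul_inv_pow_add {x : ℝ≥0∞} (hd : 1 ≤ d) (hx₀ : x ≠ 0) (hx : x ≠ ∞) (m : ℕ) :
    x ^ (d - 1) * (x ^ (d + m))⁻¹ = (x ^ (m + 1))⁻¹ := by
  have : x ^ (d + m) = x ^ (d - 1) * x ^ (m + 1) := by rw [← pow_add]; congr 1; omega
  rw [this, ENNReal.mul_inv (by simp [hx₀]) (by simp [hx]), ← mul_assoc,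
    ENNReal.mul_inv_cancel (by simp [hx₀]) (by simp [hx]), one_mul]

lemma tsum_inv_bracket_pow_ne_top (hd : 1 ≤ d) :
    ∑' k : Freq d, (bracket k ^ (d + 1))⁻¹ ≠ ∞ := by
  have shells := tsum_comp_norm_le hd fun x => (ENNReal.ofReal (1 + x) ^ (d + 1))⁻¹
  simp only [← bracket_eq_ofReal] at shells
  refine ne_top_of_le_ne_top (ENNReal.mul_ne_top (ENNReal.natCast_ne_top _) ?_) shells
  have shell_eq (n : ℕ) : ((n : ℝ≥0∞) + 1) ^ (d - 1) * (ENNReal.ofReal (1 + n) ^ (d + 1))⁻¹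
      = ENNReal.ofReal (1 / ((n : ℝ) + 1) ^ 2) := by
    have cast : ENNReal.ofReal (1 + n) = n + 1 := by
      rw [add_comm, ENNReal.ofReal_add (by positivity) zero_le_one]
      simp
    rw [cast, pow_pred_mul_inv_pow_add hd (by simp) (by simp), ← cast, one_div, add_comm (n : ℝ),
      ENNReal.ofReal_inv_of_pos (by positivity), ENNReal.ofReal_pow (by positivity)]
  have summable : Summable fun n : ℕ => 1 / ((n : ℝ) + 1) ^ 2 := by
    simpa using
      (summable_nat_add_iff 1).mpr (Real.summable_one_div_nat_pow (p := 2).mpr (by norm_num))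
  simp only [shell_eq]
  exact summable.tsum_ofReal_ne_top

end Lattice

section HeatSum

lemma exp_neg_sq_le {x : ℝ} (hx : 0 ≤ x) : Real.exp (-x ^ 2) ≤ 2 / (1 + x) ^ 2 := by
  rw [Real.exp_neg, le_div_iff₀ (by positivity), inv_mul_le_iff₀ (Real.exp_pos _)]
  nlinarith [sq_nonneg (x - 1), Real.add_one_le_exp (x ^ 2)]

lemma add_one_div_sq_le_sub {e : ℝ} (he : 0 < e) (n : ℕ) :
    ((n : ℝ) + 1) / (1 + e * ((n : ℝ) + 1) ^ 2) ^ 2 ≤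
      (1 / (1 + e * (n : ℝ) ^ 2) - 1 / (1 + e * ((n : ℝ) + 1) ^ 2)) / e := by
  have sub_eq : (1 / (1 + e * (n : ℝ) ^ 2) - 1 / (1 + e * ((n : ℝ) + 1) ^ 2)) / e =
      (2 * n + 1) / ((1 + e * (n : ℝ) ^ 2) * (1 + e * ((n : ℝ) + 1) ^ 2)) := by
    field_simp
    ring
  rw [sub_eq, div_le_div_iff₀ (by positivity) (by positivity)]
  calc ((n : ℝ) + 1) * ((1 + e * (n : ℝ) ^ 2) * (1 + e * ((n : ℝ) + 1) ^ 2))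
      ≤ (2 * n + 1) * ((1 + e * ((n : ℝ) + 1) ^ 2) * (1 + e * ((n : ℝ) + 1) ^ 2)) := by
        gcongr <;> linarith [(Nat.cast_nonneg n : (0 : ℝ) ≤ n)]
    _ = _ := by ring

lemma tsum_add_one_div_sq_le {e : ℝ} (he : 0 < e) :
    ∑' n : ℕ, ENNReal.ofReal (((n : ℝ) + 1) / (1 + e * ((n : ℝ) + 1) ^ 2) ^ 2) ≤
      ENNReal.ofReal e⁻¹ := by
  rw [ENNReal.tsum_eq_iSup_nat]
  refine iSup_le fun N => ?_
  rw [← ENNReal.ofReal_sum_of_nonneg fun n _ => by positivity]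
  refine ENNReal.ofReal_le_ofReal ?_
  let F (n : ℕ) : ℝ := -(1 / (1 + e * (n : ℝ) ^ 2)) / e
  calc ∑ n ∈ Finset.range N, ((n : ℝ) + 1) / (1 + e * ((n : ℝ) + 1) ^ 2) ^ 2
      ≤ ∑ n ∈ Finset.range N, (F (n + 1) - F n) := by
        refine Finset.sum_le_sum fun n _ => (add_one_div_sq_le_sub he n).trans_eq ?_
        simp only [F]
        push_cast
        ring
    _ = e⁻¹ - 1 / (1 + e * (N : ℝ) ^ 2) / e := by
        rw [Finset.sum_range_sub]
        simp only [F]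
        ring
    _ ≤ e⁻¹ := sub_le_self _ (by positivity)

lemma exp_neg_mul_pow_four_le {b x s : ℝ} (hb : 0 ≤ b) (hx : x = 0 ∨ 1 ≤ x) (hs : s ∈ Icc 0 1) :
    Real.exp (-(b * x ^ 4 * s)) ≤ Real.exp b * Real.exp (-(b / 16 * s * (1 + x) ^ 4)) := by
  obtain ⟨hs₀, hs₁⟩ := hs
  rw [← Real.exp_add, Real.exp_le_exp]
  rcases hx with rfl | hx
  · nlinarith [mul_le_mul_of_nonneg_left hs₁ hb, mul_nonneg hb hs₀]
  · have pow_le : (1 + x) ^ 4 ≤ (2 * x) ^ 4 := by gcongr; linarith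
    nlinarith [mul_le_mul_of_nonneg_left pow_le (mul_nonneg hb hs₀)]

lemma exp_neg_mul_norm_pow_four_le {d : ℕ} {b s : ℝ} (hb : 0 ≤ b) (hs : s ∈ Icc 0 1)
    (k : Freq d) :
    Real.exp (-(b * ‖k‖ ^ 4 * s)) ≤
      2 * Real.exp b / (1 + √(b / 16 * s) * (1 + ‖k‖) ^ 2) ^ 2 := by
  have hs₀ := hs.1
  have sq_eq : b / 16 * s * (1 + ‖k‖) ^ 4 = (√(b / 16 * s) * (1 + ‖k‖) ^ 2) ^ 2 := by
    rw [mul_pow, Real.sq_sqrt (by positivity)]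
    ring
  calc Real.exp (-(b * ‖k‖ ^ 4 * s))
      ≤ Real.exp b * Real.exp (-(b / 16 * s * (1 + ‖k‖) ^ 4)) :=
        exp_neg_mul_pow_four_le hb (norm_eq_zero_or_one_le_norm k) hs
    _ ≤ Real.exp b * (2 / (1 + √(b / 16 * s) * (1 + ‖k‖) ^ 2) ^ 2) := by
        rw [sq_eq]
        gcongr
        exact exp_neg_sq_le (by positivity)
    _ = _ := by ring

lemma ofReal_inv_sqrt {x : ℝ} (hx : 0 ≤ x) : ENNReal.ofReal (√x)⁻¹ = timeWeight (-(1 / 2)) x := by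
  rw [timeWeight, Real.sqrt_eq_rpow, Real.rpow_neg hx]

lemma pow_pred_mul_sq_mul_inv_pow {d : ℕ} (hd : 1 ≤ d) {x : ℝ≥0∞} (hx₀ : x ≠ 0) (hx : x ≠ ∞) :
    x ^ (d - 1) * (x ^ 2 * (x ^ d)⁻¹) = x := by
  have inv_eq : x ^ (d - 1) * (x ^ d)⁻¹ = x⁻¹ := by
    simpa using pow_pred_mul_inv_pow_add hd hx₀ hx 0
  rw [mul_left_comm, inv_eq, sq, mul_assoc, ENNReal.mul_inv_cancel hx₀ hx, mul_one]

/-- In dimension `d` the sum behaves like `∫ r e^{-b s r⁴} dr`, whatever `d` is. -/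
lemma exists_tsum_bracket_sq_mul_exp_le {d : ℕ} (hd : 1 ≤ d) {b : ℝ} (hb : 0 < b) :
    ∃ C : ℝ≥0∞, C ≠ ∞ ∧ ∀ s ∈ Ioc (0 : ℝ) 1,
      ∑' k : Freq d, bracket k ^ 2 * (bracket k ^ d)⁻¹ *
        ENNReal.ofReal (Real.exp (-(b * ‖k‖ ^ 4 * s))) ≤ C * timeWeight (-(1 / 2)) s := by
  refine ⟨(d * 2 ^ d : ℕ) * (ENNReal.ofReal (2 * Real.exp b) * timeWeight (-(1 / 2)) (b / 16)),
    by finiteness [timeWeight_ne_top (-(1 / 2)) (b / 16)], fun s ⟨hs₀, hs₁⟩ => ?_⟩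
  set e : ℝ := √(b / 16 * s)
  have he : 0 < e := Real.sqrt_pos.mpr (by positivity)
  let g (x : ℝ) : ℝ≥0∞ := ENNReal.ofReal (1 + x) ^ 2 * (ENNReal.ofReal (1 + x) ^ d)⁻¹ *
    ENNReal.ofReal (2 * Real.exp b / (1 + e * (1 + x) ^ 2) ^ 2)
  have shell_eq (n : ℕ) : ((n : ℝ≥0∞) + 1) ^ (d - 1) * g n = ENNReal.ofReal (2 * Real.exp b) *
      ENNReal.ofReal (((n : ℝ) + 1) / (1 + e * ((n : ℝ) + 1) ^ 2) ^ 2) := by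
    have cast : ENNReal.ofReal (1 + n) = n + 1 := by
      rw [add_comm, ENNReal.ofReal_add (by positivity) zero_le_one]
      simp
    simp only [g, cast]
    rw [← mul_assoc, pow_pred_mul_sq_mul_inv_pow hd (by simp) (by simp), ← cast,
      ← ENNReal.ofReal_mul (by positivity), ← ENNReal.ofReal_mul (by positivity), add_comm (n : ℝ)]
    congr 1
    ring
  calc ∑' k : Freq d, bracket k ^ 2 * (bracket k ^ d)⁻¹ *
        ENNReal.ofReal (Real.exp (-(b * ‖k‖ ^ 4 * s)))
      ≤ ∑' k : Freq d, g ‖k‖ := by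
        refine ENNReal.tsum_le_tsum fun k => ?_
        simp only [g, ← bracket_eq_ofReal]
        gcongr
        exact exp_neg_mul_norm_pow_four_le hb.le ⟨hs₀.le, hs₁⟩ k
    _ ≤ (d * 2 ^ d : ℕ) * ∑' n : ℕ, ((n : ℝ≥0∞) + 1) ^ (d - 1) * g n := tsum_comp_norm_le hd g
    _ ≤ (d * 2 ^ d : ℕ) * (ENNReal.ofReal (2 * Real.exp b) * ENNReal.ofReal e⁻¹) := by
        simp only [shell_eq, ENNReal.tsum_mul_left]
        gcongr
        exact tsum_add_one_div_sq_le he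
    _ = _ := by
        rw [ofReal_inv_sqrt (by positivity), timeWeight_mul_arg (by positivity) hs₀.le]
        ring

end HeatSum

/-! ### Coefficient estimates for the flux -/

section ComplexConvolution

variable {G : Type*} [AddCommGroup G]

lemma discConv_const_mul (c : ℝ≥0∞) (f g : G → ℝ≥0∞) (k : G) :
    discConv (fun p => c * f p) g k = c * discConv f g k := by
  simp only [discConv, mul_assoc, ENNReal.tsum_mul_left]

lemma mul_enorm_discConv_le {w : G → ℝ≥0∞} (hw : ∀ p k, w k ≤ w p * w (k - p)) (f g : G → ℂ)
    (k : G) :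
    w k * ‖discConv f g k‖ₑ ≤ discConv (fun p => w p * ‖f p‖ₑ) (fun p => w p * ‖g p‖ₑ) k :=
  calc w k * ‖discConv f g k‖ₑ ≤ w k * ∑' p, ‖f p * g (k - p)‖ₑ := by
        gcongr; exact enorm_tsum_le_tsum_enorm
    _ = ∑' p, w k * (‖f p‖ₑ * ‖g (k - p)‖ₑ) := by simp only [ENNReal.tsum_mul_left, enorm_mul]
    _ ≤ ∑' p, w p * w (k - p) * (‖f p‖ₑ * ‖g (k - p)‖ₑ) := by gcongr with p; exact hw p k
    _ = _ := tsum_congr fun p => by ring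

lemma summable_of_tsum_enorm_ne_top {ι : Type*} {f : ι → ℂ} (h : ∑' i, ‖f i‖ₑ ≠ ∞) :
    Summable f :=
  .of_norm (by simpa using ENNReal.summable_toReal h)

lemma summable_mul_sub {f g : G → ℂ} (hf : ∑' k, ‖f k‖ₑ ≠ ∞) (hg : ∑' k, ‖g k‖ₑ ≠ ∞) (k : G) :
    Summable fun p => f p * g (k - p) := by
  refine summable_of_tsum_enorm_ne_top (ne_top_of_le_ne_top (ENNReal.mul_ne_top hf hg) ?_)
  simp only [enorm_mul]
  exact discConv_le_tsum_mul_tsum (‖f ·‖ₑ) (‖g ·‖ₑ) k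

lemma discConv_sub_discConv {f g f' g' : G → ℂ} (hf : ∑' k, ‖f k‖ₑ ≠ ∞)
    (hg : ∑' k, ‖g k‖ₑ ≠ ∞) (hf' : ∑' k, ‖f' k‖ₑ ≠ ∞) (hg' : ∑' k, ‖g' k‖ₑ ≠ ∞) :
    discConv f g - discConv f' g' = discConv (f - f') g + discConv f' (g - g') := by
  ext k
  have fg := summable_mul_sub hf hg k
  have f'g := summable_mul_sub hf' hg k
  have f'g' := summable_mul_sub hf' hg' k
  simp only [Pi.sub_apply, Pi.add_apply, discConv, sub_mul, mul_sub]
  rw [fg.tsum_sub f'g, f'g.tsum_sub f'g']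
  ring

end ComplexConvolution

section AnalyticWeight

variable {E : Type*} [SeminormedAddCommGroup E] {ρ : ℝ}

/-- The weight `e^{ρ|k|}`; summability against it makes a Fourier series real analytic. -/
def analyticWeight (ρ : ℝ) (k : E) : ℝ≥0∞ := ENNReal.ofReal (Real.exp (ρ * ‖k‖))

lemma analyticWeight_le_mul (hρ : 0 ≤ ρ) (p k : E) :
    analyticWeight ρ k ≤ analyticWeight ρ p * analyticWeight ρ (k - p) := by
  unfold analyticWeight
  rw [← ENNReal.ofReal_mul (by positivity), ← Real.exp_add, ← mul_add]
  gcongr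
  simpa using norm_add_le p (k - p)

lemma one_le_analyticWeight (hρ : 0 ≤ ρ) (k : E) : 1 ≤ analyticWeight ρ k :=
  ENNReal.one_le_ofReal.mpr (Real.one_le_exp (by positivity))

lemma analyticWeight_ne_top (ρ : ℝ) (k : E) : analyticWeight ρ k ≠ ∞ := ENNReal.ofReal_ne_top

lemma le_analyticWeight_mul (hρ : 0 ≤ ρ) (k : E) (x : ℝ≥0∞) : x ≤ analyticWeight ρ k * x :=
  le_mul_of_one_le_left' (one_le_analyticWeight hρ k)

end AnalyticWeight

section CoefficientOperators

variable {d : ℕ}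

/-- Fourier side of `∂_j`. -/
def fourierDeriv (j : Fin d) (c : Freq d → ℂ) (k : Freq d) : ℂ := Complex.I * k j * c k

/-- Fourier side of `h ↦ |∇h|²`. -/
def gradSqCoeff (c : Freq d → ℂ) (k : Freq d) : ℂ :=
  ∑ l, discConv (fourierDeriv l c) (fourierDeriv l c) k

/-- Fourier side of the flux `h ↦ (|∇h|² - 1) ∂_j h`. -/
def fluxCoeff (c : Freq d → ℂ) (j : Fin d) (k : Freq d) : ℂ :=
  discConv (gradSqCoeff c) (fourierDeriv j c) k - fourierDeriv j c k

/-- Fourier side of the divergence. -/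
def divCoeff (F : Fin d → Freq d → ℂ) (k : Freq d) : ℂ := ∑ j, fourierDeriv j (F j) k

/-- The moduli `⟨k⟩ e^{ρ|k|} |v_k|`, which dominate the weighted coefficients of `∇v`. -/
def gevreyMod (ρ : ℝ) (v : Freq d → ℂ) (k : Freq d) : ℝ≥0∞ :=
  bracket k * analyticWeight ρ k * ‖v k‖ₑ

/-- The weighted moduli `e^{ρ|k|} ∑_j |F_{j,k}|` of the coefficients of a vector field. -/
def fluxMajorant (ρ : ℝ) (F : Fin d → Freq d → ℂ) (k : Freq d) : ℝ≥0∞ :=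
  analyticWeight ρ k * ∑ j, ‖F j k‖ₑ

lemma enorm_fourierDeriv_le (j : Fin d) (c : Freq d → ℂ) (k : Freq d) :
    ‖fourierDeriv j c k‖ₑ ≤ ‖k‖ₑ * ‖c k‖ₑ := by
  have enorm_coord : ‖(k j : ℂ)‖ₑ ≤ ‖k‖ₑ := by
    rw [← ofReal_norm, ← ofReal_norm, Complex.norm_intCast, ← Int.norm_eq_abs]
    exact ENNReal.ofReal_le_ofReal (norm_le_pi_norm k j)
  have enorm_I : ‖Complex.I‖ₑ = 1 := by rw [← ofReal_norm]; simp
  rw [fourierDeriv, enorm_mul, enorm_mul, enorm_I, one_mul]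
  gcongr

lemma enorm_divCoeff_le (F : Fin d → Freq d → ℂ) (k : Freq d) :
    ‖divCoeff F k‖ₑ ≤ ‖k‖ₑ * ∑ j, ‖F j k‖ₑ := by
  rw [Finset.mul_sum]
  exact (enorm_sum_le _ _).trans (Finset.sum_le_sum fun j _ => enorm_fourierDeriv_le j _ k)

lemma fourierDeriv_sub (j : Fin d) (u v : Freq d → ℂ) :
    fourierDeriv j (u - v) = fourierDeriv j u - fourierDeriv j v := by
  ext k
  simp only [fourierDeriv, Pi.sub_apply, mul_sub]

variable {ρ : ℝ} {u v : Freq d → ℂ}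

lemma analyticWeight_mul_enorm_fourierDeriv_le (ρ : ℝ) (j : Fin d) (v : Freq d → ℂ) (k : Freq d) :
    analyticWeight ρ k * ‖fourierDeriv j v k‖ₑ ≤ gevreyMod ρ v k :=
  calc analyticWeight ρ k * ‖fourierDeriv j v k‖ₑ ≤ analyticWeight ρ k * (bracket k * ‖v k‖ₑ) := by
        gcongr
        refine (enorm_fourierDeriv_le j v k).trans ?_
        gcongr
        exact le_add_self
    _ = gevreyMod ρ v k := by rw [gevreyMod]; ring

lemma analyticWeight_mul_enorm_discConv_le (hρ : 0 ≤ ρ) {f g : Freq d → ℂ} {F G : Freq d → ℝ≥0∞}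
    (hF : ∀ k, analyticWeight ρ k * ‖f k‖ₑ ≤ F k) (hG : ∀ k, analyticWeight ρ k * ‖g k‖ₑ ≤ G k)
    (k : Freq d) : analyticWeight ρ k * ‖discConv f g k‖ₑ ≤ discConv F G k :=
  (mul_enorm_discConv_le (analyticWeight_le_mul hρ) f g k).trans (discConv_mono hF hG k)

lemma analyticWeight_mul_enorm_gradSqCoeff_le (hρ : 0 ≤ ρ) (u : Freq d → ℂ) (k : Freq d) :
    analyticWeight ρ k * ‖gradSqCoeff u k‖ₑ ≤
      d * discConv (gevreyMod ρ u) (gevreyMod ρ u) k :=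
  calc analyticWeight ρ k * ‖gradSqCoeff u k‖ₑ
      ≤ analyticWeight ρ k * ∑ l, ‖discConv (fourierDeriv l u) (fourierDeriv l u) k‖ₑ := by
        gcongr; exact enorm_sum_le _ _
    _ ≤ ∑ _l : Fin d, discConv (gevreyMod ρ u) (gevreyMod ρ u) k := by
        rw [Finset.mul_sum]
        gcongr with l
        exact analyticWeight_mul_enorm_discConv_le hρ
          (analyticWeight_mul_enorm_fourierDeriv_le ρ l u)
          (analyticWeight_mul_enorm_fourierDeriv_le ρ l u) k
    _ = _ := by simp

lemma tsum_enorm_fourierDeriv_ne_top (hρ : 0 ≤ ρ) (hu : ∑' k, gevreyMod ρ u k ≠ ∞) (j : Fin d) :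
    ∑' k, ‖fourierDeriv j u k‖ₑ ≠ ∞ :=
  ne_top_of_le_ne_top hu <| ENNReal.tsum_le_tsum fun k =>
    (le_analyticWeight_mul hρ k _).trans (analyticWeight_mul_enorm_fourierDeriv_le ρ j u k)

lemma tsum_enorm_gradSqCoeff_ne_top (hρ : 0 ≤ ρ) (hu : ∑' k, gevreyMod ρ u k ≠ ∞) :
    ∑' k, ‖gradSqCoeff u k‖ₑ ≠ ∞ := by
  have majorant : ∑' k, d * discConv (gevreyMod ρ u) (gevreyMod ρ u) k ≠ ∞ := by
    rw [ENNReal.tsum_mul_left, tsum_discConv]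
    finiteness
  exact ne_top_of_le_ne_top majorant <| ENNReal.tsum_le_tsum fun k =>
    (le_analyticWeight_mul hρ k _).trans (analyticWeight_mul_enorm_gradSqCoeff_le hρ u k)

lemma gradSqCoeff_sub (hρ : 0 ≤ ρ) (hu : ∑' k, gevreyMod ρ u k ≠ ∞)
    (hv : ∑' k, gevreyMod ρ v k ≠ ∞) (k : Freq d) :
    gradSqCoeff u k - gradSqCoeff v k =
      ∑ l, (discConv (fourierDeriv l (u - v)) (fourierDeriv l u) k +
        discConv (fourierDeriv l v) (fourierDeriv l (u - v)) k) := by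
  rw [gradSqCoeff, gradSqCoeff, ← Finset.sum_sub_distrib]
  refine Finset.sum_congr rfl fun l _ => ?_
  have hul := tsum_enorm_fourierDeriv_ne_top hρ hu l
  have hvl := tsum_enorm_fourierDeriv_ne_top hρ hv l
  rw [fourierDeriv_sub]
  exact congrFun (discConv_sub_discConv hul hul hvl hvl) k

lemma fluxCoeff_sub (hρ : 0 ≤ ρ) (hu : ∑' k, gevreyMod ρ u k ≠ ∞)
    (hv : ∑' k, gevreyMod ρ v k ≠ ∞) (j : Fin d) (k : Freq d) :
    fluxCoeff u j k - fluxCoeff v j k =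
      discConv (gradSqCoeff u - gradSqCoeff v) (fourierDeriv j u) k +
        discConv (gradSqCoeff v) (fourierDeriv j (u - v)) k - fourierDeriv j (u - v) k := by
  have conv_sub := congrFun (discConv_sub_discConv (tsum_enorm_gradSqCoeff_ne_top hρ hu)
    (tsum_enorm_fourierDeriv_ne_top hρ hu j) (tsum_enorm_gradSqCoeff_ne_top hρ hv)
    (tsum_enorm_fourierDeriv_ne_top hρ hv j)) k
  simp only [fluxCoeff, fourierDeriv_sub, Pi.sub_apply, Pi.add_apply] at conv_sub ⊢
  linear_combination conv_sub

lemma analyticWeight_mul_enorm_gradSqCoeff_sub_le (hρ : 0 ≤ ρ) (hu : ∑' k, gevreyMod ρ u k ≠ ∞)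
    (hv : ∑' k, gevreyMod ρ v k ≠ ∞) (k : Freq d) :
    analyticWeight ρ k * ‖(gradSqCoeff u - gradSqCoeff v) k‖ₑ ≤
      d * (discConv (gevreyMod ρ (u - v)) (gevreyMod ρ u) k +
        discConv (gevreyMod ρ v) (gevreyMod ρ (u - v)) k) := by
  have deriv_le := analyticWeight_mul_enorm_fourierDeriv_le (d := d) ρ
  rw [Pi.sub_apply, gradSqCoeff_sub hρ hu hv]
  calc _ ≤ ∑ l, analyticWeight ρ k * (‖discConv (fourierDeriv l (u - v)) (fourierDeriv l u) k‖ₑ +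
          ‖discConv (fourierDeriv l v) (fourierDeriv l (u - v)) k‖ₑ) := by
        rw [← Finset.mul_sum]
        gcongr
        exact (enorm_sum_le _ _).trans (Finset.sum_le_sum fun l _ => enorm_add_le _ _)
    _ ≤ ∑ _l : Fin d, (discConv (gevreyMod ρ (u - v)) (gevreyMod ρ u) k +
        discConv (gevreyMod ρ v) (gevreyMod ρ (u - v)) k) := by
        gcongr with l
        rw [mul_add]
        exact add_le_add (analyticWeight_mul_enorm_discConv_le hρ (deriv_le l _) (deriv_le l _) k)
          (analyticWeight_mul_enorm_discConv_le hρ (deriv_le l _) (deriv_le l _) k)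
    _ = _ := by simp [mul_add]

lemma analyticWeight_mul_enorm_discConv_gradSqCoeff_le (hρ : 0 ≤ ρ) (u v : Freq d → ℂ) (j : Fin d)
    (k : Freq d) :
    analyticWeight ρ k * ‖discConv (gradSqCoeff u) (fourierDeriv j v) k‖ₑ ≤
      d * discConv (discConv (gevreyMod ρ u) (gevreyMod ρ u)) (gevreyMod ρ v) k := by
  rw [← discConv_const_mul]
  exact analyticWeight_mul_enorm_discConv_le hρ (analyticWeight_mul_enorm_gradSqCoeff_le hρ u)
    (analyticWeight_mul_enorm_fourierDeriv_le ρ j v) k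

lemma fluxMajorant_le_of_forall {F : Fin d → Freq d → ℂ} {k : Freq d} {B : ℝ≥0∞}
    (h : ∀ j, analyticWeight ρ k * ‖F j k‖ₑ ≤ B) : fluxMajorant ρ F k ≤ d * B := by
  rw [fluxMajorant, Finset.mul_sum]
  simpa using Finset.sum_le_sum fun j (_ : j ∈ Finset.univ) => h j

lemma fluxMajorant_fluxCoeff_le (hρ : 0 ≤ ρ) (u : Freq d → ℂ) (k : Freq d) :
    fluxMajorant ρ (fluxCoeff u) k ≤
      d * (d * discConv (discConv (gevreyMod ρ u) (gevreyMod ρ u)) (gevreyMod ρ u) k +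
        gevreyMod ρ u k) := by
  refine fluxMajorant_le_of_forall fun j => ?_
  calc analyticWeight ρ k * ‖fluxCoeff u j k‖ₑ
      ≤ analyticWeight ρ k * ‖discConv (gradSqCoeff u) (fourierDeriv j u) k‖ₑ +
          analyticWeight ρ k * ‖fourierDeriv j u k‖ₑ := by
        rw [← mul_add]
        gcongr
        exact enorm_sub_le
    _ ≤ _ := add_le_add (analyticWeight_mul_enorm_discConv_gradSqCoeff_le hρ u u j k)
        (analyticWeight_mul_enorm_fourierDeriv_le ρ j u k)

lemma fluxMajorant_fluxCoeff_sub_le (hρ : 0 ≤ ρ) (hu : ∑' k, gevreyMod ρ u k ≠ ∞)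
    (hv : ∑' k, gevreyMod ρ v k ≠ ∞) (k : Freq d) :
    fluxMajorant ρ (fluxCoeff u - fluxCoeff v) k ≤
      d * (d * discConv (fun k => discConv (gevreyMod ρ (u - v)) (gevreyMod ρ u) k +
          discConv (gevreyMod ρ v) (gevreyMod ρ (u - v)) k) (gevreyMod ρ u) k +
        d * discConv (discConv (gevreyMod ρ v) (gevreyMod ρ v)) (gevreyMod ρ (u - v)) k +
        gevreyMod ρ (u - v) k) := by
  refine fluxMajorant_le_of_forall fun j => ?_
  rw [Pi.sub_apply, Pi.sub_apply, fluxCoeff_sub hρ hu hv]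
  calc _ ≤ analyticWeight ρ k * ‖discConv (gradSqCoeff u - gradSqCoeff v) (fourierDeriv j u) k‖ₑ +
          analyticWeight ρ k * ‖discConv (gradSqCoeff v) (fourierDeriv j (u - v)) k‖ₑ +
          analyticWeight ρ k * ‖fourierDeriv j (u - v) k‖ₑ := by
        rw [← mul_add, ← mul_add]
        gcongr
        refine enorm_sub_le.trans ?_
        gcongr
        exact enorm_add_le _ _
    _ ≤ _ := by
        refine add_le_add (add_le_add ?_
          (analyticWeight_mul_enorm_discConv_gradSqCoeff_le hρ v (u - v) j k))
          (analyticWeight_mul_enorm_fourierDeriv_le ρ j _ k)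
        rw [← discConv_const_mul]
        exact analyticWeight_mul_enorm_discConv_le hρ
          (analyticWeight_mul_enorm_gradSqCoeff_sub_le hρ hu hv)
          (analyticWeight_mul_enorm_fourierDeriv_le ρ j u) k

lemma tsum_fluxMajorant_fluxCoeff_le (hρ : 0 ≤ ρ) (u : Freq d → ℂ) :
    ∑' k, fluxMajorant ρ (fluxCoeff u) k ≤
      d * (d * (∑' k, gevreyMod ρ u k) ^ 3 + ∑' k, gevreyMod ρ u k) := by
  refine (ENNReal.tsum_le_tsum (fluxMajorant_fluxCoeff_le hρ u)).trans_eq ?_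
  rw [ENNReal.tsum_mul_left, ENNReal.tsum_add, ENNReal.tsum_mul_left, tsum_discConv, tsum_discConv]
  ring

lemma tsum_fluxMajorant_fluxCoeff_sub_le (hρ : 0 ≤ ρ) {X : ℝ≥0∞} (hX : X ≠ ∞)
    (hu : ∑' k, gevreyMod ρ u k ≤ X) (hv : ∑' k, gevreyMod ρ v k ≤ X) :
    ∑' k, fluxMajorant ρ (fluxCoeff u - fluxCoeff v) k ≤
      d * ((3 * d * X ^ 2 + 1) * ∑' k, gevreyMod ρ (u - v) k) := by
  refine (ENNReal.tsum_le_tsum (fluxMajorant_fluxCoeff_sub_le hρ (ne_top_of_le_ne_top hX hu)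
    (ne_top_of_le_ne_top hX hv))).trans ?_
  simp only [ENNReal.tsum_mul_left, ENNReal.tsum_add, tsum_discConv]
  set D := ∑' k, gevreyMod ρ (u - v) k
  calc _ ≤ (d : ℝ≥0∞) * (d * ((D * X + X * D) * X) + d * (X * X * D) + D) := by gcongr
    _ = _ := by ring

/-- The constant of the `H^{d/2}` bound on the flux. -/
def fluxConst (d : ℕ) : ℝ≥0∞ := d ^ 2 * (2 * (d ^ 2 * (2 * 2 ^ d * (2 * (2 * 2 ^ d) + 1)) + 1))

lemma fluxConst_ne_top (d : ℕ) : fluxConst d ≠ ∞ := by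
  unfold fluxConst
  finiteness

lemma sobolevSq_fluxMajorant_fluxCoeff_le (hρ : 0 ≤ ρ) (u : Freq d → ℂ) :
    sobolevSq d (fluxMajorant ρ (fluxCoeff u)) ≤
      fluxConst d * (((∑' k, gevreyMod ρ u k) ^ 4 + 1) * sobolevSq d (gevreyMod ρ u)) := by
  set w := gevreyMod ρ u
  set C : ℝ≥0∞ := 2 * 2 ^ d * (2 * (2 * 2 ^ d) + 1) with hC
  calc sobolevSq d (fluxMajorant ρ (fluxCoeff u))
      ≤ sobolevSq d (fun k => d * (d * discConv (discConv w w) w k + w k)) :=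
        sobolevSq_mono (fluxMajorant_fluxCoeff_le hρ u)
    _ ≤ d ^ 2 * (2 * (d ^ 2 * sobolevSq d (discConv (discConv w w) w) + sobolevSq d w)) := by
        rw [sobolevSq_const_mul, ← sobolevSq_const_mul d (d : ℝ≥0∞) (discConv _ _)]
        gcongr
        exact sobolevSq_add_le d _ _
    _ ≤ d ^ 2 * (2 * (d ^ 2 * (C * ((∑' k, w k) ^ 4 * sobolevSq d w)) + sobolevSq d w)) := by
        gcongr
        exact sobolevSq_discConv_discConv_le d w
    _ ≤ d ^ 2 * (2 * (d ^ 2 * (C * ((∑' k, w k) ^ 4 * sobolevSq d w)) + sobolevSq d w)) +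
          d ^ 2 * (2 * (d ^ 2 * C * sobolevSq d w + (∑' k, w k) ^ 4 * sobolevSq d w)) :=
        le_self_add
    _ = _ := by rw [fluxConst, ← hC]; ring

end CoefficientOperators

section BiharmonicSymbol

variable {d : ℕ}

/-- The symbol `ν |k|⁴` of `ν Δ²`, with the Euclidean length of `k`. -/
def biharmonicSymbol (ν : ℝ) (k : Freq d) : ℝ := ν * (∑ i, (k i : ℝ) ^ 2) ^ 2

lemma norm_sq_le_sum_sq (k : Freq d) : ‖k‖ ^ 2 ≤ ∑ i, (k i : ℝ) ^ 2 := by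
  rw [← Real.le_sqrt (norm_nonneg k) (by positivity), pi_norm_le_iff_of_nonneg (Real.sqrt_nonneg _)]
  intro i
  rw [Int.norm_eq_abs]
  exact Real.abs_le_sqrt (Finset.single_le_sum (f := fun i => (k i : ℝ) ^ 2)
    (fun i _ => sq_nonneg _) (Finset.mem_univ i))

lemma mul_norm_pow_four_le_biharmonicSymbol {ν : ℝ} (hν : 0 ≤ ν) (k : Freq d) :
    ν * ‖k‖ ^ 4 ≤ biharmonicSymbol ν k :=
  calc ν * ‖k‖ ^ 4 = ν * (‖k‖ ^ 2) ^ 2 := by ring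
    _ ≤ biharmonicSymbol ν k := by unfold biharmonicSymbol; gcongr; exact norm_sq_le_sum_sq k

end BiharmonicSymbol

/-! ### The Duhamel term -/

section Minkowski

variable {α ι : Type*} [MeasurableSpace α] {μ : Measure α} [Countable ι] {κ φ : α → ℝ≥0∞}
  {A : ℝ≥0∞}

lemma tsum_lintegral_mul_le {g : α → ι → ℝ≥0∞} (hκ : Measurable κ) (hφ : Measurable φ)
    (hg : ∀ i, AEMeasurable (fun s => g s i) μ) (hA : ∀ᵐ s ∂μ, ∑' i, g s i ≤ A * φ s) :
    ∑' i, ∫⁻ s, κ s * g s i ∂μ ≤ A * ∫⁻ s, κ s * φ s ∂μ := by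
  have hκg (i : ι) : AEMeasurable (fun s => κ s * g s i) μ := hκ.aemeasurable.mul (hg i)
  have hκφ : Measurable fun s => κ s * φ s := hκ.mul hφ
  rw [← lintegral_tsum hκg, ← lintegral_const_mul _ hκφ]
  refine lintegral_mono_ae (hA.mono fun s hs => ?_)
  rw [ENNReal.tsum_mul_left, mul_left_comm]
  gcongr

lemma sobolevSq_lintegral_mul_le {E : Type*} [NormedAddCommGroup E] [Countable E] (n : ℕ)
    {g : α → E → ℝ≥0∞} (hκ : Measurable κ) (hφ : Measurable φ)
    (hg : ∀ k, AEMeasurable (fun s => g s k) μ) (hφ₀ : ∀ᵐ s ∂μ, φ s ≠ 0) (hφ₁ : ∀ᵐ s ∂μ, φ s ≠ ∞)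
    (hA : ∀ᵐ s ∂μ, sobolevSq n (g s) ≤ A * φ s ^ 2) :
    sobolevSq n (fun k => ∫⁻ s, κ s * g s k ∂μ) ≤ A * (∫⁻ s, κ s * φ s ∂μ) ^ 2 := by
  have hw : Measurable fun s => κ s * φ s := hκ.mul hφ
  have hq (k : E) : AEMeasurable (fun s => (φ s)⁻¹ * g s k) μ := hφ.inv.aemeasurable.mul (hg k)
  have integrand (k : E) :
      AEMeasurable (fun s => bracket k ^ n * (κ s * φ s * ((φ s)⁻¹ * g s k) ^ 2)) μ :=
    (hw.aemeasurable.mul ((hq k).pow_const 2)).const_mul _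
  set K := ∫⁻ s, κ s * φ s ∂μ
  have cauchySchwarz (k : E) : (∫⁻ s, κ s * g s k ∂μ) ^ 2 ≤
      K * ∫⁻ s, κ s * φ s * ((φ s)⁻¹ * g s k) ^ 2 ∂μ := by
    have factor : ∫⁻ s, κ s * g s k ∂μ = ∫⁻ s, κ s * φ s * ((φ s)⁻¹ * g s k) ∂μ := by
      refine lintegral_congr_ae ?_
      filter_upwards [hφ₀, hφ₁] with s hs₀ hs₁
      rw [mul_assoc, ENNReal.mul_inv_cancel_left hs₀ hs₁]
    rw [factor]
    exact sq_lintegral_mul_le_lintegral_mul_lintegral_mul_sq μ hw.aemeasurable (hq k)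
  calc sobolevSq n (fun k => ∫⁻ s, κ s * g s k ∂μ)
      ≤ ∑' k, K * ∫⁻ s, bracket k ^ n * (κ s * φ s * ((φ s)⁻¹ * g s k) ^ 2) ∂μ := by
        refine ENNReal.tsum_le_tsum fun k => ?_
        rw [lintegral_const_mul' _ _ (ENNReal.pow_ne_top (bracket_ne_top k)), mul_left_comm]
        gcongr
        exact cauchySchwarz k
    _ = K * ∫⁻ s, ∑' k, bracket k ^ n * (κ s * φ s * ((φ s)⁻¹ * g s k) ^ 2) ∂μ := by
        rw [ENNReal.tsum_mul_left, lintegral_tsum integrand]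
    _ = K * ∫⁻ s, κ s * φ s * ((φ s)⁻¹ ^ 2 * sobolevSq n (g s)) ∂μ := by
        congr 2 with s
        rw [sobolevSq, ← ENNReal.tsum_mul_left, ← ENNReal.tsum_mul_left]
        exact tsum_congr fun k => by ring
    _ ≤ K * ∫⁻ s, A * (κ s * φ s) ∂μ := by
        gcongr K * ?_
        refine lintegral_mono_ae ?_
        filter_upwards [hφ₀, hφ₁, hA] with s hs₀ hs₁ hs
        calc κ s * φ s * ((φ s)⁻¹ ^ 2 * sobolevSq n (g s))
            ≤ κ s * φ s * ((φ s)⁻¹ ^ 2 * (A * φ s ^ 2)) := by gcongr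
          _ = A * (κ s * φ s) * (φ s * (φ s)⁻¹) ^ 2 := by ring
          _ = A * (κ s * φ s) := by rw [ENNReal.mul_inv_cancel hs₀ hs₁, one_pow, mul_one]
    _ = A * K ^ 2 := by rw [lintegral_const_mul _ hw]; ring

end Minkowski

section HeatKernel

variable {d : ℕ} {ν : ℝ}

lemma rpow_le_exp {y q : ℝ} (hy : 0 ≤ y) (hq : q ∈ Icc 0 1) : y ^ q ≤ Real.exp y := by
  refine le_trans ?_ (Real.add_one_le_exp y)
  rcases le_total y 1 with h | h
  · linarith [Real.rpow_le_one hy h hq.1]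
  · linarith [Real.rpow_le_self_of_one_le h hq.2]

lemma pow_mul_exp_neg_mul_pow_four_le {b x : ℝ} (hb : 0 < b) (hx : 0 ≤ x) {m : ℕ} (hm : m ≤ 4) :
    x ^ m * Real.exp (-(b * x ^ 4)) ≤ b ^ (-(m / 4) : ℝ) := by
  have hm' : (m : ℝ) ≤ 4 := by exact_mod_cast hm
  have le_exp : (b * x ^ 4) ^ (m / 4 : ℝ) ≤ Real.exp (b * x ^ 4) :=
    rpow_le_exp (by positivity) ⟨by positivity, by linarith⟩
  have rpow_eq : (b * x ^ 4) ^ (m / 4 : ℝ) = x ^ m * b ^ (m / 4 : ℝ) := by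
    rw [Real.mul_rpow hb.le (by positivity), ← Real.rpow_natCast x 4, ← Real.rpow_mul hx,
      Nat.cast_ofNat, mul_div_cancel₀ _ four_ne_zero, Real.rpow_natCast, mul_comm]
  rw [Real.exp_neg, Real.rpow_neg hb.le, ← div_eq_mul_inv, div_le_iff₀ (Real.exp_pos _),
    inv_mul_eq_div, le_div_iff₀ (by positivity), ← rpow_eq]
  exact le_exp

/-- The Fourier multiplier `e^{-ντ|k|⁴}` of the semigroup generated by `-νΔ²`. -/
def heatMultiplier (ν τ : ℝ) (k : Freq d) : ℝ := Real.exp (-(biharmonicSymbol ν k * τ))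

lemma heatMultiplier_pos (ν τ : ℝ) (k : Freq d) : 0 < heatMultiplier ν τ k := Real.exp_pos _

lemma enorm_heatMultiplier (ν τ : ℝ) (k : Freq d) :
    ‖(heatMultiplier ν τ k : ℂ)‖ₑ = ENNReal.ofReal (heatMultiplier ν τ k) := by
  rw [← ofReal_norm, Complex.norm_real, Real.norm_of_nonneg (heatMultiplier_pos ν τ k).le]

lemma heatMultiplier_le_exp {τ : ℝ} (hν : 0 ≤ ν) (hτ : 0 ≤ τ) (k : Freq d) :
    heatMultiplier ν τ k ≤ Real.exp (-(ν * τ * ‖k‖ ^ 4)) := by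
  refine Real.exp_le_exp.mpr ?_
  linarith [mul_le_mul_of_nonneg_right (mul_norm_pow_four_le_biharmonicSymbol hν k) hτ]

lemma norm_le_norm_pow_four (k : Freq d) : ‖k‖ ≤ ‖k‖ ^ 4 := by
  rcases norm_eq_zero_or_one_le_norm k with h | h
  · simp [h]
  · exact le_self_pow₀ h four_ne_zero

/-- Half of the dissipation pays for the growth of the analyticity radius from `ν/2 * s` to
`ν/2 * t`. -/
lemma exp_mul_heatMultiplier_le {t s : ℝ} (hν : 0 ≤ ν) (hst : s ≤ t) (k : Freq d) :
    Real.exp (ν / 2 * t * ‖k‖) * heatMultiplier ν (t - s) k ≤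
      Real.exp (-(ν / 2 * (t - s) * ‖k‖ ^ 4)) * Real.exp (ν / 2 * s * ‖k‖) := by
  have radius_growth : ν / 2 * (t - s) * ‖k‖ ≤ ν / 2 * (t - s) * ‖k‖ ^ 4 :=
    mul_le_mul_of_nonneg_left (norm_le_norm_pow_four k)
      (mul_nonneg (by linarith) (sub_nonneg.mpr hst))
  refine (mul_le_mul_of_nonneg_left (heatMultiplier_le_exp hν (sub_nonneg.mpr hst) k)
    (Real.exp_pos _).le).trans ?_
  rw [← Real.exp_add, ← Real.exp_add, Real.exp_le_exp]
  linarith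

/-- Bound for the Duhamel kernel between the weights `⟨k⟩ e^{ν t |k|/2}` and `e^{ν s |k|/2}`, as a
function of `τ = t - s`. -/
def gevreyKernel (ν τ : ℝ) : ℝ≥0∞ := 2 * timeWeight (-(1 / 2)) (ν / 2 * τ)

/-- Bound for the unweighted Duhamel kernel, as a function of `τ = t - s`. -/
def plainKernel (ν τ : ℝ) : ℝ≥0∞ := timeWeight (-(1 / 4)) (ν * τ)

lemma measurable_gevreyKernel_sub (ν t : ℝ) : Measurable fun s => gevreyKernel ν (t - s) :=
  ((measurable_timeWeight _).comp (by fun_prop)).const_mul _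

lemma measurable_plainKernel_sub (ν t : ℝ) : Measurable fun s => plainKernel ν (t - s) :=
  (measurable_timeWeight _).comp (by fun_prop)

lemma gevreyWeight_mul_heatMultiplier_le {t s : ℝ} (hν : 0 < ν) (hst : s < t) (k : Freq d) :
    bracket k * analyticWeight (ν / 2 * t) k * (ENNReal.ofReal (heatMultiplier ν (t - s) k) * ‖k‖ₑ)
      ≤ gevreyKernel ν (t - s) * analyticWeight (ν / 2 * s) k := by
  have hτ : 0 < t - s := sub_pos.mpr hst
  have heat_nonneg : 0 ≤ heatMultiplier ν (t - s) k := (heatMultiplier_pos ν _ k).le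
  have one_add_mul_le : (1 + ‖k‖) * ‖k‖ ≤ 2 * ‖k‖ ^ 2 := by
    rcases norm_eq_zero_or_one_le_norm k with h | h
    · simp [h]
    · nlinarith
  have heat := pow_mul_exp_neg_mul_pow_four_le (m := 2) (b := ν / 2 * (t - s))
    (mul_pos (half_pos hν) hτ) (norm_nonneg k) (by norm_num)
  have real_bound : (1 + ‖k‖) * Real.exp (ν / 2 * t * ‖k‖) * (heatMultiplier ν (t - s) k * ‖k‖) ≤
      2 * (ν / 2 * (t - s)) ^ (-(1 / 2) : ℝ) * Real.exp (ν / 2 * s * ‖k‖) :=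
    calc (1 + ‖k‖) * Real.exp (ν / 2 * t * ‖k‖) * (heatMultiplier ν (t - s) k * ‖k‖)
        = (1 + ‖k‖) * ‖k‖ * (Real.exp (ν / 2 * t * ‖k‖) * heatMultiplier ν (t - s) k) := by ring
      _ ≤ 2 * ‖k‖ ^ 2 *
            (Real.exp (-(ν / 2 * (t - s) * ‖k‖ ^ 4)) * Real.exp (ν / 2 * s * ‖k‖)) := by
          exact mul_le_mul one_add_mul_le (exp_mul_heatMultiplier_le hν.le hst.le k)
            (by positivity) (by positivity)
      _ = 2 * (‖k‖ ^ 2 * Real.exp (-(ν / 2 * (t - s) * ‖k‖ ^ 4))) * Real.exp (ν / 2 * s * ‖k‖) := by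
          ring
      _ ≤ 2 * (ν / 2 * (t - s)) ^ (-(1 / 2) : ℝ) * Real.exp (ν / 2 * s * ‖k‖) := by
          gcongr
          exact heat.trans_eq (by norm_num)
  rw [bracket_eq_ofReal, analyticWeight, analyticWeight, gevreyKernel, timeWeight, ← ofReal_norm k,
    ← ENNReal.ofReal_ofNat, ← ENNReal.ofReal_mul (by positivity), ← ENNReal.ofReal_mul heat_nonneg,
    ← ENNReal.ofReal_mul (by positivity), ← ENNReal.ofReal_mul (by positivity),
    ← ENNReal.ofReal_mul (by positivity)]
  exact ENNReal.ofReal_le_ofReal real_bound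

lemma heatMultiplier_mul_enorm_le {τ : ℝ} (hν : 0 < ν) (hτ : 0 < τ) (k : Freq d) :
    ENNReal.ofReal (heatMultiplier ν τ k) * ‖k‖ₑ ≤ plainKernel ν τ := by
  have heat := pow_mul_exp_neg_mul_pow_four_le (m := 1) (b := ν * τ) (by positivity)
    (norm_nonneg k) (by norm_num)
  rw [pow_one, Nat.cast_one] at heat
  rw [plainKernel, timeWeight, ← ofReal_norm k, ← ENNReal.ofReal_mul (heatMultiplier_pos ν τ k).le]
  refine ENNReal.ofReal_le_ofReal (le_trans ?_ heat)
  rw [mul_comm]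
  gcongr
  exact heatMultiplier_le_exp hν.le hτ.le k

end HeatKernel

section Duhamel

variable {d : ℕ} {ν : ℝ} {G : ℝ → Fin d → Freq d → ℂ} {t : ℝ}

/-- Fourier side of `∫₀ᵗ e^{-ν(t-s)Δ²} ∇·G(s) ds`. -/
def duhamel (ν : ℝ) (G : ℝ → Fin d → Freq d → ℂ) (t : ℝ) (k : Freq d) : ℂ :=
  ∫ s in (0 : ℝ)..t, (heatMultiplier ν (t - s) k : ℂ) * divCoeff (G s) k

lemma enorm_duhamel_le_lintegral (ν : ℝ) (G : ℝ → Fin d → Freq d → ℂ) (ht : 0 ≤ t) (k : Freq d) :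
    ‖duhamel ν G t k‖ₑ ≤ ∫⁻ s in Ioo 0 t,
      ENNReal.ofReal (heatMultiplier ν (t - s) k) * ‖k‖ₑ * ∑ j, ‖G s j k‖ₑ := by
  rw [duhamel, intervalIntegral.integral_of_le ht, integral_Ioc_eq_integral_Ioo]
  refine (enorm_integral_le_lintegral_enorm _).trans (lintegral_mono fun s => ?_)
  rw [enorm_mul, enorm_heatMultiplier, mul_assoc]
  gcongr
  exact enorm_divCoeff_le (G s) k

lemma gevreyMod_duhamel_le (hν : 0 < ν) (G : ℝ → Fin d → Freq d → ℂ) (ht : 0 ≤ t) (k : Freq d) :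
    gevreyMod (ν / 2 * t) (duhamel ν G t) k ≤
      ∫⁻ s in Ioo 0 t, gevreyKernel ν (t - s) * fluxMajorant (ν / 2 * s) (G s) k := by
  have weight_ne_top : bracket k * analyticWeight (ν / 2 * t) k ≠ ∞ :=
    ENNReal.mul_ne_top (bracket_ne_top k) (analyticWeight_ne_top _ k)
  calc gevreyMod (ν / 2 * t) (duhamel ν G t) k
      ≤ bracket k * analyticWeight (ν / 2 * t) k * ∫⁻ s in Ioo 0 t,
          ENNReal.ofReal (heatMultiplier ν (t - s) k) * ‖k‖ₑ * ∑ j, ‖G s j k‖ₑ := by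
        unfold gevreyMod
        gcongr
        exact enorm_duhamel_le_lintegral ν G ht k
    _ = ∫⁻ s in Ioo 0 t, bracket k * analyticWeight (ν / 2 * t) k *
          (ENNReal.ofReal (heatMultiplier ν (t - s) k) * ‖k‖ₑ * ∑ j, ‖G s j k‖ₑ) :=
        (lintegral_const_mul' _ _ weight_ne_top).symm
    _ ≤ _ := by
        refine setLIntegral_mono' measurableSet_Ioo fun s hs => ?_
        rw [fluxMajorant, ← mul_assoc, ← mul_assoc (gevreyKernel ν _)]
        exact mul_le_mul_left (gevreyWeight_mul_heatMultiplier_le hν hs.2 k) _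

lemma enorm_duhamel_le (hν : 0 < ν) (G : ℝ → Fin d → Freq d → ℂ) (ht : 0 ≤ t) (k : Freq d) :
    ‖duhamel ν G t k‖ₑ ≤
      ∫⁻ s in Ioo 0 t, plainKernel ν (t - s) * fluxMajorant (ν / 2 * s) (G s) k := by
  refine (enorm_duhamel_le_lintegral ν G ht k).trans ?_
  refine setLIntegral_mono' measurableSet_Ioo fun s ⟨hs₀, hs⟩ => ?_
  rw [fluxMajorant]
  gcongr
  · exact heatMultiplier_mul_enorm_le hν (sub_pos.mpr hs) k
  · exact le_analyticWeight_mul (by positivity) k _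

/-- The kernel integrals of the Duhamel term against the rate `s^{-3/4}` of the flux are bounded,
with constant `B`, by the rates `t^{-1/4}` and `1`. -/
structure DuhamelBound (ν : ℝ) (B : ℝ≥0∞) : Prop where
  gevrey : ∀ t : ℝ, 0 < t →
    ∫⁻ s in Ioo 0 t, gevreyKernel ν (t - s) * timeWeight (-(3 / 4)) s ≤ B * timeWeight (-(1 / 4)) t
  plain : ∀ t : ℝ, 0 < t →
    ∫⁻ s in Ioo 0 t, plainKernel ν (t - s) * timeWeight (-(3 / 4)) s ≤ B

lemma setLIntegral_timeWeight_mul_sub_mul (hν : 0 ≤ ν) (a b : ℝ) :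
    ∫⁻ s in Ioo 0 t, timeWeight a (ν * (t - s)) * timeWeight b s =
      timeWeight a ν * ∫⁻ s in Ioo 0 t, timeWeight a (t - s) * timeWeight b s := by
  rw [← lintegral_const_mul' _ _ (timeWeight_ne_top a ν)]
  refine setLIntegral_congr_fun measurableSet_Ioo fun s hs => ?_
  simp only [timeWeight_mul_arg hν (sub_nonneg.mpr hs.2.le), mul_assoc]

lemma exists_duhamelBound (hν : 0 ≤ ν) : ∃ B : ℝ≥0∞, B ≠ ∞ ∧ DuhamelBound ν B := by
  obtain ⟨C₁, hC₁, bound₁⟩ := exists_lintegral_timeWeight_sub_mul_le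
    (a := -(1 / 2)) (b := -(3 / 4)) (by norm_num) (by norm_num)
  obtain ⟨C₂, hC₂, bound₂⟩ := exists_lintegral_timeWeight_sub_mul_le
    (a := -(1 / 4)) (b := -(3 / 4)) (by norm_num) (by norm_num)
  have ne_top₁ := timeWeight_ne_top (-(1 / 2)) (ν / 2)
  have ne_top₂ := timeWeight_ne_top (-(1 / 4)) ν
  refine ⟨2 * (timeWeight (-(1 / 2)) (ν / 2) * C₁) + timeWeight (-(1 / 4)) ν * C₂,
    by finiteness, ⟨fun t ht => ?_, fun t ht => ?_⟩⟩
  · simp only [gevreyKernel, mul_assoc]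
    rw [lintegral_const_mul' _ _ ENNReal.ofNat_ne_top,
      setLIntegral_timeWeight_mul_sub_mul (by positivity), add_mul, mul_assoc, mul_assoc]
    refine le_trans ?_ le_self_add
    gcongr
    exact (bound₁ t ht).trans_eq (by norm_num)
  · simp only [plainKernel]
    rw [setLIntegral_timeWeight_mul_sub_mul hν]
    refine le_trans ?_ le_add_self
    gcongr
    exact (bound₂ t ht).trans_eq (by norm_num [timeWeight_zero])

lemma aemeasurable_fluxMajorant (hG : ∀ j k, ContinuousOn (fun s => G s j k) (Ioo 0 t))
    (k : Freq d) :
    AEMeasurable (fun s => fluxMajorant (ν / 2 * s) (G s) k) (volume.restrict (Ioo 0 t)) := by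
  have weight : Measurable fun s : ℝ => analyticWeight (ν / 2 * s) k := by
    unfold analyticWeight
    fun_prop
  refine weight.aemeasurable.mul (Finset.aemeasurable_fun_sum _ fun j _ => ?_)
  exact ((hG j k).aemeasurable measurableSet_Ioo).enorm

variable {A B : ℝ≥0∞}

lemma tsum_gevreyMod_duhamel_le (hν : 0 < ν) (hB : DuhamelBound ν B) (ht : 0 < t)
    (hG : ∀ j k, ContinuousOn (fun s => G s j k) (Ioo 0 t))
    (hA : ∀ s ∈ Ioo 0 t, ∑' k, fluxMajorant (ν / 2 * s) (G s) k ≤ A * timeWeight (-(3 / 4)) s) :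
    ∑' k, gevreyMod (ν / 2 * t) (duhamel ν G t) k ≤ A * (B * timeWeight (-(1 / 4)) t) :=
  calc ∑' k, gevreyMod (ν / 2 * t) (duhamel ν G t) k
      ≤ ∑' k, ∫⁻ s in Ioo 0 t, gevreyKernel ν (t - s) * fluxMajorant (ν / 2 * s) (G s) k :=
        ENNReal.tsum_le_tsum fun k => gevreyMod_duhamel_le hν G ht.le k
    _ ≤ A * ∫⁻ s in Ioo 0 t, gevreyKernel ν (t - s) * timeWeight (-(3 / 4)) s :=
        tsum_lintegral_mul_le (measurable_gevreyKernel_sub ν t) (measurable_timeWeight _)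
          (aemeasurable_fluxMajorant hG) (ae_restrict_of_forall_mem measurableSet_Ioo hA)
    _ ≤ A * (B * timeWeight (-(1 / 4)) t) := by gcongr; exact hB.gevrey t ht

lemma sobolevSq_lintegral_mul_fluxMajorant_le {κ : ℝ → ℝ≥0∞} (hκ : Measurable κ)
    (hG : ∀ j k, ContinuousOn (fun s => G s j k) (Ioo 0 t))
    (hA : ∀ s ∈ Ioo 0 t,
      sobolevSq d (fluxMajorant (ν / 2 * s) (G s)) ≤ A * timeWeight (-(3 / 4)) s ^ 2) :
    sobolevSq d (fun k => ∫⁻ s in Ioo 0 t, κ s * fluxMajorant (ν / 2 * s) (G s) k) ≤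
      A * (∫⁻ s in Ioo 0 t, κ s * timeWeight (-(3 / 4)) s) ^ 2 := by
  refine sobolevSq_lintegral_mul_le d hκ (measurable_timeWeight _) (aemeasurable_fluxMajorant hG)
    (ae_restrict_of_forall_mem measurableSet_Ioo fun s hs => ?_)
    (Eventually.of_forall fun s => timeWeight_ne_top _ s)
    (ae_restrict_of_forall_mem measurableSet_Ioo hA)
  exact (ENNReal.ofReal_pos.mpr (Real.rpow_pos_of_pos hs.1 _)).ne'

lemma sobolevSq_gevreyMod_duhamel_le (hν : 0 < ν) (hB : DuhamelBound ν B) (ht : 0 < t)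
    (hG : ∀ j k, ContinuousOn (fun s => G s j k) (Ioo 0 t))
    (hA : ∀ s ∈ Ioo 0 t,
      sobolevSq d (fluxMajorant (ν / 2 * s) (G s)) ≤ A * timeWeight (-(3 / 4)) s ^ 2) :
    sobolevSq d (gevreyMod (ν / 2 * t) (duhamel ν G t)) ≤
      A * (B * timeWeight (-(1 / 4)) t) ^ 2 := by
  refine (sobolevSq_mono fun k => gevreyMod_duhamel_le hν G ht.le k).trans ?_
  refine (sobolevSq_lintegral_mul_fluxMajorant_le (measurable_gevreyKernel_sub ν t) hG hA).trans ?_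
  gcongr
  exact hB.gevrey t ht

lemma sobolevSq_enorm_duhamel_le (hν : 0 < ν) (hB : DuhamelBound ν B) (ht : 0 < t)
    (hG : ∀ j k, ContinuousOn (fun s => G s j k) (Ioo 0 t))
    (hA : ∀ s ∈ Ioo 0 t,
      sobolevSq d (fluxMajorant (ν / 2 * s) (G s)) ≤ A * timeWeight (-(3 / 4)) s ^ 2) :
    sobolevSq d (fun k => ‖duhamel ν G t k‖ₑ) ≤ A * B ^ 2 := by
  refine (sobolevSq_mono fun k => enorm_duhamel_le hν G ht.le k).trans ?_
  refine (sobolevSq_lintegral_mul_fluxMajorant_le (measurable_plainKernel_sub ν t) hG hA).trans ?_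
  gcongr
  exact hB.plain t ht

end Duhamel

/-! ### Rapid decay -/

section RapidDecay

variable {E F : Type*} [NormedAddCommGroup E]

lemma bracket_le_mul (p k : E) : bracket k ≤ bracket p * bracket (k - p) :=
  calc bracket k = 1 + ‖p + (k - p)‖ₑ := by rw [add_sub_cancel, bracket]
    _ ≤ 1 + (‖p‖ₑ + ‖k - p‖ₑ) + ‖p‖ₑ * ‖k - p‖ₑ := by
        refine le_add_right ?_
        gcongr
        exact enorm_add_le p (k - p)
    _ = bracket p * bracket (k - p) := by unfold bracket; ring

/-- Decay faster than every power of `⟨k⟩`, which is what makes a Fourier series smooth. It is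
applied both to Fourier coefficients and to their `ℝ≥0∞`-valued majorants. -/
def RapidDecay [ENorm F] (c : E → F) : Prop := ∀ m : ℕ, ∑' k, bracket k ^ m * ‖c k‖ₑ ≠ ∞

lemma RapidDecay.mono {F' : Type*} [ENorm F] [ENorm F'] {c : E → F} {c' : E → F'}
    (hc' : RapidDecay c') (h : ∀ k, ‖c k‖ₑ ≤ ‖c' k‖ₑ) : RapidDecay c := fun m =>
  ne_top_of_le_ne_top (hc' m) <| ENNReal.tsum_le_tsum fun k => by gcongr; exact h k

lemma RapidDecay.tsum_enorm_ne_top [ENorm F] {c : E → F} (hc : RapidDecay c) :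
    ∑' k, ‖c k‖ₑ ≠ ∞ := by
  simpa using hc 0

lemma RapidDecay.bracket_pow_mul {b : E → ℝ≥0∞} (hb : RapidDecay b) (n : ℕ) :
    RapidDecay fun k => bracket k ^ n * b k := fun m => by
  simpa only [pow_add, mul_assoc, enorm_eq_self] using hb (m + n)

lemma RapidDecay.const_mul {b : E → ℝ≥0∞} (hb : RapidDecay b) {C : ℝ≥0∞} (hC : C ≠ ∞) :
    RapidDecay fun k => C * b k := fun m => by
  simp only [enorm_eq_self, mul_left_comm _ C, ENNReal.tsum_mul_left]
  exact ENNReal.mul_ne_top hC (hb m)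

lemma RapidDecay.add {b b' : E → ℝ≥0∞} (hb : RapidDecay b) (hb' : RapidDecay b') :
    RapidDecay fun k => b k + b' k := fun m => by
  simp only [enorm_eq_self, mul_add, ENNReal.tsum_add]
  exact ENNReal.add_ne_top.mpr ⟨hb m, hb' m⟩

lemma RapidDecay.sum {ι : Type*} {I : Finset ι} {b : ι → E → ℝ≥0∞} (hb : ∀ i, RapidDecay (b i)) :
    RapidDecay fun k => ∑ i ∈ I, b i k := fun m => by
  simp only [enorm_eq_self, Finset.mul_sum]
  rw [Summable.tsum_finsetSum fun _ _ => ENNReal.summable]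
  exact ENNReal.sum_ne_top.mpr fun i _ => hb i m

lemma RapidDecay.discConv {b b' : E → ℝ≥0∞} (hb : RapidDecay b) (hb' : RapidDecay b') :
    RapidDecay (discConv b b') := fun m => by
  have hbb' := ENNReal.mul_ne_top (hb m) (hb' m)
  rw [← tsum_discConv] at hbb'
  refine ne_top_of_le_ne_top hbb' (ENNReal.tsum_le_tsum fun k => ?_)
  simp only [enorm_eq_self, _root_.discConv]
  rw [← ENNReal.tsum_mul_left]
  refine ENNReal.tsum_le_tsum fun p => ?_
  calc bracket k ^ m * (b p * b' (k - p))
      ≤ (bracket p * bracket (k - p)) ^ m * (b p * b' (k - p)) := by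
        gcongr; exact bracket_le_mul p k
    _ = _ := by ring

lemma one_add_pow_mul_exp_neg_le {ε x : ℝ} (hε : 0 < ε) (hx : 0 ≤ x) (n : ℕ) :
    (1 + x) ^ n * Real.exp (-ε * x) ≤ n.factorial * Real.exp ε / ε ^ n := by
  have taylor := Real.pow_div_factorial_le_exp (ε * (1 + x)) (by positivity) n
  rw [div_le_iff₀ (by positivity), mul_pow, mul_one_add, Real.exp_add] at taylor
  rw [neg_mul, Real.exp_neg, ← div_eq_mul_inv, div_le_div_iff₀ (by positivity) (by positivity)]
  linarith

lemma rapidDecay_analyticWeight_neg {d : ℕ} (hd : 1 ≤ d) {ε : ℝ} (hε : 0 < ε) :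
    RapidDecay (analyticWeight (-ε) : Freq d → ℝ≥0∞) := fun m => by
  set C : ℝ≥0∞ := ENNReal.ofReal ((m + (d + 1)).factorial * Real.exp ε / ε ^ (m + (d + 1)))
  have majorant : ∑' k : Freq d, C * (bracket k ^ (d + 1))⁻¹ ≠ ∞ := by
    rw [ENNReal.tsum_mul_left]
    exact ENNReal.mul_ne_top ENNReal.ofReal_ne_top (tsum_inv_bracket_pow_ne_top hd)
  refine ne_top_of_le_ne_top majorant (ENNReal.tsum_le_tsum fun k => ?_)
  rw [enorm_eq_self, ← div_eq_mul_inv, ENNReal.le_div_iff_mul_le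
    (.inl (pow_ne_zero _ (bracket_ne_zero k))) (.inl (ENNReal.pow_ne_top (bracket_ne_top k)))]
  calc bracket k ^ m * analyticWeight (-ε) k * bracket k ^ (d + 1)
      = bracket k ^ (m + (d + 1)) * analyticWeight (-ε) k := by ring
    _ ≤ C := by
        rw [bracket_eq_ofReal, analyticWeight, ← ENNReal.ofReal_pow (by positivity),
          ← ENNReal.ofReal_mul (by positivity)]
        exact ENNReal.ofReal_le_ofReal (one_add_pow_mul_exp_neg_le hε (norm_nonneg k) _)

lemma enorm_discConv_le (c c' : E → ℂ) (k : E) :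
    ‖discConv c c' k‖ₑ ≤ discConv (‖c ·‖ₑ) (‖c' ·‖ₑ) k :=
  enorm_tsum_le_tsum_enorm.trans_eq (tsum_congr fun _ => enorm_mul _ _)

lemma enorm_fourierDeriv_le_bracket_mul {d : ℕ} (j : Fin d) (c : Freq d → ℂ) (k : Freq d) :
    ‖fourierDeriv j c k‖ₑ ≤ bracket k ^ 1 * ‖c k‖ₑ := by
  rw [pow_one]
  exact (enorm_fourierDeriv_le j c k).trans (mul_le_mul_left le_add_self _)

end RapidDecay

section LocUniformRapidDecay

variable {d : ℕ} {T : ℝ} {v w : ℝ → Freq d → ℂ}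

/-- Time-dependent Fourier coefficients on `(0, T)` that are continuous in time and rapidly
decaying, uniformly in time away from `0`. -/
structure LocUniformRapidDecay (T : ℝ) (v : ℝ → Freq d → ℂ) : Prop where
  continuousOn : ∀ k, ContinuousOn (fun s => v s k) (Ioo 0 T)
  exists_majorant : ∀ s₀ > 0, ∃ b : Freq d → ℝ≥0∞, RapidDecay b ∧
    ∀ s ∈ Ioo s₀ T, ∀ k, ‖v s k‖ₑ ≤ b k

namespace LocUniformRapidDecay

lemma mul_left (hv : LocUniformRapidDecay T v) {q : Freq d → ℂ} {C : ℝ≥0∞} (hC : C ≠ ∞) {m : ℕ}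
    (hq : ∀ k, ‖q k‖ₑ ≤ C * bracket k ^ m) : LocUniformRapidDecay T fun s k => q k * v s k where
  continuousOn k := continuousOn_const.mul (hv.continuousOn k)
  exists_majorant s₀ hs₀ := by
    obtain ⟨b, hb, le_b⟩ := hv.exists_majorant s₀ hs₀
    refine ⟨_, (hb.bracket_pow_mul m).const_mul hC, fun s hs k => ?_⟩
    rw [enorm_mul, ← mul_assoc]
    exact mul_le_mul' (hq k) (le_b s hs k)

lemma fourierDeriv (hv : LocUniformRapidDecay T v) (j : Fin d) :
    LocUniformRapidDecay T fun s => fourierDeriv j (v s) := by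
  refine hv.mul_left (q := fun k => Complex.I * k j) (m := 1) ENNReal.one_ne_top fun k => ?_
  simpa [_root_.fourierDeriv] using enorm_fourierDeriv_le_bracket_mul j (fun _ => 1) k

lemma sub (hv : LocUniformRapidDecay T v) (hw : LocUniformRapidDecay T w) :
    LocUniformRapidDecay T fun s => v s - w s where
  continuousOn k := (hv.continuousOn k).sub (hw.continuousOn k)
  exists_majorant s₀ hs₀ := by
    obtain ⟨b, hb, le_b⟩ := hv.exists_majorant s₀ hs₀
    obtain ⟨b', hb', le_b'⟩ := hw.exists_majorant s₀ hs₀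
    exact ⟨_, hb.add hb', fun s hs k =>
      enorm_sub_le.trans (add_le_add (le_b s hs k) (le_b' s hs k))⟩

lemma sum {ι : Type*} {I : Finset ι} {v : ι → ℝ → Freq d → ℂ}
    (hv : ∀ i, LocUniformRapidDecay T (v i)) :
    LocUniformRapidDecay T fun s k => ∑ i ∈ I, v i s k where
  continuousOn k := continuousOn_finsetSum _ fun i _ => (hv i).continuousOn k
  exists_majorant s₀ hs₀ := by
    choose b hb le_b using fun i => (hv i).exists_majorant s₀ hs₀
    exact ⟨_, RapidDecay.sum hb, fun s hs k =>
      (enorm_sum_le _ _).trans (Finset.sum_le_sum fun i _ => le_b i s hs k)⟩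

lemma continuousOn_discConv (hv : LocUniformRapidDecay T v) (hw : LocUniformRapidDecay T w)
    (k : Freq d) : ContinuousOn (fun s => discConv (v s) (w s) k) (Ioo 0 T) := by
  intro s hs
  have hs₀ : 0 < s / 2 := half_pos hs.1
  obtain ⟨b, hb, le_b⟩ := hv.exists_majorant (s / 2) hs₀
  obtain ⟨b', hb', le_b'⟩ := hw.exists_majorant (s / 2) hs₀
  have majorant_ne_top : ∑' p, b p * b' (k - p) ≠ ∞ :=
    ne_top_of_le_ne_top (ENNReal.mul_ne_top hb.tsum_enorm_ne_top hb'.tsum_enorm_ne_top)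
      (discConv_le_tsum_mul_tsum b b' k)
  have hsub : Ioo (s / 2) T ⊆ Ioo 0 T := Ioo_subset_Ioo_left hs₀.le
  have continuousOn_away : ContinuousOn (fun s => discConv (v s) (w s) k) (Ioo (s / 2) T) := by
    refine continuousOn_tsum (u := fun p => (b p * b' (k - p)).toReal)
      (fun p => ((hv.continuousOn p).mul (hw.continuousOn (k - p))).mono hsub)
      (ENNReal.summable_toReal majorant_ne_top) fun p x hx => ?_
    rw [← toReal_enorm, enorm_mul]
    exact ENNReal.toReal_mono (ENNReal.ne_top_of_tsum_ne_top majorant_ne_top p)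
      (mul_le_mul' (le_b x hx p) (le_b' x hx _))
  exact (continuousOn_away.continuousAt
    (Ioo_mem_nhds (half_lt_self hs.1) hs.2)).continuousWithinAt

lemma discConv (hv : LocUniformRapidDecay T v) (hw : LocUniformRapidDecay T w) :
    LocUniformRapidDecay T fun s => discConv (v s) (w s) where
  continuousOn := hv.continuousOn_discConv hw
  exists_majorant s₀ hs₀ := by
    obtain ⟨b, hb, le_b⟩ := hv.exists_majorant s₀ hs₀
    obtain ⟨b', hb', le_b'⟩ := hw.exists_majorant s₀ hs₀
    exact ⟨_, hb.discConv hb', fun s hs k =>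
      (enorm_discConv_le _ _ k).trans (discConv_mono (le_b s hs) (le_b' s hs) k)⟩

lemma fluxCoeff (hv : LocUniformRapidDecay T v) (j : Fin d) :
    LocUniformRapidDecay T fun s => fluxCoeff (v s) j :=
  have gradSq : LocUniformRapidDecay T fun s => gradSqCoeff (v s) :=
    sum fun l => (hv.fourierDeriv l).discConv (hv.fourierDeriv l)
  (gradSq.discConv (hv.fourierDeriv j)).sub (hv.fourierDeriv j)

lemma divCoeff {F : ℝ → Fin d → Freq d → ℂ} (hF : ∀ j, LocUniformRapidDecay T fun s => F s j) :
    LocUniformRapidDecay T fun s => divCoeff (F s) :=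
  sum fun j => (hF j).fourierDeriv j

lemma rapidDecay (hv : LocUniformRapidDecay T v) {t : ℝ} (ht : t ∈ Ioo 0 T) : RapidDecay (v t) := by
  obtain ⟨b, hb, le_b⟩ := hv.exists_majorant (t / 2) (half_pos ht.1)
  exact hb.mono fun k => le_b t ⟨half_lt_self ht.1, ht.2⟩ k

end LocUniformRapidDecay

end LocUniformRapidDecay

section FluxRates

variable {d : ℕ} {ρ s t : ℝ} {R : ℝ≥0∞} {u v : Freq d → ℂ}

lemma timeWeight_neg_quarter_pow_three (hs : 0 < s) :
    timeWeight (-(1 / 4)) s ^ 3 = timeWeight (-(3 / 4)) s := by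
  rw [timeWeight_pow hs]
  norm_num

lemma timeWeight_half_mul_timeWeight_neg_quarter_sq (hs : 0 < s) :
    timeWeight (1 / 2) s * timeWeight (-(1 / 4)) s ^ 2 = 1 := by
  rw [timeWeight_pow hs, timeWeight_mul hs]
  norm_num [timeWeight_zero]

lemma tsum_fluxMajorant_fluxCoeff_le_timeWeight (hρ : 0 ≤ ρ) (hs : 0 < s) (hst : s ≤ t)
    (hu : ∑' k, gevreyMod ρ u k ≤ R * timeWeight (-(1 / 4)) s) :
    ∑' k, fluxMajorant ρ (fluxCoeff u) k ≤
      d * (d * R ^ 2 + timeWeight (1 / 2) t) * R * timeWeight (-(3 / 4)) s := by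
  have linear := timeWeight_half_mul_timeWeight_neg_quarter_sq hs
  rw [← timeWeight_neg_quarter_pow_three hs]
  set x := timeWeight (-(1 / 4)) s
  calc ∑' k, fluxMajorant ρ (fluxCoeff u) k
      ≤ d * (d * (R * x) ^ 3 + timeWeight (1 / 2) s * x ^ 2 * (R * x)) := by
        rw [linear, one_mul]
        refine (tsum_fluxMajorant_fluxCoeff_le hρ u).trans ?_
        gcongr
    _ = d * (d * R ^ 2 + timeWeight (1 / 2) s) * R * x ^ 3 := by ring
    _ ≤ d * (d * R ^ 2 + timeWeight (1 / 2) t) * R * x ^ 3 := by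
        gcongr
        exact timeWeight_mono hs.le hst (by norm_num)

lemma sobolevSq_fluxMajorant_fluxCoeff_le_timeWeight (hρ : 0 ≤ ρ) (hs : 0 < s) (hst : s ≤ t)
    {M : ℝ≥0∞} (hu : ∑' k, gevreyMod ρ u k ≤ R * timeWeight (-(1 / 4)) s)
    (hM : sobolevSq d (gevreyMod ρ u) ≤ M * timeWeight (-(1 / 4)) s ^ 2) :
    sobolevSq d (fluxMajorant ρ (fluxCoeff u)) ≤
      fluxConst d * (R ^ 4 + timeWeight (1 / 2) t ^ 2) * M * timeWeight (-(3 / 4)) s ^ 2 := by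
  have linear := timeWeight_half_mul_timeWeight_neg_quarter_sq hs
  rw [← timeWeight_neg_quarter_pow_three hs]
  set x := timeWeight (-(1 / 4)) s
  calc sobolevSq d (fluxMajorant ρ (fluxCoeff u))
      ≤ fluxConst d * (((R * x) ^ 4 + (timeWeight (1 / 2) s * x ^ 2) ^ 2) * (M * x ^ 2)) := by
        rw [linear, one_pow]
        refine (sobolevSq_fluxMajorant_fluxCoeff_le hρ u).trans ?_
        gcongr
    _ = fluxConst d * (R ^ 4 + timeWeight (1 / 2) s ^ 2) * M * (x ^ 3) ^ 2 := by ring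
    _ ≤ fluxConst d * (R ^ 4 + timeWeight (1 / 2) t ^ 2) * M * (x ^ 3) ^ 2 := by
        gcongr
        exact timeWeight_mono hs.le hst (by norm_num)

lemma tsum_fluxMajorant_fluxCoeff_sub_le_timeWeight (hρ : 0 ≤ ρ) (hs : 0 < s) (hst : s ≤ t)
    (hR : R ≠ ∞) {ε : ℝ≥0∞} (hu : ∑' k, gevreyMod ρ u k ≤ R * timeWeight (-(1 / 4)) s)
    (hv : ∑' k, gevreyMod ρ v k ≤ R * timeWeight (-(1 / 4)) s)
    (huv : ∑' k, gevreyMod ρ (u - v) k ≤ ε * timeWeight (-(1 / 4)) s) :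
    ∑' k, fluxMajorant ρ (fluxCoeff u - fluxCoeff v) k ≤
      d * (3 * d * R ^ 2 + timeWeight (1 / 2) t) * ε * timeWeight (-(3 / 4)) s := by
  have linear := timeWeight_half_mul_timeWeight_neg_quarter_sq hs
  have radius_ne_top := ENNReal.mul_ne_top hR (timeWeight_ne_top (-(1 / 4)) s)
  rw [← timeWeight_neg_quarter_pow_three hs]
  set x := timeWeight (-(1 / 4)) s
  calc ∑' k, fluxMajorant ρ (fluxCoeff u - fluxCoeff v) k
      ≤ d * ((3 * d * (R * x) ^ 2 + timeWeight (1 / 2) s * x ^ 2) * (ε * x)) := by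
        rw [linear]
        refine (tsum_fluxMajorant_fluxCoeff_sub_le hρ radius_ne_top hu hv).trans ?_
        gcongr
    _ = d * (3 * d * R ^ 2 + timeWeight (1 / 2) s) * ε * x ^ 3 := by ring
    _ ≤ d * (3 * d * R ^ 2 + timeWeight (1 / 2) t) * ε * x ^ 3 := by
        gcongr
        exact timeWeight_mono hs.le hst (by norm_num)

end FluxRates

section MildMap

variable {d : ℕ} {ν t : ℝ} {G H : ℝ → Fin d → Freq d → ℂ} {k : Freq d}

lemma continuousOn_divCoeff {s : Set ℝ} (hG : ∀ j k, ContinuousOn (fun s => G s j k) s)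
    (k : Freq d) : ContinuousOn (fun s => divCoeff (G s) k) s :=
  continuousOn_finsetSum _ fun j _ => continuousOn_const.mul (hG j k)

lemma intervalIntegrable_divCoeff (hν : 0 ≤ ν) (ht : 0 < t)
    (hG : ∀ j k, ContinuousOn (fun s => G s j k) (Ioo 0 t)) {A : ℝ≥0∞} (hA_ne_top : A ≠ ∞)
    (hA : ∀ s ∈ Ioo 0 t, ∑' k, fluxMajorant (ν / 2 * s) (G s) k ≤ A * timeWeight (-(3 / 4)) s)
    (k : Freq d) : IntervalIntegrable (fun s => divCoeff (G s) k) volume 0 t := by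
  rw [intervalIntegrable_iff_integrableOn_Ioo_of_le ht.le]
  refine ⟨(continuousOn_divCoeff hG k).aestronglyMeasurable measurableSet_Ioo, ?_⟩
  have bound (s : ℝ) (hs : s ∈ Ioo 0 t) :
      ‖divCoeff (G s) k‖ₑ ≤ ‖k‖ₑ * A * timeWeight (-(3 / 4)) s := by
    have hs₀ := hs.1
    calc ‖divCoeff (G s) k‖ₑ ≤ ‖k‖ₑ * ∑ j, ‖G s j k‖ₑ := enorm_divCoeff_le _ k
      _ ≤ ‖k‖ₑ * fluxMajorant (ν / 2 * s) (G s) k := by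
          gcongr
          exact le_analyticWeight_mul (by positivity) k _
      _ ≤ ‖k‖ₑ * (A * timeWeight (-(3 / 4)) s) := by
          gcongr
          exact (ENNReal.le_tsum k).trans (hA s hs)
      _ = _ := (mul_assoc _ _ _).symm
  refine (setLIntegral_mono' measurableSet_Ioo bound).trans_lt ?_
  rw [lintegral_const_mul' _ _ (by finiteness), lintegral_timeWeight ht (by norm_num)]
  exact (by finiteness [timeWeight_ne_top (-(3 / 4) + 1) t] : _ ≠ ∞).lt_top

lemma continuous_heatMultiplier (ν : ℝ) (k : Freq d) :
    Continuous fun τ => (heatMultiplier ν τ k : ℂ) := by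
  unfold heatMultiplier
  fun_prop

lemma duhamel_sub (hG : IntervalIntegrable (fun s => divCoeff (G s) k) volume 0 t)
    (hH : IntervalIntegrable (fun s => divCoeff (H s) k) volume 0 t) :
    duhamel ν G t k - duhamel ν H t k = duhamel ν (fun s => G s - H s) t k := by
  have kernel : Continuous fun s => (heatMultiplier ν (t - s) k : ℂ) :=
    (continuous_heatMultiplier ν k).comp (by fun_prop)
  unfold duhamel
  rw [← intervalIntegral.integral_sub (hG.continuousOn_mul kernel.continuousOn)
    (hH.continuousOn_mul kernel.continuousOn)]
  refine intervalIntegral.integral_congr fun s _ => ?_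
  simp only [divCoeff, Pi.sub_apply, fourierDeriv_sub, Finset.sum_sub_distrib, mul_sub]

lemma heatMultiplier_sub_eq_mul (ν t s : ℝ) (k : Freq d) :
    heatMultiplier ν (t - s) k = heatMultiplier ν t k * heatMultiplier ν (-s) k := by
  rw [heatMultiplier, heatMultiplier, heatMultiplier, ← Real.exp_add]
  ring_nf

lemma hasDerivAt_heatMultiplier (ν t : ℝ) (k : Freq d) :
    HasDerivAt (fun t => (heatMultiplier ν t k : ℂ))
      (-biharmonicSymbol ν k * heatMultiplier ν t k) t := by
  have exponent : HasDerivAt (fun t => -(biharmonicSymbol ν k * t)) (-biharmonicSymbol ν k) t := by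
    simpa using ((hasDerivAt_id t).const_mul (biharmonicSymbol ν k)).fun_neg
  exact exponent.exp.ofReal_comp.congr_deriv (by rw [heatMultiplier]; push_cast; ring)

lemma duhamel_eq_heatMultiplier_mul (ν : ℝ) (G : ℝ → Fin d → Freq d → ℂ) (t : ℝ) (k : Freq d) :
    duhamel ν G t k = heatMultiplier ν t k *
      ∫ s in (0 : ℝ)..t, (heatMultiplier ν (-s) k : ℂ) * divCoeff (G s) k := by
  simp only [duhamel, heatMultiplier_sub_eq_mul ν t, Complex.ofReal_mul, mul_assoc,
    intervalIntegral.integral_const_mul]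

lemma hasDerivAt_duhamel {T : ℝ} (hG : ∀ j k, ContinuousOn (fun s => G s j k) (Ioo 0 T))
    (ht : t ∈ Ioo 0 T) (hint : IntervalIntegrable (fun s => divCoeff (G s) k) volume 0 t) :
    HasDerivAt (fun t => duhamel ν G t k)
      (-biharmonicSymbol ν k * duhamel ν G t k + divCoeff (G t) k) t := by
  have kernel : Continuous fun s => (heatMultiplier ν (-s) k : ℂ) :=
    (continuous_heatMultiplier ν k).comp continuous_neg
  have integrand : ContinuousOn (fun s => (heatMultiplier ν (-s) k : ℂ) * divCoeff (G s) k)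
    (Ioo 0 T) := kernel.continuousOn.mul (continuousOn_divCoeff hG k)
  have primitive := intervalIntegral.integral_hasDerivAt_right
    (hint.continuousOn_mul kernel.continuousOn)
    (integrand.stronglyMeasurableAtFilter isOpen_Ioo t ht)
    (integrand.continuousAt (isOpen_Ioo.mem_nhds ht))
  have multiplier_mul_neg : (heatMultiplier ν t k : ℂ) * heatMultiplier ν (-t) k = 1 := by
    rw [← Complex.ofReal_mul, ← heatMultiplier_sub_eq_mul]
    simp [heatMultiplier]
  simp only [duhamel_eq_heatMultiplier_mul]
  refine ((hasDerivAt_heatMultiplier ν t k).mul primitive).congr_deriv ?_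
  linear_combination divCoeff (G t) k * multiplier_mul_neg

/-- Fourier side of `e^{-νtΔ²} a`. -/
def heatFlow (ν : ℝ) (a : Freq d → ℂ) (t : ℝ) (k : Freq d) : ℂ := heatMultiplier ν t k * a k

/-- The map whose fixed points are the mild solutions with initial coefficients `a`. -/
def mildMap (ν : ℝ) (a : Freq d → ℂ) (u : ℝ → Freq d → ℂ) (t : ℝ) : Freq d → ℂ :=
  heatFlow ν a t + duhamel ν (fun s => fluxCoeff (u s)) t

lemma mildMap_sub_mildMap (ν : ℝ) (a : Freq d → ℂ) {u v : ℝ → Freq d → ℂ}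
    (hu : ∀ k, IntervalIntegrable (fun s => divCoeff (fluxCoeff (u s)) k) volume 0 t)
    (hv : ∀ k, IntervalIntegrable (fun s => divCoeff (fluxCoeff (v s)) k) volume 0 t) :
    mildMap ν a u t - mildMap ν a v t =
      duhamel ν (fun s => fluxCoeff (u s) - fluxCoeff (v s)) t := by
  ext k
  simp only [mildMap, Pi.sub_apply, Pi.add_apply, add_sub_add_left_eq_sub,
    duhamel_sub (hu k) (hv k)]

end MildMap

/-! ### The contraction argument -/

section GevreyMod

variable {d : ℕ} {ρ : ℝ}

lemma enorm_le_gevreyMod (hρ : 0 ≤ ρ) (v : Freq d → ℂ) (k : Freq d) : ‖v k‖ₑ ≤ gevreyMod ρ v k :=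
  le_mul_of_one_le_left' (one_le_mul (one_le_bracket k) (one_le_analyticWeight hρ k))

lemma gevreyMod_add_le (ρ : ℝ) (v w : Freq d → ℂ) (k : Freq d) :
    gevreyMod ρ (v + w) k ≤ gevreyMod ρ v k + gevreyMod ρ w k := by
  simp only [gevreyMod, ← mul_add]
  gcongr
  exact enorm_add_le _ _

lemma tendsto_gevreyMod {ι : Type*} {l : Filter ι} {f : ι → Freq d → ℂ} {v : Freq d → ℂ} (ρ : ℝ)
    (k : Freq d) (hf : Tendsto (fun i => f i k) l (nhds (v k))) :
    Tendsto (fun i => gevreyMod ρ (f i) k) l (nhds (gevreyMod ρ v k)) :=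
  ENNReal.Tendsto.const_mul hf.enorm
    (Or.inr (ENNReal.mul_ne_top (bracket_ne_top k) (analyticWeight_ne_top ρ k)))

lemma enorm_le_analyticWeight_neg_mul_gevreyMod {σ : ℝ} (hσρ : σ ≤ ρ) (v : Freq d → ℂ)
    (k : Freq d) : ‖v k‖ₑ ≤ analyticWeight (-σ) k * gevreyMod ρ v k := by
  have one_le : 1 ≤ analyticWeight (-σ) k * analyticWeight ρ k := by
    rw [analyticWeight, analyticWeight, ← ENNReal.ofReal_mul (by positivity), ← Real.exp_add,
      ENNReal.one_le_ofReal, Real.one_le_exp_iff, ← add_mul]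
    exact mul_nonneg (by linarith) (norm_nonneg k)
  calc ‖v k‖ₑ ≤ bracket k * (analyticWeight (-σ) k * analyticWeight ρ k) * ‖v k‖ₑ :=
        le_mul_of_one_le_left' (one_le_mul (one_le_bracket k) one_le)
    _ = analyticWeight (-σ) k * gevreyMod ρ v k := by rw [gevreyMod]; ring

end GevreyMod

lemma tsum_le_of_tendsto_of_tsum_le {ι : Type*} {f : ℕ → ι → ℝ≥0∞} {g : ι → ℝ≥0∞} {C : ℝ≥0∞}
    (hf : ∀ i, Tendsto (fun n => f n i) atTop (nhds (g i))) (hC : ∀ n, ∑' i, f n i ≤ C) :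
    ∑' i, g i ≤ C := by
  rw [ENNReal.tsum_eq_iSup_sum]
  refine iSup_le fun I => ?_
  exact le_of_tendsto' (tendsto_finsetSum I fun i _ => hf i) fun n =>
    (ENNReal.sum_le_tsum I).trans (hC n)

lemma tendsto_two_inv_pow_mul {C : ℝ≥0∞} (hC : C ≠ ∞) :
    Tendsto (fun n : ℕ => 2⁻¹ ^ n * C) atTop (nhds 0) := by
  simpa using ENNReal.Tendsto.mul_const
    (ENNReal.tendsto_pow_atTop_nhds_zero_of_lt_one (r := 2⁻¹) (by norm_num)) (Or.inr hC)

/-- Membership in the ball of Kato's scale-invariant norm: the weighted `ℓ¹` norm of `u s` grows at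
most like `r s * s^{-1/4}` and its weighted squared Sobolev norm at most like `M * s^{-1/2}`, while
the radius of analyticity `ν s / 2` grows with time. -/
structure InKatoBall {d : ℕ} (ν T : ℝ) (M : ℝ≥0∞) (r : ℝ → ℝ≥0∞) (u : ℝ → Freq d → ℂ) :
    Prop where
  continuousOn : ∀ k, ContinuousOn (fun s => u s k) (Ioo 0 T)
  tsum_le : ∀ s ∈ Ioo 0 T,
    ∑' k, gevreyMod (ν / 2 * s) (u s) k ≤ r s * timeWeight (-(1 / 4)) s
  sobolevSq_le : ∀ s ∈ Ioo 0 T,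
    sobolevSq d (gevreyMod (ν / 2 * s) (u s)) ≤ M * timeWeight (-(1 / 4)) s ^ 2

/-- The smallness conditions under which `mildMap ν a` maps the Kato ball with constants `4 * M₀`
and `r` to itself and is a contraction with factor `1 / 2` there. -/
structure ContractionData {d : ℕ} (ν T : ℝ) (M₀ B : ℝ≥0∞) (r : ℝ → ℝ≥0∞) (a : Freq d → ℂ) :
    Prop where
  one_le_dim : 1 ≤ d
  viscosity_pos : 0 < ν
  radius_mono : Monotone r
  radius_ne_top : r T ≠ ∞
  duhamelBound : DuhamelBound ν B
  heatFlow_tsum_le : ∀ t ∈ Ioo 0 T,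
    ∑' k, gevreyMod (ν / 2 * t) (heatFlow ν a t) k ≤ 2⁻¹ * r t * timeWeight (-(1 / 4)) t
  heatFlow_sobolevSq_le : ∀ t ∈ Ioo 0 T,
    sobolevSq d (gevreyMod (ν / 2 * t) (heatFlow ν a t)) ≤ M₀ * timeWeight (-(1 / 4)) t ^ 2
  tsum_factor_le : B * (d * (3 * d * r T ^ 2 + timeWeight (1 / 2) T)) ≤ 2⁻¹
  sobolevSq_factor_le : 2 * (fluxConst d * (r T ^ 4 + timeWeight (1 / 2) T ^ 2)) * B ^ 2 ≤ 2⁻¹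

namespace InKatoBall

variable {d : ℕ} {ν T : ℝ} {M : ℝ≥0∞} {r : ℝ → ℝ≥0∞} {u v : ℝ → Freq d → ℂ}

lemma tsum_le_of_le (hu : InKatoBall ν T M r u) (hr : Monotone r) {s t : ℝ} (hs : s ∈ Ioo 0 T)
    (hst : s ≤ t) : ∑' k, gevreyMod (ν / 2 * s) (u s) k ≤ r t * timeWeight (-(1 / 4)) s :=
  (hu.tsum_le s hs).trans (by gcongr; exact hr hst)

lemma locUniformRapidDecay (hu : InKatoBall ν T M r u) (hd : 1 ≤ d) (hν : 0 < ν)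
    (hr : Monotone r) (hrT : r T ≠ ∞) : LocUniformRapidDecay T u where
  continuousOn := hu.continuousOn
  exists_majorant s₀ hs₀ := by
    refine ⟨_, (rapidDecay_analyticWeight_neg hd (ε := ν / 2 * s₀) (by positivity)).const_mul
      (ENNReal.mul_ne_top hrT (timeWeight_ne_top (-(1 / 4)) s₀)), fun s hs k => ?_⟩
    have hs' : s ∈ Ioo 0 T := ⟨hs₀.trans hs.1, hs.2⟩
    have gevrey_le : gevreyMod (ν / 2 * s) (u s) k ≤ r T * timeWeight (-(1 / 4)) s₀ :=
      calc gevreyMod (ν / 2 * s) (u s) k ≤ r T * timeWeight (-(1 / 4)) s :=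
            (ENNReal.le_tsum k).trans (hu.tsum_le_of_le hr hs' hs.2.le)
        _ ≤ r T * timeWeight (-(1 / 4)) s₀ := by
            gcongr
            exact timeWeight_anti hs₀ hs.1.le (by norm_num)
    calc ‖u s k‖ₑ ≤ analyticWeight (-(ν / 2 * s₀)) k * gevreyMod (ν / 2 * s) (u s) k :=
          enorm_le_analyticWeight_neg_mul_gevreyMod (by gcongr; exact hs.1.le) _ k
      _ ≤ analyticWeight (-(ν / 2 * s₀)) k * (r T * timeWeight (-(1 / 4)) s₀) := by gcongr
      _ = _ := mul_comm _ _

lemma tsum_fluxMajorant_le (hu : InKatoBall ν T M r u) (hν : 0 < ν) (hr : Monotone r) {s t : ℝ}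
    (hs : s ∈ Ioo 0 t) (ht : t < T) : ∑' k, fluxMajorant (ν / 2 * s) (fluxCoeff (u s)) k ≤
      d * (d * r t ^ 2 + timeWeight (1 / 2) t) * r t * timeWeight (-(3 / 4)) s := by
  have hs₀ := hs.1
  exact tsum_fluxMajorant_fluxCoeff_le_timeWeight (by positivity) hs₀ hs.2.le
    (hu.tsum_le_of_le hr ⟨hs₀, hs.2.trans ht⟩ hs.2.le)

lemma sobolevSq_fluxMajorant_le (hu : InKatoBall ν T M r u) (hν : 0 < ν) (hr : Monotone r)
    {s t : ℝ} (hs : s ∈ Ioo 0 t) (ht : t < T) :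
    sobolevSq d (fluxMajorant (ν / 2 * s) (fluxCoeff (u s))) ≤
      fluxConst d * (r t ^ 4 + timeWeight (1 / 2) t ^ 2) * M * timeWeight (-(3 / 4)) s ^ 2 := by
  have hs₀ := hs.1
  have hsT : s ∈ Ioo 0 T := ⟨hs₀, hs.2.trans ht⟩
  exact sobolevSq_fluxMajorant_fluxCoeff_le_timeWeight (by positivity) hs₀ hs.2.le
    (hu.tsum_le_of_le hr hsT hs.2.le) (hu.sobolevSq_le s hsT)

end InKatoBall

namespace ContractionData

variable {d : ℕ} {ν T t : ℝ} {M₀ B : ℝ≥0∞} {r : ℝ → ℝ≥0∞} {a : Freq d → ℂ}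
  {u v : ℝ → Freq d → ℂ}

lemma continuousOn_fluxCoeff (P : ContractionData ν T M₀ B r a)
    (hu : InKatoBall ν T (4 * M₀) r u) (j : Fin d) (k : Freq d) :
    ContinuousOn (fun s => fluxCoeff (u s) j k) (Ioo 0 T) :=
  ((hu.locUniformRapidDecay P.one_le_dim P.viscosity_pos P.radius_mono
    P.radius_ne_top).fluxCoeff j).continuousOn k

lemma continuousOn_fluxCoeff_of_lt (P : ContractionData ν T M₀ B r a)
    (hu : InKatoBall ν T (4 * M₀) r u) (ht : t < T) (j : Fin d) (k : Freq d) :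
    ContinuousOn (fun s => fluxCoeff (u s) j k) (Ioo 0 t) :=
  (P.continuousOn_fluxCoeff hu j k).mono (Ioo_subset_Ioo_right ht.le)

lemma intervalIntegrable_divCoeff_fluxCoeff (P : ContractionData ν T M₀ B r a)
    (hu : InKatoBall ν T (4 * M₀) r u) (ht : t ∈ Ioo 0 T) (k : Freq d) :
    IntervalIntegrable (fun s => divCoeff (fluxCoeff (u s)) k) volume 0 t := by
  have radius_ne_top : r t ≠ ∞ := ne_top_of_le_ne_top P.radius_ne_top (P.radius_mono ht.2.le)
  have weight_ne_top := timeWeight_ne_top (1 / 2) t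
  exact intervalIntegrable_divCoeff P.viscosity_pos.le ht.1 (P.continuousOn_fluxCoeff_of_lt hu ht.2)
    (by finiteness) (fun s hs => hu.tsum_fluxMajorant_le P.viscosity_pos P.radius_mono hs ht.2) k

lemma hasDerivAt_mildMap (P : ContractionData ν T M₀ B r a)
    (hu : InKatoBall ν T (4 * M₀) r u) (ht : t ∈ Ioo 0 T) (k : Freq d) :
    HasDerivAt (fun t => mildMap ν a u t k)
      (-biharmonicSymbol ν k * mildMap ν a u t k + divCoeff (fluxCoeff (u t)) k) t := by
  have heat := (hasDerivAt_heatMultiplier ν t k).mul_const (a k)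
  have forcing := hasDerivAt_duhamel (ν := ν) (P.continuousOn_fluxCoeff hu) ht
    (P.intervalIntegrable_divCoeff_fluxCoeff hu ht k)
  refine (heat.add forcing).congr_deriv ?_
  simp only [mildMap, heatFlow, Pi.add_apply]
  ring

lemma tsum_gevreyMod_mildMap_le (P : ContractionData ν T M₀ B r a)
    (hu : InKatoBall ν T (4 * M₀) r u) (ht : t ∈ Ioo 0 T) :
    ∑' k, gevreyMod (ν / 2 * t) (mildMap ν a u t) k ≤ r t * timeWeight (-(1 / 4)) t := by
  have factor_le : B * (d * (d * r t ^ 2 + timeWeight (1 / 2) t)) ≤ 2⁻¹ := by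
    refine le_trans ?_ P.tsum_factor_le
    have radius_le := P.radius_mono ht.2.le
    have weight_le := timeWeight_mono ht.1.le ht.2.le (p := 1 / 2) (by norm_num)
    have dim_le : (d : ℝ≥0∞) ≤ 3 * d := le_mul_of_one_le_left' (by norm_num)
    gcongr
  have forcing_le := tsum_gevreyMod_duhamel_le P.viscosity_pos P.duhamelBound ht.1
    (P.continuousOn_fluxCoeff_of_lt hu ht.2)
    fun s hs => hu.tsum_fluxMajorant_le P.viscosity_pos P.radius_mono hs ht.2
  set x := timeWeight (-(1 / 4)) t
  calc ∑' k, gevreyMod (ν / 2 * t) (mildMap ν a u t) k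
      ≤ ∑' k, gevreyMod (ν / 2 * t) (heatFlow ν a t) k +
          ∑' k, gevreyMod (ν / 2 * t) (duhamel ν (fun s => fluxCoeff (u s)) t) k := by
        rw [← ENNReal.tsum_add]
        exact ENNReal.tsum_le_tsum fun k => gevreyMod_add_le _ _ _ k
    _ ≤ 2⁻¹ * r t * x + d * (d * r t ^ 2 + timeWeight (1 / 2) t) * r t * (B * x) :=
        add_le_add (P.heatFlow_tsum_le t ht) forcing_le
    _ = (2⁻¹ + B * (d * (d * r t ^ 2 + timeWeight (1 / 2) t))) * (r t * x) := by ring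
    _ ≤ (2⁻¹ + 2⁻¹) * (r t * x) := by gcongr
    _ = r t * x := by rw [ENNReal.inv_two_add_inv_two, one_mul]

lemma sobolevSq_gevreyMod_mildMap_le (P : ContractionData ν T M₀ B r a)
    (hu : InKatoBall ν T (4 * M₀) r u) (ht : t ∈ Ioo 0 T) :
    sobolevSq d (gevreyMod (ν / 2 * t) (mildMap ν a u t)) ≤
      4 * M₀ * timeWeight (-(1 / 4)) t ^ 2 := by
  have factor_le : 2 * (fluxConst d * (r t ^ 4 + timeWeight (1 / 2) t ^ 2)) * B ^ 2 ≤ 2⁻¹ := by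
    refine le_trans ?_ P.sobolevSq_factor_le
    have radius_le := P.radius_mono ht.2.le
    have weight_le := timeWeight_mono ht.1.le ht.2.le (p := 1 / 2) (by norm_num)
    gcongr
  have half_four : (2⁻¹ : ℝ≥0∞) * 4 = 2 := by
    rw [show (4 : ℝ≥0∞) = 2 * 2 by norm_num, ← mul_assoc,
      ENNReal.inv_mul_cancel two_ne_zero ENNReal.ofNat_ne_top, one_mul]
  have forcing_le := sobolevSq_gevreyMod_duhamel_le P.viscosity_pos P.duhamelBound ht.1
    (P.continuousOn_fluxCoeff_of_lt hu ht.2)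
    fun s hs => hu.sobolevSq_fluxMajorant_le P.viscosity_pos P.radius_mono hs ht.2
  set x := timeWeight (-(1 / 4)) t
  set C := fluxConst d * (r t ^ 4 + timeWeight (1 / 2) t ^ 2)
  calc sobolevSq d (gevreyMod (ν / 2 * t) (mildMap ν a u t))
      ≤ 2 * (sobolevSq d (gevreyMod (ν / 2 * t) (heatFlow ν a t)) +
          sobolevSq d (gevreyMod (ν / 2 * t) (duhamel ν (fun s => fluxCoeff (u s)) t))) :=
        (sobolevSq_mono fun k => gevreyMod_add_le _ _ _ k).trans (sobolevSq_add_le _ _ _)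
    _ ≤ 2 * (M₀ * x ^ 2 + C * (4 * M₀) * (B * x) ^ 2) := by
        gcongr
        exact P.heatFlow_sobolevSq_le t ht
    _ = (2 + 2 * C * B ^ 2 * 4) * M₀ * x ^ 2 := by ring
    _ ≤ (2 + 2⁻¹ * 4) * M₀ * x ^ 2 := by gcongr
    _ = 4 * M₀ * x ^ 2 := by rw [half_four]; norm_num

lemma inKatoBall_mildMap (P : ContractionData ν T M₀ B r a) (hu : InKatoBall ν T (4 * M₀) r u) :
    InKatoBall ν T (4 * M₀) r (mildMap ν a u) where
  continuousOn k _ ht := (P.hasDerivAt_mildMap hu ht k).continuousAt.continuousWithinAt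
  tsum_le _ ht := P.tsum_gevreyMod_mildMap_le hu ht
  sobolevSq_le _ ht := P.sobolevSq_gevreyMod_mildMap_le hu ht

lemma tsum_gevreyMod_mildMap_sub_le (P : ContractionData ν T M₀ B r a)
    (hu : InKatoBall ν T (4 * M₀) r u) (hv : InKatoBall ν T (4 * M₀) r v) {ε : ℝ≥0∞}
    (huv : ∀ s ∈ Ioo 0 T,
      ∑' k, gevreyMod (ν / 2 * s) (u s - v s) k ≤ ε * timeWeight (-(1 / 4)) s)
    (ht : t ∈ Ioo 0 T) :
    ∑' k, gevreyMod (ν / 2 * t) (mildMap ν a u t - mildMap ν a v t) k ≤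
      2⁻¹ * ε * timeWeight (-(1 / 4)) t := by
  have hν := P.viscosity_pos
  have flux_sub_le (s : ℝ) (hs : s ∈ Ioo 0 t) :
      ∑' k, fluxMajorant (ν / 2 * s) (fluxCoeff (u s) - fluxCoeff (v s)) k ≤
        d * (3 * d * r T ^ 2 + timeWeight (1 / 2) T) * ε * timeWeight (-(3 / 4)) s := by
    have hs₀ := hs.1
    have hsT : s ∈ Ioo 0 T := ⟨hs₀, hs.2.trans ht.2⟩
    exact tsum_fluxMajorant_fluxCoeff_sub_le_timeWeight (by positivity) hs₀ hsT.2.le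
      P.radius_ne_top (hu.tsum_le_of_le P.radius_mono hsT hsT.2.le)
      (hv.tsum_le_of_le P.radius_mono hsT hsT.2.le) (huv s hsT)
  rw [mildMap_sub_mildMap ν a (P.intervalIntegrable_divCoeff_fluxCoeff hu ht)
    (P.intervalIntegrable_divCoeff_fluxCoeff hv ht)]
  set x := timeWeight (-(1 / 4)) t
  calc ∑' k, gevreyMod (ν / 2 * t) (duhamel ν (fun s => fluxCoeff (u s) - fluxCoeff (v s)) t) k
      ≤ d * (3 * d * r T ^ 2 + timeWeight (1 / 2) T) * ε * (B * x) :=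
        tsum_gevreyMod_duhamel_le hν P.duhamelBound ht.1
          (fun j k => (P.continuousOn_fluxCoeff_of_lt hu ht.2 j k).sub
            (P.continuousOn_fluxCoeff_of_lt hv ht.2 j k)) flux_sub_le
    _ = B * (d * (3 * d * r T ^ 2 + timeWeight (1 / 2) T)) * ε * x := by ring
    _ ≤ 2⁻¹ * ε * x := by
        gcongr
        exact P.tsum_factor_le

end ContractionData

/-- The Picard iteration for the mild equation, started at `0`. -/
def picardIter {d : ℕ} (ν : ℝ) (a : Freq d → ℂ) : ℕ → ℝ → Freq d → ℂ
  | 0 => 0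
  | n + 1 => mildMap ν a (picardIter ν a n)

namespace ContractionData

variable {d : ℕ} {ν T t : ℝ} {M₀ B : ℝ≥0∞} {r : ℝ → ℝ≥0∞} {a : Freq d → ℂ}
  {u : ℝ → Freq d → ℂ}

lemma inKatoBall_picardIter (P : ContractionData ν T M₀ B r a) (n : ℕ) :
    InKatoBall ν T (4 * M₀) r (picardIter ν a n) := by
  induction n with
  | zero => constructor <;> simp [picardIter, gevreyMod, sobolevSq, continuousOn_const]
  | succ n ih => exact P.inKatoBall_mildMap ih

lemma tsum_gevreyMod_picardIter_sub_le (P : ContractionData ν T M₀ B r a) (j n : ℕ) :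
    ∀ s ∈ Ioo 0 T,
      ∑' k, gevreyMod (ν / 2 * s) (picardIter ν a (j + n) s - picardIter ν a n s) k ≤
        2⁻¹ ^ n * r T * timeWeight (-(1 / 4)) s := by
  induction n with
  | zero =>
    intro s hs
    simpa [picardIter] using (P.inKatoBall_picardIter j).tsum_le_of_le P.radius_mono hs hs.2.le
  | succ n ih =>
    intro s hs
    rw [pow_succ', mul_assoc (2⁻¹ : ℝ≥0∞)]
    exact P.tsum_gevreyMod_mildMap_sub_le (P.inKatoBall_picardIter (j + n))
      (P.inKatoBall_picardIter n) ih hs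

lemma exists_tendsto_picardIter (P : ContractionData ν T M₀ B r a) (ht : t ∈ Ioo 0 T)
    (k : Freq d) : ∃ z, Tendsto (fun n => picardIter ν a n t k) atTop (nhds z) := by
  have radius_nonneg : 0 ≤ ν / 2 * t := (mul_pos (half_pos P.viscosity_pos) ht.1).le
  have bound_ne_top : r T * timeWeight (-(1 / 4)) t ≠ ∞ :=
    ENNReal.mul_ne_top P.radius_ne_top (timeWeight_ne_top _ _)
  refine cauchySeq_tendsto_of_complete (cauchySeq_of_le_tendsto_0'
    (fun n => (2⁻¹ ^ n * (r T * timeWeight (-(1 / 4)) t)).toReal) (fun n m hnm => ?_) ?_)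
  · obtain ⟨j, rfl⟩ := Nat.exists_eq_add_of_le' hnm
    rw [dist_comm, dist_eq_norm, ← toReal_enorm]
    refine ENNReal.toReal_mono (ENNReal.mul_ne_top (by simp) bound_ne_top) ?_
    rw [← mul_assoc]
    exact (enorm_le_gevreyMod radius_nonneg _ k).trans
      ((ENNReal.le_tsum k).trans (P.tsum_gevreyMod_picardIter_sub_le j n t ht))
  · exact (ENNReal.tendsto_toReal ENNReal.zero_ne_top).comp
      (tendsto_two_inv_pow_mul bound_ne_top)

lemma tsum_gevreyMod_limit_sub_le (P : ContractionData ν T M₀ B r a)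
    (hu : ∀ s ∈ Ioo 0 T, ∀ k, Tendsto (fun n => picardIter ν a n s k) atTop (nhds (u s k)))
    (n : ℕ) : ∀ s ∈ Ioo 0 T,
    ∑' k, gevreyMod (ν / 2 * s) (u s - picardIter ν a n s) k ≤
      2⁻¹ ^ n * r T * timeWeight (-(1 / 4)) s := fun s hs =>
  tsum_le_of_tendsto_of_tsum_le
    (f := fun j k => gevreyMod (ν / 2 * s) (picardIter ν a (j + n) s - picardIter ν a n s) k)
    (fun k => tendsto_gevreyMod _ k
      (((tendsto_add_atTop_iff_nat n).mpr (hu s hs k)).sub tendsto_const_nhds))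
    fun j => P.tsum_gevreyMod_picardIter_sub_le j n s hs

lemma tendstoUniformlyOn_picardIter (P : ContractionData ν T M₀ B r a)
    (hu : ∀ s ∈ Ioo 0 T, ∀ k, Tendsto (fun n => picardIter ν a n s k) atTop (nhds (u s k)))
    {s₀ : ℝ} (hs₀ : 0 < s₀) (k : Freq d) :
    TendstoUniformlyOn (fun n s => picardIter ν a n s k) (fun s => u s k) atTop (Ioo s₀ T) := by
  have hν := P.viscosity_pos
  have bound_ne_top : r T * timeWeight (-(1 / 4)) s₀ ≠ ∞ :=
    ENNReal.mul_ne_top P.radius_ne_top (timeWeight_ne_top _ _)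
  rw [EMetric.tendstoUniformlyOn_iff]
  intro ε hε
  filter_upwards [(tendsto_two_inv_pow_mul bound_ne_top).eventually_lt_const hε] with n hn s hs
  have hs' : 0 < s := hs₀.trans hs.1
  calc edist (u s k) (picardIter ν a n s k)
      ≤ gevreyMod (ν / 2 * s) (u s - picardIter ν a n s) k := by
        rw [edist_eq_enorm_sub]
        exact enorm_le_gevreyMod (by positivity) _ k
    _ ≤ 2⁻¹ ^ n * r T * timeWeight (-(1 / 4)) s :=
        (ENNReal.le_tsum k).trans (P.tsum_gevreyMod_limit_sub_le hu n s ⟨hs', hs.2⟩)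
    _ ≤ 2⁻¹ ^ n * (r T * timeWeight (-(1 / 4)) s₀) := by
        rw [mul_assoc]
        gcongr
        exact timeWeight_anti hs₀ hs.1.le (by norm_num)
    _ < ε := hn

lemma inKatoBall_limit (P : ContractionData ν T M₀ B r a)
    (hu : ∀ s ∈ Ioo 0 T, ∀ k, Tendsto (fun n => picardIter ν a n s k) atTop (nhds (u s k))) :
    InKatoBall ν T (4 * M₀) r u where
  continuousOn k s hs := by
    have continuousOn_away : ContinuousOn (fun s => u s k) (Ioo (s / 2) T) :=
      (P.tendstoUniformlyOn_picardIter hu (half_pos hs.1) k).continuousOn <|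
        Frequently.of_forall fun n => ((P.inKatoBall_picardIter n).continuousOn k).mono
          (Ioo_subset_Ioo_left (half_pos hs.1).le)
    exact (continuousOn_away.continuousAt
      (Ioo_mem_nhds (half_lt_self hs.1) hs.2)).continuousWithinAt
  tsum_le s hs := tsum_le_of_tendsto_of_tsum_le (fun k => tendsto_gevreyMod _ k (hu s hs k))
    fun n => (P.inKatoBall_picardIter n).tsum_le s hs
  sobolevSq_le s hs := tsum_le_of_tendsto_of_tsum_le
    (fun k => ENNReal.Tendsto.const_mul (ENNReal.Tendsto.pow (tendsto_gevreyMod _ k (hu s hs k)))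
      (Or.inr (ENNReal.pow_ne_top (bracket_ne_top k))))
    fun n => (P.inKatoBall_picardIter n).sobolevSq_le s hs

lemma limit_eq_mildMap (P : ContractionData ν T M₀ B r a)
    (hu : ∀ s ∈ Ioo 0 T, ∀ k, Tendsto (fun n => picardIter ν a n s k) atTop (nhds (u s k)))
    (ht : t ∈ Ioo 0 T) : u t = mildMap ν a u t := by
  ext k
  have radius_nonneg : 0 ≤ ν / 2 * t := (mul_pos (half_pos P.viscosity_pos) ht.1).le
  have bound_ne_top : r T * timeWeight (-(1 / 4)) t ≠ ∞ :=
    ENNReal.mul_ne_top P.radius_ne_top (timeWeight_ne_top _ _)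
  have enorm_sub_le (n : ℕ) : ‖mildMap ν a u t k - picardIter ν a (n + 1) t k‖ₑ ≤
      2⁻¹ ^ (n + 1) * (r T * timeWeight (-(1 / 4)) t) :=
    calc ‖mildMap ν a u t k - picardIter ν a (n + 1) t k‖ₑ
        ≤ ∑' k, gevreyMod (ν / 2 * t) (mildMap ν a u t - picardIter ν a (n + 1) t) k :=
          (enorm_le_gevreyMod radius_nonneg (mildMap ν a u t - picardIter ν a (n + 1) t) k).trans
            (ENNReal.le_tsum k)
      _ ≤ 2⁻¹ * (2⁻¹ ^ n * r T) * timeWeight (-(1 / 4)) t :=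
          P.tsum_gevreyMod_mildMap_sub_le (P.inKatoBall_limit hu) (P.inKatoBall_picardIter n)
            (P.tsum_gevreyMod_limit_sub_le hu n) ht
      _ = _ := by ring
  refine tendsto_nhds_unique (hu t ht k) ?_
  rw [← tendsto_add_atTop_iff_nat 1, tendsto_iff_edist_tendsto_0]
  refine tendsto_of_tendsto_of_tendsto_of_le_of_le tendsto_const_nhds
    ((tendsto_add_atTop_iff_nat 1).mpr (tendsto_two_inv_pow_mul bound_ne_top))
    (fun n => zero_le) fun n => ?_
  rw [edist_comm, edist_eq_enorm_sub]
  exact enorm_sub_le n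

end ContractionData

/-! ### The heat flow and existence of contraction data -/

section HeatFlow

variable {d : ℕ} {ν t : ℝ}

lemma gevreyMod_heatFlow_le (hν : 0 ≤ ν) (ht : 0 ≤ t) (a : Freq d → ℂ) (k : Freq d) :
    gevreyMod (ν / 2 * t) (heatFlow ν a t) k ≤
      bracket k * ENNReal.ofReal (Real.exp (-(ν / 2 * ‖k‖ ^ 4 * t))) * ‖a k‖ₑ := by
  have weight_le : Real.exp (ν / 2 * t * ‖k‖) * heatMultiplier ν t k ≤
      Real.exp (-(ν / 2 * ‖k‖ ^ 4 * t)) := by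
    simpa [mul_right_comm] using exp_mul_heatMultiplier_le hν ht k
  calc gevreyMod (ν / 2 * t) (heatFlow ν a t) k
      = bracket k * ENNReal.ofReal (Real.exp (ν / 2 * t * ‖k‖) * heatMultiplier ν t k) *
          ‖a k‖ₑ := by
        rw [gevreyMod, heatFlow, enorm_mul, enorm_heatMultiplier, analyticWeight,
          ENNReal.ofReal_mul (Real.exp_pos _).le]
        ring
    _ ≤ _ := by gcongr

lemma ofReal_exp_neg_half_sq (ν t : ℝ) (k : Freq d) :
    ENNReal.ofReal (Real.exp (-(ν / 2 * ‖k‖ ^ 4 * t))) ^ 2 =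
      ENNReal.ofReal (Real.exp (-(ν * ‖k‖ ^ 4 * t))) := by
  rw [← ENNReal.ofReal_pow (Real.exp_pos _).le, ← Real.exp_nat_mul]
  congr 2
  push_cast
  ring

lemma one_add_norm_sq_mul_exp_le (hν : 0 < ν) (ht : t ∈ Ioc 0 1) (k : Freq d) :
    (1 + ‖k‖) ^ 2 * Real.exp (-(ν * ‖k‖ ^ 4 * t)) ≤
      (1 + 3 * ν ^ (-(1 / 2) : ℝ)) * t ^ (-(1 / 2) : ℝ) := by
  obtain ⟨ht₀, ht₁⟩ := ht
  have sq_le : (1 + ‖k‖) ^ 2 ≤ 1 + 3 * ‖k‖ ^ 2 := by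
    rcases norm_eq_zero_or_one_le_norm k with hk | hk
    · norm_num [hk]
    · nlinarith
  have exp_le : Real.exp (-(ν * ‖k‖ ^ 4 * t)) ≤ t ^ (-(1 / 2) : ℝ) :=
    (Real.exp_le_one_iff.mpr (neg_nonpos.mpr (by positivity))).trans
      (Real.one_le_rpow_of_pos_of_le_one_of_nonpos ht₀ ht₁ (by norm_num))
  have sq_mul_exp_le : ‖k‖ ^ 2 * Real.exp (-(ν * ‖k‖ ^ 4 * t)) ≤
      ν ^ (-(1 / 2) : ℝ) * t ^ (-(1 / 2) : ℝ) := by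
    have h := pow_mul_exp_neg_mul_pow_four_le (mul_pos hν ht₀) (norm_nonneg k)
      (show 2 ≤ 4 by norm_num)
    rw [Real.mul_rpow hν.le ht₀.le] at h
    convert h using 4 <;> ring
  calc (1 + ‖k‖) ^ 2 * Real.exp (-(ν * ‖k‖ ^ 4 * t))
      ≤ (1 + 3 * ‖k‖ ^ 2) * Real.exp (-(ν * ‖k‖ ^ 4 * t)) := by gcongr
    _ = Real.exp (-(ν * ‖k‖ ^ 4 * t)) +
          3 * (‖k‖ ^ 2 * Real.exp (-(ν * ‖k‖ ^ 4 * t))) := by ring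
    _ ≤ t ^ (-(1 / 2) : ℝ) + 3 * (ν ^ (-(1 / 2) : ℝ) * t ^ (-(1 / 2) : ℝ)) := by gcongr
    _ = _ := by ring

lemma timeWeight_neg_quarter_sq (ht : 0 < t) :
    timeWeight (-(1 / 4)) t ^ 2 = timeWeight (-(1 / 2)) t := by
  rw [timeWeight_pow ht]
  norm_num

lemma sobolevSq_gevreyMod_heatFlow_le (hν : 0 < ν) (ht : t ∈ Ioc 0 1) (n : ℕ) (a : Freq d → ℂ) :
    sobolevSq n (gevreyMod (ν / 2 * t) (heatFlow ν a t)) ≤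
      ENNReal.ofReal (1 + 3 * ν ^ (-(1 / 2) : ℝ)) * sobolevSq n (fun k => ‖a k‖ₑ) *
        timeWeight (-(1 / 4)) t ^ 2 := by
  have weight_le (k : Freq d) :
      bracket k ^ 2 * ENNReal.ofReal (Real.exp (-(ν / 2 * ‖k‖ ^ 4 * t))) ^ 2 ≤
        ENNReal.ofReal (1 + 3 * ν ^ (-(1 / 2) : ℝ)) * timeWeight (-(1 / 4)) t ^ 2 := by
    rw [ofReal_exp_neg_half_sq, timeWeight_neg_quarter_sq ht.1, timeWeight, bracket_eq_ofReal,
      ← ENNReal.ofReal_pow (by positivity), ← ENNReal.ofReal_mul (by positivity),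
      ← ENNReal.ofReal_mul (by positivity)]
    exact ENNReal.ofReal_le_ofReal (one_add_norm_sq_mul_exp_le hν ht k)
  refine (sobolevSq_mono (gevreyMod_heatFlow_le hν.le ht.1.le a)).trans ?_
  simp only [sobolevSq]
  rw [← ENNReal.tsum_mul_left, ← ENNReal.tsum_mul_right]
  refine ENNReal.tsum_le_tsum fun k => ?_
  calc bracket k ^ n *
        (bracket k * ENNReal.ofReal (Real.exp (-(ν / 2 * ‖k‖ ^ 4 * t))) * ‖a k‖ₑ) ^ 2
      = bracket k ^ n * ‖a k‖ₑ ^ 2 *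
          (bracket k ^ 2 * ENNReal.ofReal (Real.exp (-(ν / 2 * ‖k‖ ^ 4 * t))) ^ 2) := by ring
    _ ≤ bracket k ^ n * ‖a k‖ₑ ^ 2 *
          (ENNReal.ofReal (1 + 3 * ν ^ (-(1 / 2) : ℝ)) * timeWeight (-(1 / 4)) t ^ 2) := by
        exact mul_le_mul_right (weight_le k) _
    _ = _ := by ring

/-- The scale-invariant quantity `t^{1/4} ∑_k ⟨k⟩ e^{νt|k|/2} |(e^{-νtΔ²} a)_k|` that measures the
size of the linear evolution in the Kato norm. -/
def heatKatoNorm (ν : ℝ) (a : Freq d → ℂ) (t : ℝ) : ℝ≥0∞ :=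
  (∑' k, gevreyMod (ν / 2 * t) (heatFlow ν a t) k) * timeWeight (1 / 4) t

lemma heatKatoNorm_add_le (ν : ℝ) (a b : Freq d → ℂ) (t : ℝ) :
    heatKatoNorm ν (a + b) t ≤ heatKatoNorm ν a t + heatKatoNorm ν b t := by
  have heatFlow_add : heatFlow ν (a + b) t = heatFlow ν a t + heatFlow ν b t := by
    ext k
    simp [heatFlow, mul_add]
  simp only [heatKatoNorm]
  rw [← add_mul, ← ENNReal.tsum_add, heatFlow_add]
  gcongr
  exact gevreyMod_add_le _ _ _ _

lemma tsum_gevreyMod_heatFlow_eq (ν : ℝ) (a : Freq d → ℂ) (ht : 0 < t) :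
    ∑' k, gevreyMod (ν / 2 * t) (heatFlow ν a t) k =
      heatKatoNorm ν a t * timeWeight (-(1 / 4)) t := by
  rw [heatKatoNorm, mul_assoc, timeWeight_mul_timeWeight_neg ht, mul_one]

lemma exists_heatKatoNorm_sq_le (hd : 1 ≤ d) (hν : 0 < ν) :
    ∃ C : ℝ≥0∞, C ≠ ∞ ∧ ∀ t ∈ Ioc (0 : ℝ) 1, ∀ a : Freq d → ℂ,
      heatKatoNorm ν a t ^ 2 ≤ C * sobolevSq d (fun k => ‖a k‖ₑ) := by
  obtain ⟨C, hC, tsum_le⟩ := exists_tsum_bracket_sq_mul_exp_le hd hν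
  refine ⟨C, hC, fun t ht a => ?_⟩
  have weights_eq (k : Freq d) :
      (bracket k * ENNReal.ofReal (Real.exp (-(ν / 2 * ‖k‖ ^ 4 * t)))) ^ 2 * (bracket k ^ d)⁻¹ =
        bracket k ^ 2 * (bracket k ^ d)⁻¹ * ENNReal.ofReal (Real.exp (-(ν * ‖k‖ ^ 4 * t))) := by
    rw [mul_pow, ofReal_exp_neg_half_sq, mul_right_comm]
  have sq_tsum_le : (∑' k, gevreyMod (ν / 2 * t) (heatFlow ν a t) k) ^ 2 ≤
      C * timeWeight (-(1 / 2)) t * sobolevSq d (fun k => ‖a k‖ₑ) := by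
    refine (pow_le_pow_left' (ENNReal.tsum_le_tsum fun k =>
      gevreyMod_heatFlow_le hν.le ht.1.le a k) 2).trans
      ((sq_tsum_mul_le_tsum_mul_sobolevSq d _ _).trans ?_)
    simp only [weights_eq]
    gcongr
    exact tsum_le t ht
  calc heatKatoNorm ν a t ^ 2
      = (∑' k, gevreyMod (ν / 2 * t) (heatFlow ν a t) k) ^ 2 * timeWeight (1 / 4) t ^ 2 := by
        rw [heatKatoNorm, mul_pow]
    _ ≤ C * timeWeight (-(1 / 2)) t * sobolevSq d (fun k => ‖a k‖ₑ) * timeWeight (1 / 4) t ^ 2 := by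
        gcongr
    _ = C * sobolevSq d (fun k => ‖a k‖ₑ) *
          (timeWeight (1 / 4) t * timeWeight (-(1 / 4)) t) ^ 2 := by
        rw [← timeWeight_neg_quarter_sq ht.1]
        ring
    _ = C * sobolevSq d (fun k => ‖a k‖ₑ) := by
        rw [timeWeight_mul_timeWeight_neg ht.1, one_pow, mul_one]

lemma tendsto_heatKatoNorm_of_tsum_ne_top (hν : 0 ≤ ν) {a : Freq d → ℂ}
    (ha : ∑' k, bracket k * ‖a k‖ₑ ≠ ∞) :
    Tendsto (heatKatoNorm ν a) (nhdsWithin 0 (Ioi 0)) (nhds 0) := by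
  have bound_tendsto : Tendsto (fun t => (∑' k, bracket k * ‖a k‖ₑ) * timeWeight (1 / 4) t)
      (nhdsWithin 0 (Ioi 0)) (nhds 0) := by
    simpa using ENNReal.Tendsto.const_mul
      (tendsto_timeWeight_zero (p := 1 / 4) (by norm_num)) (Or.inr ha)
  refine tendsto_of_tendsto_of_tendsto_of_le_of_le' tendsto_const_nhds bound_tendsto
    (Eventually.of_forall fun _ => zero_le) ?_
  filter_upwards [self_mem_nhdsWithin] with t ht
  refine mul_le_mul_left (ENNReal.tsum_le_tsum fun k =>
    (gevreyMod_heatFlow_le hν (mem_Ioi.mp ht).le a k).trans ?_) _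
  gcongr
  refine mul_le_of_le_one_right' (ENNReal.ofReal_le_one.mpr (Real.exp_le_one_iff.mpr ?_))
  exact neg_nonpos.mpr (mul_nonneg (by positivity) (mem_Ioi.mp ht).le)

lemma tendsto_sobolevSq_indicator_compl (n : ℕ) {a : Freq d → ℂ}
    (ha : sobolevSq n (fun k => ‖a k‖ₑ) ≠ ∞) :
    Tendsto (fun I : Finset (Freq d) => sobolevSq n fun k => ‖(I : Set (Freq d))ᶜ.indicator a k‖ₑ)
      atTop (nhds 0) := by
  refine (ENNReal.tendsto_tsum_compl_atTop_zero ha).congr fun I => ?_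
  refine (tsum_subtype (I : Set (Freq d))ᶜ fun k => bracket k ^ n * ‖a k‖ₑ ^ 2).trans
    (tsum_congr fun k => ?_)
  by_cases hk : k ∈ I <;> simp [hk]

lemma tendsto_heatKatoNorm (hd : 1 ≤ d) (hν : 0 < ν) {a : Freq d → ℂ}
    (ha : sobolevSq d (fun k => ‖a k‖ₑ) ≠ ∞) :
    Tendsto (heatKatoNorm ν a) (nhdsWithin 0 (Ioi 0)) (nhds 0) := by
  obtain ⟨C, hC, sq_le⟩ := exists_heatKatoNorm_sq_le hd hν
  rw [ENNReal.tendsto_nhds_zero]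
  intro ε hε
  have half_pos : 0 < ε / 2 := ENNReal.half_pos hε.ne'
  have tail_tendsto := ENNReal.Tendsto.const_mul (tendsto_sobolevSq_indicator_compl d ha)
    (Or.inr hC)
  rw [mul_zero] at tail_tendsto
  obtain ⟨I, tail_le⟩ :=
    (tail_tendsto.eventually_le_const (ENNReal.pow_pos half_pos 2)).exists
  have head_ne_top : ∑' k, bracket k * ‖(I : Set (Freq d)).indicator a k‖ₑ ≠ ∞ := by
    rw [tsum_eq_sum (s := I) fun k hk => by simp [hk]]
    exact ENNReal.sum_ne_top.mpr fun k _ => ENNReal.mul_ne_top (bracket_ne_top k) enorm_ne_top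
  filter_upwards [(tendsto_heatKatoNorm_of_tsum_ne_top hν.le head_ne_top).eventually_le_const
    half_pos, Ioc_mem_nhdsGT (zero_lt_one' ℝ)] with t head_le ht
  calc heatKatoNorm ν a t
      ≤ heatKatoNorm ν ((I : Set (Freq d)).indicator a) t +
          heatKatoNorm ν ((I : Set (Freq d))ᶜ.indicator a) t := by
        simpa only [Set.indicator_self_add_compl] using heatKatoNorm_add_le ν
          ((I : Set (Freq d)).indicator a) ((I : Set (Freq d))ᶜ.indicator a) t
    _ ≤ ε / 2 + ε / 2 := add_le_add head_le
        ((ENNReal.pow_le_pow_left_iff two_ne_zero).mp ((sq_le t ht _).trans tail_le))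
    _ = ε := ENNReal.add_halves ε

end HeatFlow

section RunningSup

lemma monotone_iSup_Ioc (f : ℝ → ℝ≥0∞) : Monotone fun t => ⨆ s ∈ Ioc 0 t, f s :=
  fun _ _ hst => biSup_mono fun _ hx => ⟨hx.1, hx.2.trans hst⟩

lemma tendsto_iSup_Ioc {f : ℝ → ℝ≥0∞} (hf : Tendsto f (nhdsWithin 0 (Ioi 0)) (nhds 0)) :
    Tendsto (fun t => ⨆ s ∈ Ioc 0 t, f s) (nhdsWithin 0 (Ioi 0)) (nhds 0) := by
  rw [ENNReal.tendsto_nhds_zero] at hf ⊢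
  intro ε hε
  obtain ⟨δ, hδ, le_on⟩ := mem_nhdsGT_iff_exists_Ioo_subset.mp (hf ε hε)
  filter_upwards [Ioo_mem_nhdsGT hδ] with t ht
  exact iSup₂_le fun s hs => le_on ⟨hs.1, hs.2.trans_lt ht.2⟩

end RunningSup

section Existence

variable {d : ℕ} {B : ℝ≥0∞} {r : ℝ → ℝ≥0∞}

lemma tendsto_tsum_factor (d : ℕ) (hB : B ≠ ∞) (hr : Tendsto r (nhdsWithin 0 (Ioi 0)) (nhds 0)) :
    Tendsto (fun t => B * (d * (3 * d * r t ^ 2 + timeWeight (1 / 2) t)))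
      (nhdsWithin 0 (Ioi 0)) (nhds 0) := by
  have sq_tendsto := ENNReal.Tendsto.const_mul (ENNReal.Tendsto.pow (n := 2) hr)
    (a := 3 * (d : ℝ≥0∞)) (Or.inr (by finiteness))
  have sum_tendsto := sq_tendsto.add (tendsto_timeWeight_zero (p := 1 / 2) (by norm_num))
  simpa using ENNReal.Tendsto.const_mul
    (ENNReal.Tendsto.const_mul sum_tendsto (Or.inr (ENNReal.natCast_ne_top d))) (Or.inr hB)

lemma tendsto_sobolevSq_factor (d : ℕ) (hB : B ≠ ∞)
    (hr : Tendsto r (nhdsWithin 0 (Ioi 0)) (nhds 0)) :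
    Tendsto (fun t => 2 * (fluxConst d * (r t ^ 4 + timeWeight (1 / 2) t ^ 2)) * B ^ 2)
      (nhdsWithin 0 (Ioi 0)) (nhds 0) := by
  have sum_tendsto := (ENNReal.Tendsto.pow (n := 4) hr).add
    (ENNReal.Tendsto.pow (n := 2) (tendsto_timeWeight_zero (p := 1 / 2) (by norm_num)))
  have flux_tendsto := ENNReal.Tendsto.const_mul sum_tendsto (Or.inr (fluxConst_ne_top d))
  simpa using ENNReal.Tendsto.mul_const
    (ENNReal.Tendsto.const_mul flux_tendsto (a := 2) (Or.inr ENNReal.ofNat_ne_top))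
    (b := B ^ 2) (Or.inr (ENNReal.pow_ne_top hB))

lemma exists_contractionData (hd : 1 ≤ d) {ν : ℝ} (hν : 0 < ν) {a : Freq d → ℂ}
    (ha : sobolevSq d (fun k => ‖a k‖ₑ) ≠ ∞) :
    ∃ (T : ℝ) (M₀ B : ℝ≥0∞) (r : ℝ → ℝ≥0∞), 0 < T ∧ M₀ ≠ ∞ ∧ B ≠ ∞ ∧
      Tendsto r (nhdsWithin 0 (Ioi 0)) (nhds 0) ∧ ContractionData ν T M₀ B r a := by
  obtain ⟨B, hB, duhamelBound⟩ := exists_duhamelBound hν.le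
  let r (t : ℝ) : ℝ≥0∞ := 2 * ⨆ s ∈ Ioc 0 t, heatKatoNorm ν a s
  have radius_mono : Monotone r := fun s t hst =>
    mul_le_mul_right (monotone_iSup_Ioc (heatKatoNorm ν a) hst) 2
  have radius_tendsto : Tendsto r (nhdsWithin 0 (Ioi 0)) (nhds 0) := by
    simpa only [mul_zero] using ENNReal.Tendsto.const_mul (a := 2)
      (tendsto_iSup_Ioc (tendsto_heatKatoNorm hd hν ha)) (Or.inr ENNReal.ofNat_ne_top)
  have half_pos : (0 : ℝ≥0∞) < 2⁻¹ := by norm_num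
  obtain ⟨T, tsum_factor_le, sobolevSq_factor_le, radius_le, hT₀, hT₁⟩ :=
    (((tendsto_tsum_factor d hB radius_tendsto).eventually_le_const half_pos).and
      (((tendsto_sobolevSq_factor d hB radius_tendsto).eventually_le_const half_pos).and
        ((radius_tendsto.eventually_le_const half_pos).and
          (Ioc_mem_nhdsGT (zero_lt_one' ℝ))))).exists
  refine ⟨T, ENNReal.ofReal (1 + 3 * ν ^ (-(1 / 2) : ℝ)) * sobolevSq d (fun k => ‖a k‖ₑ), B, r, hT₀,
    by finiteness, hB, radius_tendsto, hd, hν, radius_mono,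
    ne_top_of_le_ne_top (by norm_num) radius_le, duhamelBound, fun t ht => ?_, fun t ht =>
    sobolevSq_gevreyMod_heatFlow_le hν ⟨ht.1, ht.2.le.trans hT₁⟩ d a, tsum_factor_le,
    sobolevSq_factor_le⟩
  rw [tsum_gevreyMod_heatFlow_eq ν a ht.1, ← mul_assoc,
    ENNReal.inv_mul_cancel two_ne_zero ENNReal.ofNat_ne_top, one_mul]
  gcongr
  exact le_iSup₂ (f := fun s (_ : s ∈ Ioc 0 t) => heatKatoNorm ν a s) t ⟨ht.1, le_rfl⟩

end Existence

/-! ### Conjugate symmetry -/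

/-- Hermitian symmetry of a coefficient family, i.e. reality of its Fourier series. -/
def ConjSymmetric {d : ℕ} (c : Freq d → ℂ) : Prop := ∀ k, c (-k) = starRingEnd ℂ (c k)

lemma biharmonicSymbol_neg {d : ℕ} (ν : ℝ) (k : Freq d) :
    biharmonicSymbol ν (-k) = biharmonicSymbol ν k := by
  simp [biharmonicSymbol]

lemma heatMultiplier_neg {d : ℕ} (ν τ : ℝ) (k : Freq d) :
    heatMultiplier ν τ (-k) = heatMultiplier ν τ k := by
  rw [heatMultiplier, biharmonicSymbol_neg, heatMultiplier]

namespace ConjSymmetric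

variable {d : ℕ} {c c' : Freq d → ℂ}

lemma fourierDeriv (hc : ConjSymmetric c) (j : Fin d) : ConjSymmetric (fourierDeriv j c) := by
  intro k
  simp [_root_.fourierDeriv, hc k]

lemma sub (hc : ConjSymmetric c) (hc' : ConjSymmetric c') :
    ConjSymmetric (fun k => c k - c' k) := by
  intro k
  simp only [map_sub, hc k, hc' k]

lemma sum {ι : Type*} (I : Finset ι) {f : ι → Freq d → ℂ} (hf : ∀ i, ConjSymmetric (f i)) :
    ConjSymmetric (fun k => ∑ i ∈ I, f i k) := by
  intro k
  simp only [map_sum, hf _ k]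

lemma discConv (hc : ConjSymmetric c) (hc' : ConjSymmetric c') :
    ConjSymmetric (discConv c c') := by
  intro k
  simp only [_root_.discConv]
  rw [← (Equiv.neg (Freq d)).tsum_eq, Complex.conj_tsum]
  refine tsum_congr fun p => ?_
  rw [Equiv.neg_apply, neg_sub_neg, ← neg_sub, hc p, hc' (k - p), map_mul]

lemma fluxCoeff (hc : ConjSymmetric c) (j : Fin d) : ConjSymmetric (fluxCoeff c j) :=
  ((sum _ fun l => (hc.fourierDeriv l).discConv (hc.fourierDeriv l)).discConv
    (hc.fourierDeriv j)).sub (hc.fourierDeriv j)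

lemma divCoeff {F : Fin d → Freq d → ℂ} (hF : ∀ j, ConjSymmetric (F j)) :
    ConjSymmetric (divCoeff F) :=
  sum _ fun j => (hF j).fourierDeriv j

lemma heatFlow (hc : ConjSymmetric c) (ν t : ℝ) : ConjSymmetric (heatFlow ν c t) := by
  intro k
  simp only [_root_.heatFlow, heatMultiplier_neg, hc k, map_mul, Complex.conj_ofReal]

lemma duhamel (ν : ℝ) {G : ℝ → Fin d → Freq d → ℂ} (hG : ∀ s j, ConjSymmetric (G s j)) (t : ℝ) :
    ConjSymmetric (duhamel ν G t) := by
  intro k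
  simp only [_root_.duhamel, intervalIntegral, map_sub, ← integral_conj, map_mul,
    Complex.conj_ofReal, heatMultiplier_neg, divCoeff (hG _) k]

lemma mildMap (hc : ConjSymmetric c) (ν : ℝ) {u : ℝ → Freq d → ℂ} (hu : ∀ s, ConjSymmetric (u s))
    (t : ℝ) : ConjSymmetric (mildMap ν c u t) := by
  intro k
  simp only [_root_.mildMap, Pi.add_apply, map_add, hc.heatFlow ν t k,
    duhamel ν (fun s j => (hu s).fluxCoeff j) t k]

lemma picardIter (hc : ConjSymmetric c) (ν : ℝ) (n : ℕ) (t : ℝ) :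
    ConjSymmetric (picardIter ν c n t) := by
  induction n generalizing t with
  | zero => intro k; simp [_root_.picardIter]
  | succ n ih => exact hc.mildMap ν ih t

lemma of_tendsto {f : ℕ → Freq d → ℂ} (hf : ∀ n, ConjSymmetric (f n))
    (hc : ∀ k, Tendsto (fun n => f n k) atTop (nhds (c k))) : ConjSymmetric c := by
  intro k
  have conj_tendsto := (Complex.continuous_conj.tendsto (c k)).comp (hc k)
  exact tendsto_nhds_unique (hc (-k)) (conj_tendsto.congr fun n => (hf n k).symm)

end ConjSymmetric

/-! ### Fourier series with rapidly decaying coefficients -/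

section FourierMode

variable {d : ℕ}

/-- The character `x ↦ e^{i k·x}` of the torus. -/
def fourierMode (k : Freq d) (x : Ed d) : ℂ :=
  Complex.exp (Complex.I * ∑ i, (k i : ℂ) * (x i : ℂ))

lemma norm_fourierMode (k : Freq d) (x : Ed d) : ‖fourierMode k x‖ = 1 := by
  have phase_eq : Complex.I * ∑ i, (k i : ℂ) * (x i : ℂ) =
      ((∑ i, (k i : ℝ) * x i : ℝ) : ℂ) * Complex.I := by
    push_cast
    ring
  rw [fourierMode, phase_eq, Complex.norm_exp_ofReal_mul_I]

lemma fourierMode_add (p q : Freq d) (x : Ed d) :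
    fourierMode (p + q) x = fourierMode p x * fourierMode q x := by
  simp only [fourierMode, ← Complex.exp_add, ← mul_add, ← Finset.sum_add_distrib, Pi.add_apply,
    Int.cast_add, add_mul]

lemma conj_fourierMode (k : Freq d) (x : Ed d) :
    starRingEnd ℂ (fourierMode k x) = fourierMode (-k) x := by
  rw [fourierMode, fourierMode, ← Complex.exp_conj]
  simp

lemma fourierMode_add_two_pi_single (k : Freq d) (j : Fin d) (x : Ed d) :
    fourierMode k (x + (2 * Real.pi) • EuclideanSpace.single j 1) = fourierMode k x := by
  have phase_eq : Complex.I *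
      ∑ i, (k i : ℂ) * (((x + (2 * Real.pi) • EuclideanSpace.single j 1 : Ed d) i : ℝ) : ℂ) =
        Complex.I * ∑ i, (k i : ℂ) * (x i : ℂ) + (k j : ℂ) * (2 * Real.pi * Complex.I) := by
    simp [mul_add, Finset.sum_add_distrib, apply_ite Complex.ofReal]
    ring
  rw [fourierMode, phase_eq, Complex.exp_add, Complex.exp_int_mul_two_pi_mul_I, mul_one,
    fourierMode]

/-- The `j`-th coordinate on `ℝ^d` as a real-linear functional with values in `ℂ`. -/
def complexCoord (j : Fin d) : Ed d →L[ℝ] ℂ := Complex.ofRealCLM.comp (EuclideanSpace.proj j)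

lemma complexCoord_apply (j : Fin d) (v : Ed d) : complexCoord j v = (v j : ℂ) := rfl

lemma norm_complexCoord_le (j : Fin d) : ‖(complexCoord j : Ed d →L[ℝ] ℂ)‖ ≤ 1 := by
  refine ContinuousLinearMap.opNorm_le_bound _ zero_le_one fun v => ?_
  rw [complexCoord_apply, Complex.norm_real, one_mul]
  exact PiLp.norm_apply_le v j

lemma hasFDerivAt_fourierMode (k : Freq d) (x : Ed d) :
    HasFDerivAt (fourierMode k)
      (∑ j, (Complex.I * (k j : ℂ) * fourierMode k x) • (complexCoord j : Ed d →L[ℝ] ℂ)) x := by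
  let phase : Ed d →L[ℝ] ℂ := ∑ j, (Complex.I * (k j : ℂ)) • complexCoord j
  have phase_apply (y : Ed d) : phase y = Complex.I * ∑ i, (k i : ℂ) * (y i : ℂ) := by
    simp [phase, complexCoord_apply, Finset.mul_sum, mul_assoc]
  have mode_eq : fourierMode k = fun y => Complex.exp (phase y) :=
    funext fun y => by rw [phase_apply, fourierMode]
  rw [mode_eq]
  refine phase.hasFDerivAt.cexp.congr_fderiv ?_
  simp only [phase, Finset.smul_sum, smul_smul, mul_comm]

lemma continuous_fourierMode (k : Freq d) : Continuous (fourierMode k) :=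
  continuous_iff_continuousAt.mpr fun x => (hasFDerivAt_fourierMode k x).continuousAt

end FourierMode

section FourierSeries

variable {d : ℕ} {c c' : Freq d → ℂ}

/-- The function on `ℝ^d` with Fourier coefficients `c`, up to the normalizing factor `(2π)^d`. -/
def fourierSeries (c : Freq d → ℂ) (x : Ed d) : ℂ := ∑' k, c k * fourierMode k x

lemma RapidDecay.enorm {E F : Type*} [NormedAddCommGroup E] [ENorm F] {c : E → F}
    (hc : RapidDecay c) : RapidDecay fun k => ‖c k‖ₑ := hc

lemma RapidDecay.summable_norm (hc : RapidDecay c) : Summable fun k => ‖c k‖ := by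
  simpa only [toReal_enorm] using ENNReal.summable_toReal hc.tsum_enorm_ne_top

lemma RapidDecay.summable_norm_mul_fourierMode (hc : RapidDecay c) (x : Ed d) :
    Summable fun k => ‖c k * fourierMode k x‖ := by
  simpa only [norm_mul, norm_fourierMode, mul_one] using hc.summable_norm

lemma RapidDecay.summable_mul_fourierMode (hc : RapidDecay c) (x : Ed d) :
    Summable fun k => c k * fourierMode k x :=
  (hc.summable_norm_mul_fourierMode x).of_norm

lemma RapidDecay.fourierDeriv (hc : RapidDecay c) (j : Fin d) : RapidDecay (fourierDeriv j c) :=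
  (hc.enorm.bracket_pow_mul 1).mono fun k => enorm_fourierDeriv_le_bracket_mul j c k

lemma hasFDerivAt_fourierSeries (hc : RapidDecay c) (x : Ed d) :
    HasFDerivAt (fourierSeries c)
      (∑ j, fourierSeries (fourierDeriv j c) x • (complexCoord j : Ed d →L[ℝ] ℂ)) x := by
  let termDeriv (k : Freq d) (y : Ed d) : Ed d →L[ℝ] ℂ :=
    ∑ j, (fourierDeriv j c k * fourierMode k y) • complexCoord j
  have majorant_summable : Summable fun k => ∑ j, ‖fourierDeriv j c k‖ :=
    summable_sum fun j _ => (hc.fourierDeriv j).summable_norm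
  have hasFDerivAt_term (k : Freq d) (y : Ed d) :
      HasFDerivAt (fun y => c k * fourierMode k y) (termDeriv k y) y := by
    refine ((hasFDerivAt_fourierMode k y).const_mul (c k)).congr_fderiv ?_
    simp only [termDeriv, Finset.smul_sum, smul_smul, fourierDeriv]
    exact Finset.sum_congr rfl fun j _ => by congr 1; ring
  have norm_termDeriv_le (k : Freq d) (y : Ed d) :
      ‖termDeriv k y‖ ≤ ∑ j, ‖fourierDeriv j c k‖ := by
    refine (norm_sum_le _ _).trans (Finset.sum_le_sum fun j _ => ?_)
    rw [norm_smul, norm_mul, norm_fourierMode, mul_one]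
    exact mul_le_of_le_one_right (norm_nonneg _) (norm_complexCoord_le j)
  refine (hasFDerivAt_tsum majorant_summable hasFDerivAt_term norm_termDeriv_le
    (hc.summable_mul_fourierMode x) x).congr_fderiv ?_
  have summable_deriv (j : Fin d) := (hc.fourierDeriv j).summable_mul_fourierMode x
  rw [Summable.tsum_finsetSum fun j _ => (summable_deriv j).smul_const _]
  exact Finset.sum_congr rfl fun j _ => Summable.tsum_smul_const (summable_deriv j) _

lemma contDiff_fourierSeries (hc : RapidDecay c) (n : ℕ) : ContDiff ℝ n (fourierSeries c) := by
  induction n generalizing c with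
  | zero =>
    exact contDiff_zero.mpr
      (continuous_iff_continuousAt.mpr fun x => (hasFDerivAt_fourierSeries hc x).continuousAt)
  | succ n ih =>
    push_cast
    rw [contDiff_succ_iff_hasFDerivAt]
    exact ⟨_, ContDiff.sum fun j _ => (ih (hc.fourierDeriv j)).smul contDiff_const,
      hasFDerivAt_fourierSeries hc⟩

lemma fourierSeries_mul (hc : RapidDecay c) (hc' : RapidDecay c') (x : Ed d) :
    fourierSeries c x * fourierSeries c' x = fourierSeries (discConv c c') x := by
  let shear : Freq d × Freq d ≃ Freq d × Freq d :=
    { toFun := fun z => (z.2, z.1 - z.2)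
      invFun := fun z => (z.1 + z.2, z.1)
      left_inv := fun z => by simp
      right_inv := fun z => by simp }
  have norm_summable := hc.summable_norm_mul_fourierMode x
  have norm_summable' := hc'.summable_norm_mul_fourierMode x
  have prod_summable := shear.summable_iff.mpr
    (summable_mul_of_summable_norm norm_summable norm_summable')
  simp only [Function.comp_def] at prod_summable
  simp only [fourierSeries]
  rw [tsum_mul_tsum_of_summable_norm norm_summable norm_summable', ← shear.tsum_eq,
    Summable.tsum_prod prod_summable]
  refine tsum_congr fun k => ?_
  rw [discConv, ← tsum_mul_right]
  refine tsum_congr fun p => ?_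
  have mode_eq : fourierMode k x = fourierMode p x * fourierMode (k - p) x := by
    rw [← fourierMode_add, add_sub_cancel]
  simp only [shear, Equiv.coe_fn_mk]
  rw [mode_eq]
  ring

lemma ConjSymmetric.ofReal_re_fourierSeries (hc : ConjSymmetric c) (x : Ed d) :
    (((fourierSeries c x).re : ℝ) : ℂ) = fourierSeries c x := by
  rw [← Complex.conj_eq_iff_re]
  simp only [fourierSeries]
  rw [Complex.conj_tsum, ← (Equiv.neg (Freq d)).tsum_eq]
  refine tsum_congr fun k => ?_
  rw [map_mul, conj_fourierMode, Equiv.neg_apply, neg_neg, hc k, Complex.conj_conj]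

end FourierSeries

/-- The real function `f` is the sum of the Fourier series with the rapidly decaying coefficients
`c`, which are therefore `(2π)^{-d}` times the coefficients `fcoefR f`. -/
structure HasRapidFourierSeries {d : ℕ} (f : Ed d → ℝ) (c : Freq d → ℂ) : Prop where
  rapidDecay : RapidDecay c
  ofReal_eq : ∀ x, (f x : ℂ) = fourierSeries c x

lemma RapidDecay.hasRapidFourierSeries {d : ℕ} {c : Freq d → ℂ} (hc : RapidDecay c)
    (hsymm : ConjSymmetric c) : HasRapidFourierSeries (fun x => (fourierSeries c x).re) c :=
  ⟨hc, hsymm.ofReal_re_fourierSeries⟩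

namespace HasRapidFourierSeries

variable {d : ℕ} {f g : Ed d → ℝ} {c c' : Freq d → ℂ}

lemma eq_re (hf : HasRapidFourierSeries f c) : f = fun x => (fourierSeries c x).re := by
  ext x
  rw [← hf.ofReal_eq x, Complex.ofReal_re]

lemma contDiff (hf : HasRapidFourierSeries f c) : ContDiff ℝ (⊤ : ℕ∞) f := by
  rw [hf.eq_re, contDiff_infty]
  exact fun n => Complex.reCLM.contDiff.comp (contDiff_fourierSeries hf.rapidDecay n)

lemma periodicSpace (hf : HasRapidFourierSeries f c) : PeriodicSpace f := by
  intro j x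
  rw [hf.eq_re]
  simp only [fourierSeries, fourierMode_add_two_pi_single]

lemma sub (hf : HasRapidFourierSeries f c) (hg : HasRapidFourierSeries g c') :
    HasRapidFourierSeries (fun x => f x - g x) (fun k => c k - c' k) where
  rapidDecay := (hf.rapidDecay.enorm.add hg.rapidDecay.enorm).mono fun _ => enorm_sub_le
  ofReal_eq x := by
    simp only [Complex.ofReal_sub, hf.ofReal_eq, hg.ofReal_eq, fourierSeries, sub_mul]
    exact ((hf.rapidDecay.summable_mul_fourierMode x).tsum_sub
      (hg.rapidDecay.summable_mul_fourierMode x)).symm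

lemma sum {ι : Type*} (I : Finset ι) {f : ι → Ed d → ℝ} {c : ι → Freq d → ℂ}
    (hf : ∀ i, HasRapidFourierSeries (f i) (c i)) :
    HasRapidFourierSeries (fun x => ∑ i ∈ I, f i x) (fun k => ∑ i ∈ I, c i k) where
  rapidDecay := (RapidDecay.sum fun i => (hf i).rapidDecay.enorm).mono fun _ => enorm_sum_le _ _
  ofReal_eq x := by
    simp only [Complex.ofReal_sum, (hf _).ofReal_eq, fourierSeries, Finset.sum_mul]
    exact (Summable.tsum_finsetSum fun i _ =>
      (hf i).rapidDecay.summable_mul_fourierMode x).symm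

lemma const_mul (hf : HasRapidFourierSeries f c) (r : ℝ) :
    HasRapidFourierSeries (fun x => r * f x) (fun k => (r : ℂ) * c k) where
  rapidDecay := (hf.rapidDecay.enorm.const_mul (enorm_ne_top (x := (r : ℂ)))).mono fun _ =>
    (enorm_mul _ _).le
  ofReal_eq x := by
    simp only [Complex.ofReal_mul, hf.ofReal_eq, fourierSeries, mul_assoc, tsum_mul_left]

lemma mul (hf : HasRapidFourierSeries f c) (hg : HasRapidFourierSeries g c') :
    HasRapidFourierSeries (fun x => f x * g x) (discConv c c') where
  rapidDecay := (hf.rapidDecay.enorm.discConv hg.rapidDecay.enorm).mono (enorm_discConv_le c c')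
  ofReal_eq x := by
    rw [Complex.ofReal_mul, hf.ofReal_eq, hg.ofReal_eq,
      fourierSeries_mul hf.rapidDecay hg.rapidDecay]

lemma pd (hf : HasRapidFourierSeries f c) (j : Fin d) :
    HasRapidFourierSeries (pd f j) (fourierDeriv j c) where
  rapidDecay := hf.rapidDecay.fourierDeriv j
  ofReal_eq x := by
    have hasFDerivAt_ofReal : HasFDerivAt (fun y => (f y : ℂ))
        (Complex.ofRealCLM.comp (fderiv ℝ f x)) x :=
      Complex.ofRealCLM.hasFDerivAt.comp x (hf.contDiff.differentiable (by simp) x).hasFDerivAt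
    rw [funext hf.ofReal_eq] at hasFDerivAt_ofReal
    have fderiv_eq := congrArg (fun L : Ed d →L[ℝ] ℂ => L (EuclideanSpace.single j 1))
      (hasFDerivAt_ofReal.unique (hasFDerivAt_fourierSeries hf.rapidDecay x))
    simpa [_root_.pd, complexCoord_apply, apply_ite Complex.ofReal] using fderiv_eq

lemma slopeDiv (hf : HasRapidFourierSeries f c) :
    HasRapidFourierSeries (slopeDiv f) (divCoeff (fluxCoeff c)) := by
  have gradSq_series : HasRapidFourierSeries (gradSq f) (gradSqCoeff c) :=
    sum Finset.univ fun l => by simpa only [sq] using (hf.pd l).mul (hf.pd l)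
  refine sum Finset.univ fun j => pd ?_ j
  simp only [sub_mul, one_mul]
  exact (gradSq_series.mul (hf.pd j)).sub (hf.pd j)

lemma lapl (hf : HasRapidFourierSeries f c) :
    HasRapidFourierSeries (lapl f) (fun k => -((∑ i, (k i : ℂ) ^ 2) * c k)) := by
  have series : HasRapidFourierSeries (_root_.lapl f)
      (fun k => ∑ j, fourierDeriv j (fourierDeriv j c) k) :=
    sum Finset.univ fun j => (hf.pd j).pd j
  convert series using 2 with k
  rw [Finset.sum_mul, ← Finset.sum_neg_distrib]
  refine Finset.sum_congr rfl fun j _ => ?_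
  rw [fourierDeriv, fourierDeriv]
  linear_combination -(k j : ℂ) ^ 2 * c k * Complex.I_sq

lemma biharmonic (hf : HasRapidFourierSeries f c) (ν : ℝ) :
    HasRapidFourierSeries (fun x => ν * _root_.lapl (_root_.lapl f) x)
      (fun k => (biharmonicSymbol ν k : ℂ) * c k) := by
  convert hf.lapl.lapl.const_mul ν using 2 with k
  rw [biharmonicSymbol]
  push_cast
  ring

end HasRapidFourierSeries

section Evolution

variable {d : ℕ} {ν T t : ℝ} {v w : ℝ → Freq d → ℂ}

lemma sum_sq_le_mul_one_add_norm_sq (k : Freq d) :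
    ∑ i, (k i : ℝ) ^ 2 ≤ d * (1 + ‖k‖) ^ 2 := by
  have coord_le (i : Fin d) : (k i : ℝ) ^ 2 ≤ (1 + ‖k‖) ^ 2 := by
    have := (Int.norm_eq_abs (k i)).symm.trans_le (norm_le_pi_norm k i)
    rw [← sq_abs]
    gcongr
    linarith
  simpa using Finset.sum_le_sum fun i (_ : i ∈ Finset.univ) => coord_le i

lemma enorm_biharmonicSymbol_le (ν : ℝ) (k : Freq d) :
    ‖(biharmonicSymbol ν k : ℂ)‖ₑ ≤ ENNReal.ofReal (|ν| * (d : ℝ) ^ 2) * bracket k ^ 4 := by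
  rw [← ofReal_norm, Complex.norm_real, bracket_eq_ofReal, ← ENNReal.ofReal_pow (by positivity),
    ← ENNReal.ofReal_mul (by positivity)]
  refine ENNReal.ofReal_le_ofReal ?_
  calc ‖biharmonicSymbol ν k‖ = |ν| * (∑ i, (k i : ℝ) ^ 2) ^ 2 := by
        rw [biharmonicSymbol, Real.norm_eq_abs, abs_mul,
          abs_of_nonneg (sq_nonneg (∑ i, (k i : ℝ) ^ 2))]
    _ ≤ |ν| * (d * (1 + ‖k‖) ^ 2) ^ 2 := by
        gcongr
        exact sum_sq_le_mul_one_add_norm_sq k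
    _ = |ν| * (d : ℝ) ^ 2 * (1 + ‖k‖) ^ 4 := by ring

lemma hasDerivAt_fourierSeries (hv : LocUniformRapidDecay T v) (hw : LocUniformRapidDecay T w)
    (hderiv : ∀ s ∈ Ioo 0 T, ∀ k, HasDerivAt (fun s => v s k) (w s k) s) (ht : t ∈ Ioo 0 T)
    (x : Ed d) : HasDerivAt (fun s => fourierSeries (v s) x) (fourierSeries (w t) x) t := by
  have half_pos : 0 < t / 2 := half_pos ht.1
  obtain ⟨b, hb, norm_le⟩ := hw.exists_majorant (t / 2) half_pos
  have htm : t ∈ Ioo (t / 2) T := ⟨half_lt_self ht.1, ht.2⟩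
  refine hasDerivAt_tsum_of_isPreconnected (u := fun k => (b k).toReal)
    (g := fun k s => v s k * fourierMode k x) (g' := fun k s => w s k * fourierMode k x)
    (ENNReal.summable_toReal hb.tsum_enorm_ne_top) isOpen_Ioo isPreconnected_Ioo
    (fun k s hs => (hderiv s ⟨half_pos.trans hs.1, hs.2⟩ k).mul_const _) (fun k s hs => ?_) htm
    ((hv.rapidDecay ht).summable_mul_fourierMode x) htm
  rw [norm_mul, norm_fourierMode, mul_one, ← toReal_enorm]
  exact ENNReal.toReal_mono (ENNReal.ne_top_of_tsum_ne_top hb.tsum_enorm_ne_top k) (norm_le s hs k)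

lemma hasDerivAt_re_fourierSeries (hv : LocUniformRapidDecay T v)
    (hsymm : ∀ s ∈ Ioo 0 T, ConjSymmetric (v s))
    (hderiv : ∀ s ∈ Ioo 0 T, ∀ k, HasDerivAt (fun s => v s k)
      (divCoeff (fluxCoeff (v s)) k - biharmonicSymbol ν k * v s k) s)
    (ht : t ∈ Ioo 0 T) (x : Ed d) :
    HasDerivAt (fun s => (fourierSeries (v s) x).re)
      (slopeDiv (fun y => (fourierSeries (v t) y).re) x -
        ν * lapl (lapl fun y => (fourierSeries (v t) y).re) x) t := by
  have rhs_decay : LocUniformRapidDecay T fun s k =>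
      divCoeff (fluxCoeff (v s)) k - (biharmonicSymbol ν k : ℂ) * v s k :=
    (LocUniformRapidDecay.divCoeff fun j => hv.fluxCoeff j).sub
      (hv.mul_left ENNReal.ofReal_ne_top (enorm_biharmonicSymbol_le ν))
  have hasSeries := (hv.rapidDecay ht).hasRapidFourierSeries (hsymm t ht)
  have hasDerivAt_series := hasDerivAt_fourierSeries hv rhs_decay hderiv ht x
  rw [← (hasSeries.slopeDiv.sub (hasSeries.biharmonic ν)).ofReal_eq x] at hasDerivAt_series
  have hasDerivAt_re := Complex.reCLM.hasFDerivAt.comp_hasDerivAt t hasDerivAt_series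
  simp only [Complex.reCLM_apply, Complex.ofReal_re] at hasDerivAt_re
  exact hasDerivAt_re

end Evolution

/-! ### Fourier coefficients on the torus -/

section FundamentalDomain

variable {d : ℕ}

lemma Qd_eq_preimage_pi (d : ℕ) : Qd d = (MeasurableEquiv.toLp 2 (Fin d → ℝ)).symm ⁻¹'
    Set.pi univ fun _ => Icc (-Real.pi) Real.pi := by
  ext x
  simp only [Qd, Set.mem_ofPred_eq, mem_preimage, Set.mem_pi, mem_univ, true_imp_iff, mem_Icc,
    abs_le]
  rfl

lemma setIntegral_Qd (F : (Fin d → ℝ) → ℂ) :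
    ∫ x in Qd d, F (fun i => x i) =
      ∫ y in Set.pi univ fun _ : Fin d => Icc (-Real.pi) Real.pi, F y := by
  rw [Qd_eq_preimage_pi]
  exact (EuclideanSpace.volume_preserving_symm_measurableEquiv_toLp
    (Fin d)).setIntegral_preimage_emb (MeasurableEquiv.measurableEmbedding _) F _

lemma volume_Qd_ne_top (d : ℕ) : volume (Qd d) ≠ ∞ := by
  rw [Qd_eq_preimage_pi,
    (EuclideanSpace.volume_preserving_symm_measurableEquiv_toLp (Fin d)).measure_preimage
      (MeasurableSet.univ_pi fun _ => measurableSet_Icc).nullMeasurableSet]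
  exact (isCompact_univ_pi fun _ => isCompact_Icc).measure_ne_top

lemma integral_Icc_exp_int_mul (m : ℤ) :
    ∫ y in Icc (-Real.pi) Real.pi, Complex.exp (Complex.I * ((m : ℂ) * (y : ℂ))) =
      if m = 0 then 2 * (Real.pi : ℂ) else 0 := by
  rw [integral_Icc_eq_integral_Ioc,
    ← intervalIntegral.integral_of_le (by linarith [Real.pi_pos])]
  split_ifs with hm
  · simp [hm, two_mul]
  · have freq_ne_zero : Complex.I * (m : ℂ) ≠ 0 :=
      mul_ne_zero Complex.I_ne_zero (Int.cast_ne_zero.mpr hm)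
    have endpoints_eq : Complex.exp (Complex.I * m * (Real.pi : ℝ)) =
        Complex.exp (Complex.I * m * ((-Real.pi : ℝ) : ℂ)) :=
      Complex.exp_eq_exp_iff_exists_int.mpr ⟨m, by push_cast; ring⟩
    simp only [← mul_assoc]
    rw [integral_exp_mul_complex freq_ne_zero, endpoints_eq, sub_self, zero_div]

lemma integral_fourierMode (m : Freq d) :
    ∫ x in Qd d, fourierMode m x = if m = 0 then (2 * (Real.pi : ℂ)) ^ d else 0 := by
  have mode_eq_prod (x : Ed d) :
      fourierMode m x = ∏ i, Complex.exp (Complex.I * ((m i : ℂ) * (x i : ℂ))) := by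
    rw [fourierMode, Finset.mul_sum, Complex.exp_sum]
  simp only [mode_eq_prod]
  rw [setIntegral_Qd fun y => ∏ i, Complex.exp (Complex.I * ((m i : ℂ) * (y i : ℂ))), volume_pi,
    Measure.restrict_pi_pi, integral_fintype_prod_eq_prod
      fun i (y : ℝ) => Complex.exp (Complex.I * ((m i : ℂ) * (y : ℂ)))]
  simp only [integral_Icc_exp_int_mul]
  split_ifs with hm
  · simp [hm]
  · obtain ⟨i, hi⟩ := Function.ne_iff.mp hm
    exact Finset.prod_eq_zero (Finset.mem_univ i) (if_neg hi)

lemma integrableOn_fourierMode (k : Freq d) : IntegrableOn (fourierMode k) (Qd d) :=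
  Measure.integrableOn_of_bounded (volume_Qd_ne_top d)
    (continuous_fourierMode k).aestronglyMeasurable
    (Eventually.of_forall fun x => (norm_fourierMode k x).le)

end FundamentalDomain

section FourierCoefficients

variable {d : ℕ} {f g : Ed d → ℝ} {c : Freq d → ℂ}

lemma fcoefR_eq_integral_fourierMode (f : Ed d → ℝ) (k : Freq d) :
    fcoefR f k = ∫ x in Qd d, (f x : ℂ) * fourierMode (-k) x := by
  have mode_eq (x : Ed d) :
      Complex.exp (-(Complex.I * ∑ i, (k i : ℂ) * (x i : ℂ))) = fourierMode (-k) x := by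
    simp [fourierMode]
  simp only [fcoefR, mode_eq]

lemma fcoefR_zero (f : Ed d → ℝ) : fcoefR f 0 = ((∫ x in Qd d, f x : ℝ) : ℂ) := by
  rw [← integral_complex_ofReal]
  simp [fcoefR]

lemma integrableOn_mul_fourierMode {F : Ed d → ℂ} (hF : IntegrableOn F (Qd d)) (k : Freq d) :
    IntegrableOn (fun x => F x * fourierMode k x) (Qd d) :=
  Integrable.mul_bdd (c := 1) hF (continuous_fourierMode k).aestronglyMeasurable
    (Eventually.of_forall fun x => (norm_fourierMode k x).le)

lemma integrableOn_ofReal_mul_fourierMode_iff (f : Ed d → ℝ) (k : Freq d) :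
    IntegrableOn (fun x => (f x : ℂ) * fourierMode k x) (Qd d) ↔ IntegrableOn f (Qd d) := by
  refine ⟨fun h => ?_, fun h => integrableOn_mul_fourierMode h.ofReal k⟩
  have mode_mul_neg (x : Ed d) : (f x : ℂ) * fourierMode k x * fourierMode (-k) x = f x := by
    rw [mul_assoc, ← fourierMode_add]
    simp [fourierMode]
  have integrableOn_ofReal := integrableOn_mul_fourierMode h (-k)
  simp only [mode_mul_neg] at integrableOn_ofReal
  simpa [IntegrableOn] using integrableOn_ofReal.re

namespace HasRapidFourierSeries

lemma integrableOn (hf : HasRapidFourierSeries f c) : IntegrableOn f (Qd d) := by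
  refine Measure.integrableOn_of_bounded (M := ∑' k, ‖c k‖) (volume_Qd_ne_top d)
    hf.contDiff.continuous.aestronglyMeasurable (Eventually.of_forall fun x => ?_)
  rw [← Complex.norm_real, hf.ofReal_eq x, fourierSeries]
  simpa only [norm_mul, norm_fourierMode, mul_one] using
    norm_tsum_le_tsum_norm (hf.rapidDecay.summable_norm_mul_fourierMode x)

lemma fcoefR_eq (hf : HasRapidFourierSeries f c) (k : Freq d) :
    fcoefR f k = (2 * (Real.pi : ℂ)) ^ d * c k := by
  have integrand_eq (x : Ed d) :
      (f x : ℂ) * fourierMode (-k) x = ∑' p, c p * fourierMode (p - k) x := by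
    rw [hf.ofReal_eq x, fourierSeries, ← tsum_mul_right]
    exact tsum_congr fun p => by rw [sub_eq_add_neg, fourierMode_add, mul_assoc]
  have summable_integral_norm :
      Summable fun p => ∫ x in Qd d, ‖c p * fourierMode (p - k) x‖ := by
    simp only [norm_mul, norm_fourierMode, mul_one, integral_const]
    exact hf.rapidDecay.summable_norm.const_smul _
  have hasSum_integral := hasSum_integral_of_summable_integral_norm
    (fun p => (integrableOn_fourierMode (p - k)).const_mul (c p)) summable_integral_norm
  simp only [fcoefR_eq_integral_fourierMode, integrand_eq]
  rw [← hasSum_integral.tsum_eq]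
  simp only [integral_const_mul, integral_fourierMode, sub_eq_zero]
  rw [tsum_eq_single k fun p hp => by simp [hp], if_pos rfl, mul_comm]

end HasRapidFourierSeries

/-- The coefficients `(2π)^{-d} f̂(k)` of the Fourier series of `f`. -/
def seriesCoeff (f : Ed d → ℝ) (k : Freq d) : ℂ := fcoefR f k / (2 * (Real.pi : ℂ)) ^ d

lemma two_pi_pow_ne_zero (d : ℕ) : (2 * (Real.pi : ℂ)) ^ d ≠ 0 :=
  pow_ne_zero d (mul_ne_zero two_ne_zero (Complex.ofReal_ne_zero.mpr Real.pi_ne_zero))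

lemma norm_two_pi_pow (d : ℕ) : ‖(2 * (Real.pi : ℂ)) ^ d‖ = (2 * Real.pi) ^ d := by
  simp [abs_of_pos Real.pi_pos]

lemma conjSymmetric_seriesCoeff (f : Ed d → ℝ) : ConjSymmetric (seriesCoeff f) := by
  intro k
  simp only [seriesCoeff, map_div₀, fcoefR_eq_integral_fourierMode, ← integral_conj, map_mul,
    conj_fourierMode, Complex.conj_ofReal, map_pow, map_ofNat, neg_neg]

/-- Only junk values make this an inequality: for non-integrable `g` the left side is `0`. -/
lemma HasRapidFourierSeries.norm_fcoefR_sub_le (hf : HasRapidFourierSeries f c) (g : Ed d → ℝ)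
    (k : Freq d) :
    ‖fcoefR (fun x => f x - g x) k‖ ≤ (2 * Real.pi) ^ d * ‖c k - seriesCoeff g k‖ := by
  by_cases hg : IntegrableOn g (Qd d)
  · have fcoefR_sub : fcoefR (fun x => f x - g x) k = fcoefR f k - fcoefR g k := by
      simp only [fcoefR_eq_integral_fourierMode, Complex.ofReal_sub, sub_mul]
      exact integral_sub ((integrableOn_ofReal_mul_fourierMode_iff f _).mpr hf.integrableOn)
        ((integrableOn_ofReal_mul_fourierMode_iff g _).mpr hg)
    rw [fcoefR_sub, hf.fcoefR_eq, ← norm_two_pi_pow, ← norm_mul, seriesCoeff, mul_sub,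
      mul_div_cancel₀ _ (two_pi_pow_ne_zero d)]
  · have fcoefR_eq_zero : fcoefR (fun x => f x - g x) k = 0 := by
      rw [fcoefR_eq_integral_fourierMode]
      refine integral_undef fun integrable => hg ?_
      have integrableOn_sub :=
        (integrableOn_ofReal_mul_fourierMode_iff (fun x => f x - g x) (-k)).mp integrable
      simpa [IntegrableOn, Pi.sub_def] using hf.integrableOn.sub integrableOn_sub
    rw [fcoefR_eq_zero, norm_zero]
    positivity

end FourierCoefficients

section SobolevNorm

variable {d : ℕ} {f : Ed d → ℝ} {c : Freq d → ℂ}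

lemma sobWeight_pos (k : Freq d) : 0 < sobWeight k := by
  unfold sobWeight
  positivity

lemma sobWeight_le_mul_one_add_norm_pow (k : Freq d) :
    sobWeight k ≤ (1 + (d : ℝ) ^ d) * (1 + ‖k‖) ^ d := by
  have dim_le_sq : (d : ℝ) ≤ (d : ℝ) ^ 2 := by exact_mod_cast Nat.le_self_pow two_ne_zero d
  have sqrt_le : Real.sqrt (∑ i, (k i : ℝ) ^ 2) ≤ d * (1 + ‖k‖) := by
    refine Real.sqrt_le_iff.mpr ⟨by positivity, (sum_sq_le_mul_one_add_norm_sq k).trans ?_⟩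
    rw [mul_pow]
    gcongr
  have one_le_pow : 1 ≤ (1 + ‖k‖) ^ d := one_le_pow₀ (by linarith [norm_nonneg k])
  have sqrt_pow_le := pow_le_pow_left₀ (Real.sqrt_nonneg _) sqrt_le d
  rw [mul_pow] at sqrt_pow_le
  rw [sobWeight]
  linarith

lemma one_add_norm_pow_le_mul_sobWeight (k : Freq d) :
    (1 + ‖k‖) ^ d ≤ 2 ^ d * sobWeight k := by
  have norm_le : ‖k‖ ≤ Real.sqrt (∑ i, (k i : ℝ) ^ 2) := Real.le_sqrt_of_sq_le (norm_sq_le_sum_sq k)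
  calc (1 + ‖k‖) ^ d ≤ (1 + Real.sqrt (∑ i, (k i : ℝ) ^ 2)) ^ d := by gcongr
    _ ≤ 2 ^ (d - 1) * (1 ^ d + Real.sqrt (∑ i, (k i : ℝ) ^ 2) ^ d) :=
        add_pow_le zero_le_one (Real.sqrt_nonneg _) d
    _ ≤ 2 ^ d * sobWeight k := by
        rw [one_pow, ← sobWeight]
        gcongr
        · exact (sobWeight_pos k).le
        · norm_num
        · exact Nat.sub_le d 1

lemma bracket_pow_mul_enorm_sq (z : ℂ) (n : ℕ) (k : Freq d) :
    bracket k ^ n * ‖z‖ₑ ^ 2 = ENNReal.ofReal ((1 + ‖k‖) ^ n * ‖z‖ ^ 2) := by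
  rw [bracket_eq_ofReal, ← ofReal_norm, ← ENNReal.ofReal_pow (by positivity),
    ← ENNReal.ofReal_pow (by positivity), ← ENNReal.ofReal_mul (by positivity)]

lemma norm_seriesCoeff_le (f : Ed d → ℝ) (k : Freq d) : ‖seriesCoeff f k‖ ≤ ‖fcoefR f k‖ := by
  rw [seriesCoeff, norm_div, norm_two_pi_pow]
  exact div_le_self (norm_nonneg _) (one_le_pow₀ (by linarith [Real.pi_gt_three]))

lemma sobolevSq_seriesCoeff_ne_top
    (hf : Summable fun k : Freq d => sobWeight k * ‖fcoefR f k‖ ^ 2) :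
    sobolevSq d (fun k => ‖seriesCoeff f k‖ₑ) ≠ ∞ := by
  refine ne_top_of_le_ne_top (hf.mul_left (2 ^ d)).tsum_ofReal_ne_top
    (ENNReal.tsum_le_tsum fun k => ?_)
  rw [bracket_pow_mul_enorm_sq, ← mul_assoc]
  have weight_pos := sobWeight_pos k
  gcongr
  · exact one_add_norm_pow_le_mul_sobWeight k
  · exact norm_seriesCoeff_le f k

lemma hnormR_nonneg (f : Ed d → ℝ) : 0 ≤ hnormR f := Real.sqrt_nonneg _

lemma ofReal_hnormR_sq_le (f : Ed d → ℝ) :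
    ENNReal.ofReal (hnormR f ^ 2) ≤ ∑' k, ENNReal.ofReal (sobWeight k * ‖fcoefR f k‖ ^ 2) := by
  have term_nonneg (k : Freq d) : 0 ≤ sobWeight k * ‖fcoefR f k‖ ^ 2 :=
    mul_nonneg (sobWeight_pos k).le (sq_nonneg _)
  have tsum_eq : ∑' k, sobWeight k * ‖fcoefR f k‖ ^ 2 =
      (∑' k, ENNReal.ofReal (sobWeight k * ‖fcoefR f k‖ ^ 2)).toReal := by
    rw [ENNReal.tsum_toReal_eq fun k => ENNReal.ofReal_ne_top]
    exact tsum_congr fun k => (ENNReal.toReal_ofReal (term_nonneg k)).symm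
  rw [hnormR, Real.sq_sqrt (tsum_nonneg term_nonneg), tsum_eq]
  exact ENNReal.ofReal_toReal_le

lemma HasRapidFourierSeries.ofReal_hnormR_sub_sq_le (hf : HasRapidFourierSeries f c)
    (g : Ed d → ℝ) :
    ENNReal.ofReal (hnormR (fun x => f x - g x) ^ 2) ≤
      ENNReal.ofReal ((1 + (d : ℝ) ^ d) * ((2 * Real.pi) ^ d) ^ 2) *
        sobolevSq d (fun k => ‖c k - seriesCoeff g k‖ₑ) := by
  refine (ofReal_hnormR_sq_le _).trans ?_
  rw [sobolevSq, ← ENNReal.tsum_mul_left]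
  refine ENNReal.tsum_le_tsum fun k => ?_
  rw [bracket_pow_mul_enorm_sq, ← ENNReal.ofReal_mul (by positivity)]
  refine ENNReal.ofReal_le_ofReal ?_
  calc sobWeight k * ‖fcoefR (fun x => f x - g x) k‖ ^ 2
      ≤ (1 + (d : ℝ) ^ d) * (1 + ‖k‖) ^ d *
          ((2 * Real.pi) ^ d * ‖c k - seriesCoeff g k‖) ^ 2 := by
        gcongr
        · exact sobWeight_le_mul_one_add_norm_pow k
        · exact hf.norm_fcoefR_sub_le g k
    _ = _ := by ring

lemma tendsto_hnormR_sub {T : ℝ} (hT : 0 < T) {h : ℝ → Ed d → ℝ} {u : ℝ → Freq d → ℂ}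
    (hu : ∀ t ∈ Ioo 0 T, HasRapidFourierSeries (h t) (u t)) (g : Ed d → ℝ)
    (hlim : Tendsto (fun t => sobolevSq d fun k => ‖u t k - seriesCoeff g k‖ₑ)
      (nhdsWithin 0 (Ioi 0)) (nhds 0)) :
    Tendsto (fun t => hnormR fun x => h t x - g x) (nhdsWithin 0 (Ioi 0)) (nhds 0) := by
  have majorant_tendsto := ENNReal.Tendsto.const_mul
    (a := ENNReal.ofReal ((1 + (d : ℝ) ^ d) * ((2 * Real.pi) ^ d) ^ 2)) hlim
    (Or.inr ENNReal.ofReal_ne_top)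
  rw [mul_zero] at majorant_tendsto
  have ofReal_sq_tendsto : Tendsto (fun t => ENNReal.ofReal (hnormR (fun x => h t x - g x) ^ 2))
      (nhdsWithin 0 (Ioi 0)) (nhds 0) := by
    refine tendsto_of_tendsto_of_tendsto_of_le_of_le' tendsto_const_nhds majorant_tendsto
      (Eventually.of_forall fun t => zero_le) ?_
    filter_upwards [Ioo_mem_nhdsGT hT] with t ht
    exact (hu t ht).ofReal_hnormR_sub_sq_le g
  have toReal_tendsto := (ENNReal.tendsto_toReal ENNReal.zero_ne_top).comp ofReal_sq_tendsto
  have sqrt_tendsto := (Real.continuous_sqrt.tendsto _).comp toReal_tendsto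
  rw [ENNReal.toReal_zero, Real.sqrt_zero] at sqrt_tendsto
  refine sqrt_tendsto.congr fun t => ?_
  rw [Function.comp_apply, Function.comp_apply, ENNReal.toReal_ofReal (sq_nonneg _),
    Real.sqrt_sq (hnormR_nonneg _)]

end SobolevNorm

/-! ### Solutions on the Fourier side -/

section MildSolution

variable {d : ℕ} {ν T t : ℝ} {M₀ B : ℝ≥0∞} {r : ℝ → ℝ≥0∞} {a : Freq d → ℂ}
  {u : ℝ → Freq d → ℂ}

lemma enorm_heatFlow_sub_le (hν : 0 ≤ ν) (ht : 0 ≤ t) (a : Freq d → ℂ) (k : Freq d) :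
    ‖heatFlow ν a t k - a k‖ₑ ≤ ‖a k‖ₑ := by
  have symbol_nonneg : 0 ≤ biharmonicSymbol ν k * t := by
    unfold biharmonicSymbol
    positivity
  have multiplier_le_one : heatMultiplier ν t k ≤ 1 :=
    Real.exp_le_one_iff.mpr (neg_nonpos.mpr symbol_nonneg)
  have multiplier_pos := heatMultiplier_pos ν t k
  have sub_eq : heatFlow ν a t k - a k = ((heatMultiplier ν t k - 1 : ℝ) : ℂ) * a k := by
    rw [heatFlow]
    push_cast
    ring
  rw [sub_eq, enorm_mul, ← ofReal_norm, Complex.norm_real, Real.norm_eq_abs]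
  exact mul_le_of_le_one_left'
    (ENNReal.ofReal_le_one.mpr (abs_le.mpr ⟨by linarith, by linarith⟩))

lemma tendsto_enorm_heatFlow_sub (ν : ℝ) (a : Freq d → ℂ) (k : Freq d) :
    Tendsto (fun t => ‖heatFlow ν a t k - a k‖ₑ) (nhdsWithin 0 (Ioi 0)) (nhds 0) := by
  have continuous_sub : Continuous fun t => ‖heatFlow ν a t k - a k‖ₑ := by
    unfold heatFlow heatMultiplier
    fun_prop
  simpa [heatFlow, heatMultiplier] using
    (continuous_sub.tendsto 0).mono_left (nhdsWithin_le_nhds (s := Ioi (0 : ℝ)))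

lemma tendsto_sobolevSq_heatFlow_sub (hν : 0 ≤ ν) (n : ℕ)
    (ha : sobolevSq n (fun k => ‖a k‖ₑ) ≠ ∞) :
    Tendsto (fun t => sobolevSq n fun k => ‖heatFlow ν a t k - a k‖ₑ)
      (nhdsWithin 0 (Ioi 0)) (nhds 0) := by
  let _ : MeasurableSpace (Freq d) := ⊤
  have term_tendsto (k : Freq d) :
      Tendsto (fun t => bracket k ^ n * ‖heatFlow ν a t k - a k‖ₑ ^ 2)
        (nhdsWithin 0 (Ioi 0)) (nhds 0) := by
    simpa using ENNReal.Tendsto.const_mul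
      (ENNReal.Tendsto.pow (n := 2) (tendsto_enorm_heatFlow_sub ν a k))
      (Or.inr (ENNReal.pow_ne_top (bracket_ne_top k)))
  have lintegral_tendsto := tendsto_lintegral_filter_of_dominated_convergence
    (μ := (Measure.count : Measure (Freq d))) (l := nhdsWithin (0 : ℝ) (Ioi 0))
    (F := fun t k => bracket k ^ n * ‖heatFlow ν a t k - a k‖ₑ ^ 2) (f := fun _ => 0)
    (fun k => bracket k ^ n * ‖a k‖ₑ ^ 2) (Eventually.of_forall fun t => Measurable.of_discrete)
    (by
      filter_upwards [self_mem_nhdsWithin] with t ht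
      refine Eventually.of_forall fun k => ?_
      gcongr
      exact enorm_heatFlow_sub_le hν (le_of_lt ht) a k)
    (by rwa [lintegral_count]) (Eventually.of_forall term_tendsto)
  simpa only [sobolevSq, lintegral_count, tsum_zero] using lintegral_tendsto

lemma mildMap_zero_freq (ν : ℝ) (a : Freq d → ℂ) (u : ℝ → Freq d → ℂ) (t : ℝ) :
    mildMap ν a u t 0 = a 0 := by
  simp [mildMap, heatFlow, duhamel, heatMultiplier, biharmonicSymbol, divCoeff, fourierDeriv]

namespace ContractionData

lemma exists_fixedPoint_of_conjSymmetric (P : ContractionData ν T M₀ B r a)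
    (ha : ConjSymmetric a) : ∃ u : ℝ → Freq d → ℂ, InKatoBall ν T (4 * M₀) r u ∧
      (∀ t ∈ Ioo 0 T, ConjSymmetric (u t)) ∧ ∀ t ∈ Ioo 0 T, u t = mildMap ν a u t := by
  choose! u hu using fun t (ht : t ∈ Ioo 0 T) k => P.exists_tendsto_picardIter ht k
  exact ⟨u, P.inKatoBall_limit hu,
    fun t ht => ConjSymmetric.of_tendsto (fun n => ha.picardIter ν n t) (hu t ht),
    fun t ht => P.limit_eq_mildMap hu ht⟩

lemma hasDerivAt_fixedPoint (P : ContractionData ν T M₀ B r a)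
    (hu : InKatoBall ν T (4 * M₀) r u) (hfix : ∀ t ∈ Ioo 0 T, u t = mildMap ν a u t)
    (ht : t ∈ Ioo 0 T) (k : Freq d) :
    HasDerivAt (fun s => u s k) (divCoeff (fluxCoeff (u t)) k - biharmonicSymbol ν k * u t k)
      t := by
  have hasDerivAt_u : HasDerivAt (fun s => u s k)
      (-biharmonicSymbol ν k * mildMap ν a u t k + divCoeff (fluxCoeff (u t)) k) t := by
    refine (P.hasDerivAt_mildMap hu ht k).congr_of_eventuallyEq ?_
    filter_upwards [Ioo_mem_nhds ht.1 ht.2] with s hs using congrFun (hfix s hs) k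
  rw [← hfix t ht] at hasDerivAt_u
  exact hasDerivAt_u.congr_deriv (by ring)

lemma sobolevSq_fixedPoint_sub_le (P : ContractionData ν T M₀ B r a)
    (hu : InKatoBall ν T (4 * M₀) r u) (hfix : ∀ t ∈ Ioo 0 T, u t = mildMap ν a u t)
    (ht : t ∈ Ioo 0 T) :
    sobolevSq d (fun k => ‖u t k - a k‖ₑ) ≤
      2 * (sobolevSq d (fun k => ‖heatFlow ν a t k - a k‖ₑ) +
        fluxConst d * (r t ^ 4 + timeWeight (1 / 2) t ^ 2) * (4 * M₀) * B ^ 2) := by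
  have forcing_le := sobolevSq_enorm_duhamel_le P.viscosity_pos P.duhamelBound ht.1
    (P.continuousOn_fluxCoeff_of_lt hu ht.2)
    fun s hs => hu.sobolevSq_fluxMajorant_le P.viscosity_pos P.radius_mono hs ht.2
  have enorm_le (k : Freq d) : ‖u t k - a k‖ₑ ≤
      ‖heatFlow ν a t k - a k‖ₑ + ‖duhamel ν (fun s => fluxCoeff (u s)) t k‖ₑ := by
    rw [congrFun (hfix t ht) k, mildMap, Pi.add_apply, add_sub_right_comm]
    exact enorm_add_le _ _
  refine (sobolevSq_mono enorm_le).trans ((sobolevSq_add_le _ _ _).trans ?_)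
  gcongr

lemma tendsto_sobolevSq_fixedPoint_sub (P : ContractionData ν T M₀ B r a) (hT : 0 < T)
    (hM₀ : M₀ ≠ ∞) (hB : B ≠ ∞) (hr : Tendsto r (nhdsWithin 0 (Ioi 0)) (nhds 0))
    (ha : sobolevSq d (fun k => ‖a k‖ₑ) ≠ ∞)
    (hu : InKatoBall ν T (4 * M₀) r u) (hfix : ∀ t ∈ Ioo 0 T, u t = mildMap ν a u t) :
    Tendsto (fun t => sobolevSq d fun k => ‖u t k - a k‖ₑ) (nhdsWithin 0 (Ioi 0)) (nhds 0) := by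
  have factor_tendsto : Tendsto (fun t => r t ^ 4 + timeWeight (1 / 2) t ^ 2)
      (nhdsWithin 0 (Ioi 0)) (nhds 0) := by
    simpa using (ENNReal.Tendsto.pow (n := 4) hr).add
      (ENNReal.Tendsto.pow (n := 2) (tendsto_timeWeight_zero (p := 1 / 2) (by norm_num)))
  have forcing_tendsto : Tendsto
      (fun t => fluxConst d * (r t ^ 4 + timeWeight (1 / 2) t ^ 2) * (4 * M₀) * B ^ 2)
      (nhdsWithin 0 (Ioi 0)) (nhds 0) := by
    have flux_tendsto := ENNReal.Tendsto.const_mul factor_tendsto (Or.inr (fluxConst_ne_top d))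
    simpa using ENNReal.Tendsto.mul_const
      (ENNReal.Tendsto.mul_const flux_tendsto (Or.inr (by finiteness : 4 * M₀ ≠ ∞)))
      (Or.inr (by finiteness : B ^ 2 ≠ ∞))
  have bound_tendsto := ENNReal.Tendsto.const_mul (a := 2)
    ((tendsto_sobolevSq_heatFlow_sub P.viscosity_pos.le d ha).add forcing_tendsto)
    (Or.inr ENNReal.ofNat_ne_top)
  rw [add_zero, mul_zero] at bound_tendsto
  refine tendsto_of_tendsto_of_tendsto_of_le_of_le' tendsto_const_nhds bound_tendsto
    (Eventually.of_forall fun t => zero_le) ?_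
  filter_upwards [Ioo_mem_nhdsGT hT] with t ht using P.sobolevSq_fixedPoint_sub_le hu hfix ht

end ContractionData

theorem exists_coefficient_solution (hd : 1 ≤ d) (hν : 0 < ν) (hsymm : ConjSymmetric a)
    (ha : sobolevSq d (fun k => ‖a k‖ₑ) ≠ ∞) :
    ∃ (T : ℝ) (u : ℝ → Freq d → ℂ), 0 < T ∧ LocUniformRapidDecay T u ∧
      (∀ t ∈ Ioo 0 T, ConjSymmetric (u t)) ∧
      (∀ t ∈ Ioo 0 T, ∀ k, HasDerivAt (fun s => u s k)
        (divCoeff (fluxCoeff (u t)) k - biharmonicSymbol ν k * u t k) t) ∧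
      (∀ t ∈ Ioo 0 T, u t 0 = a 0) ∧
      Tendsto (fun t => sobolevSq d fun k => ‖u t k - a k‖ₑ) (nhdsWithin 0 (Ioi 0)) (nhds 0) := by
  obtain ⟨T, M₀, B, r, hT, hM₀, hB, hr, P⟩ := exists_contractionData hd hν ha
  obtain ⟨u, hu, husymm, hfix⟩ := P.exists_fixedPoint_of_conjSymmetric hsymm
  exact ⟨T, u, hT, hu.locUniformRapidDecay hd hν P.radius_mono P.radius_ne_top, husymm,
    fun t ht => P.hasDerivAt_fixedPoint hu hfix ht,
    fun t ht => by rw [hfix t ht, mildMap_zero_freq],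
    P.tendsto_sobolevSq_fixedPoint_sub hT hM₀ hB hr ha hu hfix⟩

end MildSolution

lemma HasRapidFourierSeries.setIntegral_eq_zero {d : ℕ} {f g : Ed d → ℝ} {c : Freq d → ℂ}
    (hf : HasRapidFourierSeries f c) (hc : c 0 = seriesCoeff g 0)
    (hg : ∫ x in Qd d, g x = 0) : ∫ x in Qd d, f x = 0 := by
  have coeff_zero := hf.fcoefR_eq 0
  rw [hc, seriesCoeff, fcoefR_zero, fcoefR_zero, hg] at coeff_zero
  simpa using coeff_zero

/-- Improved local wellposedness, Theorem 1.2: for initial data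
`h₀ ∈ H^{d/2}(𝕋^d)` there is a local-in-time solution (with maximal lifespan `T ∈ (0,∞]`)
of `∂_t h = ∇·((|∇h|²−1)∇h) − νΔ²h` which is `C^∞` for `0 < t < T`, attains the data in
`H^{d/2}` as `t → 0⁺`, and preserves the mean-zero property. -/
theorem stmt2 (d : ℕ) (hd : 1 ≤ d) (ν : ℝ) (hν : 0 < ν) (h₀ : Ed d → ℝ)
    (hper : PeriodicSpace h₀)
    (hsob : Summable fun k : Fin d → ℤ => sobWeight k * ‖fcoefR h₀ k‖ ^ 2) :
    ∃ (T : ℝ≥0∞) (h : ℝ → Ed d → ℝ), 0 < T ∧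
      (∀ t : ℝ, 0 < t → ENNReal.ofReal t < T → PeriodicSpace (h t)) ∧
      (∀ t : ℝ, 0 < t → ENNReal.ofReal t < T → ContDiff ℝ (⊤ : ℕ∞) (h t)) ∧
      (∀ (t : ℝ) (x : Ed d), 0 < t → ENNReal.ofReal t < T →
        HasDerivAt (fun s => h s x)
          (slopeDiv (h t) x - ν * lapl (lapl (h t)) x) t) ∧
      Tendsto (fun t : ℝ => hnormR fun x => h t x - h₀ x)
        (nhdsWithin 0 (Ioi 0)) (nhds 0) ∧
      ((∫ x in Qd d, h₀ x) = 0 →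
        ∀ t : ℝ, 0 < t → ENNReal.ofReal t < T → (∫ x in Qd d, h t x) = 0) := by
  obtain ⟨T, u, hT, decay, symm, ode, zero_freq, tendsto_initial⟩ :=
    exists_coefficient_solution hd hν (conjSymmetric_seriesCoeff h₀)
      (sobolevSq_seriesCoeff_ne_top hsob)
  have mem_Ioo {t : ℝ} (ht : 0 < t) (htT : ENNReal.ofReal t < ENNReal.ofReal T) : t ∈ Ioo 0 T :=
    ⟨ht, (ENNReal.ofReal_lt_ofReal_iff hT).mp htT⟩
  have series (t : ℝ) (ht : t ∈ Ioo 0 T) :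
      HasRapidFourierSeries (fun x => (fourierSeries (u t) x).re) (u t) :=
    (decay.rapidDecay ht).hasRapidFourierSeries (symm t ht)
  exact ⟨ENNReal.ofReal T, fun t x => (fourierSeries (u t) x).re, ENNReal.ofReal_pos.mpr hT,
    fun t ht htT => (series t (mem_Ioo ht htT)).periodicSpace,
    fun t ht htT => (series t (mem_Ioo ht htT)).contDiff,
    fun t x ht htT => hasDerivAt_re_fourierSeries decay symm ode (mem_Ioo ht htT) x,
    tendsto_hnormR_sub hT series h₀ tendsto_initial,
    fun mean_zero t ht htT => (series t (mem_Ioo ht htT)).setIntegral_eq_zero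
      (zero_freq t (mem_Ioo ht htT)) mean_zero⟩
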